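/- Lower bound / Γ-liminf inequality (discrete form of Proposition 3.10 of the paper, for continuously differentiable limits): assume Assumption H and Assumption A:2T. There exists a set Ω₁ ∈ ℱ with ℙ(Ω₁) = 1 such that for every ω ∈ Ω₁, every open axis-parallel box A ⊂ ℝ^d, every function u : ℝ^d → ℝⁿ that is continuously differentiable on a neighbourhood of the closure of A, and every family (u_ε)_{ε>0} of functions u_ε : εℤ^d → ℝⁿ with lim_{ε↓0} ε^d Σ_{z∈εℤ^d∩A} |u_ε(z) − u(z)| = 0, one has liminf_{ε↓0} E_ε(ω;u_ε,A) ≥ ∫_A W₀(Du(x)) dx, where Du(x) ∈ ℝ^{n×d} denotes the Jacobian matrix of u at x. (Under these assumptions W₀ is finite-valued and continuous, so the integral is well defined.) -/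

import Mathlib

open MeasureTheory Filter Metric Set
open scoped Classical
open scoped ENNReal Topology Pointwise

noncomputable section

namespace StochHom

/-- `ℝ^d` with the Euclidean norm. -/
abbrev Rd (d : ℕ) : Type := EuclideanSpace ℝ (Fin d)

/-- `ℝ^n` with the Euclidean norm. -/
abbrev Rn (n : ℕ) : Type := EuclideanSpace ℝ (Fin n)

/-- The lattice `ℤ^d`. -/
abbrev Zd (d : ℕ) : Type := Fin d → ℤ

variable {d n : ℕ}

/-- The embedding of the lattice `ℤ^d` into `ℝ^d`. -/
def toRd (z : Zd d) : Rd d := (EuclideanSpace.equiv (Fin d) ℝ).symm fun i => (z i : ℝ)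

/-- The standard basis vectors `eᵢ` of `ℤ^d`. -/
def stdb (i : Fin d) : Zd d := fun j => if j = i then 1 else 0

/-- The interaction range `R = max {4√d, max_{b ∈ ℰ₀} |b|}`. -/
def irange (d : ℕ) (E0 : Finset (Zd d)) : ℝ :=
  max (4 * Real.sqrt d) (sSup ((fun b : Zd d => ‖toRd b‖) '' (E0 : Set (Zd d))))

variable {Ω : Type*} [MeasurableSpace Ω]

/-- The energy `E₁(ω; u, ℤ^d ∩ A)`. -/
def energy1 (τ : Zd d → Ω → Ω) (E0 : Finset (Zd d)) (V : Zd d → Ω → Rn n → ℝ)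
    (ω : Ω) (u : Zd d → Rn n) (A : Set (Rd d)) : ℝ :=
  ∑' z : Zd d, if toRd z ∈ A then
      ∑ b ∈ E0, V b (τ z ω) ((‖toRd b‖)⁻¹ • (u (z + b) - u z)) else 0

/-- The scaled energy `E_ε(ω; u, A)`, where a function `u : εℤ^d → ℝ^n` is identified with a
function on `ℤ^d` via `z ↦ u(εz)`, so that `∂_b^ε u (z) = (u (z+b) - u z)/(ε |b|)`. -/
def energyE (τ : Zd d → Ω → Ω) (E0 : Finset (Zd d)) (V : Zd d → Ω → Rn n → ℝ)
    (ε : ℝ) (ω : Ω) (u : Zd d → Rn n) (A : Set (Rd d)) : ℝ :=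
  ε ^ d * ∑' z : Zd d, if ε • toRd z ∈ A then
      ∑ b ∈ E0, V b (τ z ω) ((ε * ‖toRd b‖)⁻¹ • (u (z + b) - u z)) else 0

/-- The localized minimal energy `m_F(ω; A)`. -/
def mF (τ : Zd d → Ω → Ω) (E0 : Finset (Zd d)) (V : Zd d → Ω → Rn n → ℝ)
    (ω : Ω) (F : Rd d →L[ℝ] Rn n) (A : Set (Rd d)) : ℝ :=
  ⨅ φ : {φ : Zd d → Rn n // ∀ z : Zd d, infDist (toRd z) Aᶜ ≤ irange d E0 → φ z = 0},
    energy1 τ E0 V ω (fun z => F (toRd z) + φ.1 z) A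

/-- The half-open cube `[0,k)^d ⊂ ℝ^d`. -/
def cube (d k : ℕ) : Set (Rd d) := {x | ∀ i, 0 ≤ x i ∧ x i < (k : ℝ)}

/-- The homogenized energy density `W₀(F) = inf_{k ≥ 1} k⁻ᵈ E[m_F(·, [0,k)^d)]`. -/
def W0 (P : Measure Ω) (τ : Zd d → Ω → Ω) (E0 : Finset (Zd d))
    (V : Zd d → Ω → Rn n → ℝ) (F : Rd d →L[ℝ] Rn n) : ℝ :=
  ⨅ k : {k : ℕ // 0 < k}, (((k : ℕ) : ℝ) ^ d)⁻¹ * ∫ ω, mF τ E0 V ω F (cube d k) ∂P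

/-- Half-open axis-parallel box `Π_i [aᵢ, bᵢ)`. -/
def halfBox (a b : Fin d → ℝ) : Set (Rd d) := {x | ∀ i, a i ≤ x i ∧ x i < b i}

/-- Open axis-parallel box `Π_i (aᵢ, bᵢ)`. -/
def openBox (a b : Fin d → ℝ) : Set (Rd d) := {x | ∀ i, a i < x i ∧ x i < b i}

/-- Closed axis-parallel box `Π_i [aᵢ, bᵢ]`. -/
def closedBox (a b : Fin d → ℝ) : Set (Rd d) := {x | ∀ i, a i ≤ x i ∧ x i ≤ b i}

/-- Half-open axis-parallel box with integer corners. -/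
def intBox (a b : Zd d) : Set (Rd d) := {x | ∀ i, (a i : ℝ) ≤ x i ∧ x i < (b i : ℝ)}

/-- The periodic cell minimization `W^{(k)}(ω; F)`. -/
def Wper (τ : Zd d → Ω → Ω) (E0 : Finset (Zd d)) (V : Zd d → Ω → Rn n → ℝ)
    (k : ℕ) (ω : Ω) (F : Rd d →L[ℝ] Rn n) : ℝ :=
  ⨅ φ : {φ : Zd d → Rn n // ∀ z z' : Zd d, φ (z + k • z') = φ z},
    ((k : ℝ) ^ d)⁻¹ * energy1 τ E0 V ω (fun z => F (toRd z) + φ.1 z) (cube d k)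

/-!
Tiling the complement of disjoint sets by cubes of side length `k` shows that the defect of `m_F(A)`
below the sum of `k⁻ᵈ m_F([0,k)ᵈ)` along the orbit over `A` is superadditive up to boundary terms.
On large cubes its expectation is small by the definition of `W₀`, so that a Vitali packing by cubes
of large defect shows that, almost surely and for suitable `k`, all large centred cubes have small
defect. Enclosing a box in such a cube and applying the multiparameter ergodic theorem (constants
and coboundaries are dense in `L²`, and the same covering argument gives the maximal inequality)
yields `liminf εᵈ m_F(ω; A / ε) ≥ vol(A) · W₀(F)` almost surely.

On a small box where the limit `u` is nearly affine with gradient `F`, the deviation of `u_ε` from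
the affine function is cut off at one of `J` amplitudes, each with its own boundary layer. Averaging
over the choices, the cut-off costs a fraction `O(1/J)` of the energy of `u_ε`, up to errors carried
by the boundary layers and by the few sites where `u_ε` is far from `u`. The result competes in
`m_F`. Summing over a fine subdivision of `A` gives the lower bound `∫_A W₀(Du)`. Only the pairs
`(F, W₀(F))` with `F` in a countable set, chosen dense in the graph of `W₀`, are used, so that one
null set serves all limits.
-/

/-! ### Lattice points -/

@[simp] lemma toRd_apply (z : Zd d) (i : Fin d) : toRd z i = (z i : ℝ) := rfl

lemma toRd_add (x y : Zd d) : toRd (x + y) = toRd x + toRd y := by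
  ext i; simp

lemma abs_apply_le_norm (x : Rd d) (i : Fin d) : |x i| ≤ ‖x‖ := by
  simpa using PiLp.norm_apply_le x i

lemma norm_toRd_pos {b : Zd d} (hb : b ≠ 0) : 0 < ‖toRd b‖ := by
  contrapose! hb
  have h : toRd b = 0 := norm_le_zero_iff.1 hb
  funext i
  simpa using congrArg (fun x : Rd d => x i) h

lemma irange_nonneg (E0 : Finset (Zd d)) : 0 ≤ irange d E0 :=
  le_max_of_le_left (by positivity)

lemma norm_toRd_le_irange {E0 : Finset (Zd d)} {b : Zd d} (hb : b ∈ E0) :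
    ‖toRd b‖ ≤ irange d E0 :=
  le_max_of_le_right <| le_csSup (E0.finite_toSet.image _).bddAbove ⟨b, hb, rfl⟩

lemma finite_setOf_toRd_mem {A : Set (Rd d)} (hA : Bornology.IsBounded A) :
    {z : Zd d | toRd z ∈ A}.Finite := by
  obtain ⟨r, hr⟩ := hA.subset_closedBall 0
  obtain ⟨N, hN⟩ := exists_nat_ge r
  refine (Set.finite_Icc (fun _ : Fin d => -(N : ℤ)) (fun _ => (N : ℤ))).subset fun z hz => ?_
  have hnorm : ‖toRd z‖ ≤ r := by simpa using hr hz
  have habs (i) : |z i| ≤ (N : ℤ) := by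
    have : |(z i : ℝ)| ≤ (N : ℝ) :=
      (abs_apply_le_norm (toRd z) i).trans (hnorm.trans hN)
    exact_mod_cast this
  exact ⟨fun i => (abs_le.1 (habs i)).1, fun i => (abs_le.1 (habs i)).2⟩

/-- The lattice points of a bounded set `A ⊂ ℝ^d`, as a finset; it is empty when `A` contains
infinitely many lattice points. -/
def latticePoints (A : Set (Rd d)) : Finset (Zd d) :=
  if h : {z : Zd d | toRd z ∈ A}.Finite then h.toFinset else ∅

lemma mem_latticePoints {A : Set (Rd d)} (hA : Bornology.IsBounded A) {z : Zd d} :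
    z ∈ latticePoints A ↔ toRd z ∈ A := by
  simp [latticePoints, finite_setOf_toRd_mem hA]

lemma isBounded_closedBox (a b : Fin d → ℝ) : Bornology.IsBounded (closedBox a b) :=
  ((EuclideanSpace.equiv (Fin d) ℝ).antilipschitz.isBounded_preimage
    (Metric.isBounded_Icc a b)).subset fun _ hx => ⟨fun i => (hx i).1, fun i => (hx i).2⟩

lemma isBounded_cube (k : ℕ) : Bornology.IsBounded (cube d k) :=
  (isBounded_closedBox 0 fun _ => k).subset fun _ hx i => ⟨(hx i).1, (hx i).2.le⟩

/-! ### The cell problem for a fixed environment -/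

section CellProblem

variable {Ω : Type*} {τ : Zd d → Ω → Ω} {E0 : Finset (Zd d)} {V : Zd d → Ω → Rn n → ℝ}

/-- The energy of the edges `(z, z + b)`, `b ∈ ℰ₀`, issuing from the site `z`. -/
def siteEnergy (τ : Zd d → Ω → Ω) (E0 : Finset (Zd d)) (V : Zd d → Ω → Rn n → ℝ)
    (ω : Ω) (u : Zd d → Rn n) (z : Zd d) : ℝ :=
  ∑ b ∈ E0, V b (τ z ω) ((‖toRd b‖)⁻¹ • (u (z + b) - u z))

/-- The energy of the affine function `x ↦ F x` at the origin, as a function of the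
environment. -/
def affineEnergy (E0 : Finset (Zd d)) (V : Zd d → Ω → Rn n → ℝ) (F : Rd d →L[ℝ] Rn n)
    (ω : Ω) : ℝ :=
  ∑ b ∈ E0, V b ω ((‖toRd b‖)⁻¹ • F (toRd b))

/-- `φ` vanishes on the boundary layer of `A` whose width is the interaction range, so that it
is a competitor in the definition of `m_F(A)`. -/
def IsAdmissible (E0 : Finset (Zd d)) (A : Set (Rd d)) (φ : Zd d → Rn n) : Prop :=
  ∀ z : Zd d, infDist (toRd z) Aᶜ ≤ irange d E0 → φ z = 0

lemma energy1_eq_sum (τ : Zd d → Ω → Ω) (E0 : Finset (Zd d)) (V : Zd d → Ω → Rn n → ℝ)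
    (ω : Ω) (u : Zd d → Rn n) {A : Set (Rd d)} (hA : Bornology.IsBounded A) :
    energy1 τ E0 V ω u A = ∑ z ∈ latticePoints A, siteEnergy τ E0 V ω u z := by
  rw [energy1, tsum_eq_sum (s := latticePoints A)]
  · exact Finset.sum_congr rfl fun z hz => if_pos ((mem_latticePoints hA).1 hz)
  · exact fun z hz => if_neg fun h => hz ((mem_latticePoints hA).2 h)

lemma siteEnergy_congr {ω : Ω} {u v : Zd d → Rn n} {z : Zd d} (hz : u z = v z)
    (hzb : ∀ b ∈ E0, u (z + b) = v (z + b)) :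
    siteEnergy τ E0 V ω u z = siteEnergy τ E0 V ω v z :=
  Finset.sum_congr rfl fun b hb => by rw [hz, hzb b hb]

lemma siteEnergy_affine (F : Rd d →L[ℝ] Rn n) (ω : Ω) (z : Zd d) :
    siteEnergy τ E0 V ω (fun x => F (toRd x)) z = affineEnergy E0 V F (τ z ω) :=
  Finset.sum_congr rfl fun b _ => by simp only [toRd_add, map_add, add_sub_cancel_left]

lemma siteEnergy_nonneg (hV : ∀ b ∈ E0, ∀ ω r, 0 ≤ V b ω r) (ω : Ω) (u : Zd d → Rn n)
    (z : Zd d) : 0 ≤ siteEnergy τ E0 V ω u z :=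
  Finset.sum_nonneg fun b hb => hV b hb _ _

lemma affineEnergy_nonneg (hV : ∀ b ∈ E0, ∀ ω r, 0 ≤ V b ω r) (F : Rd d →L[ℝ] Rn n) (ω : Ω) :
    0 ≤ affineEnergy E0 V F ω :=
  Finset.sum_nonneg fun b hb => hV b hb _ _

lemma energy1_nonneg (hV : ∀ b ∈ E0, ∀ ω r, 0 ≤ V b ω r) (ω : Ω) (u : Zd d → Rn n)
    {A : Set (Rd d)} (hA : Bornology.IsBounded A) : 0 ≤ energy1 τ E0 V ω u A := by
  rw [energy1_eq_sum _ _ _ _ _ hA]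
  exact Finset.sum_nonneg fun z _ => siteEnergy_nonneg hV _ _ _

instance nonempty_isAdmissible (E0 : Finset (Zd d)) (A : Set (Rd d)) :
    Nonempty {φ : Zd d → Rn n // ∀ z : Zd d, infDist (toRd z) Aᶜ ≤ irange d E0 → φ z = 0} :=
  ⟨⟨fun _ => 0, fun _ _ => rfl⟩⟩

lemma IsAdmissible.apply_eq_zero {A : Set (Rd d)} {φ : Zd d → Rn n} (hφ : IsAdmissible E0 A φ)
    {z : Zd d} (hz : toRd z ∉ A) : φ z = 0 :=
  hφ z <| by rw [infDist_zero_of_mem (mem_compl hz)]; exact irange_nonneg E0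

lemma IsAdmissible.apply_add_eq_zero {A : Set (Rd d)} {φ : Zd d → Rn n}
    (hφ : IsAdmissible E0 A φ) {z b : Zd d} (hb : b ∈ E0) (hz : toRd z ∉ A) : φ (z + b) = 0 := by
  refine hφ _ ((infDist_le_dist_of_mem (mem_compl hz)).trans ?_)
  rw [toRd_add, dist_eq_norm, add_sub_cancel_left]
  exact norm_toRd_le_irange hb

lemma IsAdmissible.mono {A B : Set (Rd d)} {φ : Zd d → Rn n} (hφ : IsAdmissible E0 A φ)
    (hAB : A ⊆ B) (hB : Bᶜ.Nonempty) : IsAdmissible E0 B φ := fun z hz =>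
  hφ z ((infDist_le_infDist_of_subset (Set.compl_subset_compl.2 hAB) hB).trans hz)

lemma IsAdmissible.sum {ι : Type*} {s : Finset ι} {A : Set (Rd d)} {φ : ι → Zd d → Rn n}
    (hφ : ∀ i ∈ s, IsAdmissible E0 A (φ i)) : IsAdmissible E0 A (fun z => ∑ i ∈ s, φ i z) :=
  fun z hz => Finset.sum_eq_zero fun i hi => hφ i hi z hz

lemma mF_le (hV : ∀ b ∈ E0, ∀ ω r, 0 ≤ V b ω r) (ω : Ω) (F : Rd d →L[ℝ] Rn n)
    {A : Set (Rd d)} (hA : Bornology.IsBounded A) {φ : Zd d → Rn n} (hφ : IsAdmissible E0 A φ) :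
    mF τ E0 V ω F A ≤ energy1 τ E0 V ω (fun z => F (toRd z) + φ z) A := by
  refine ciInf_le ⟨0, ?_⟩ (⟨φ, hφ⟩ : {φ : Zd d → Rn n //
    ∀ z : Zd d, infDist (toRd z) Aᶜ ≤ irange d E0 → φ z = 0})
  rintro _ ⟨ψ, rfl⟩
  exact energy1_nonneg hV _ _ hA

lemma mF_nonneg (hV : ∀ b ∈ E0, ∀ ω r, 0 ≤ V b ω r) (ω : Ω) (F : Rd d →L[ℝ] Rn n)
    {A : Set (Rd d)} (hA : Bornology.IsBounded A) : 0 ≤ mF τ E0 V ω F A :=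
  le_ciInf fun _ => energy1_nonneg hV _ _ hA

lemma exists_energy1_lt_mF_add (τ : Zd d → Ω → Ω) (E0 : Finset (Zd d))
    (V : Zd d → Ω → Rn n → ℝ) (ω : Ω) (F : Rd d →L[ℝ] Rn n) (A : Set (Rd d)) {δ : ℝ}
    (hδ : 0 < δ) :
    ∃ φ : Zd d → Rn n, IsAdmissible E0 A φ ∧
      energy1 τ E0 V ω (fun z => F (toRd z) + φ z) A < mF τ E0 V ω F A + δ := by
  obtain ⟨φ, hφ⟩ :=
    exists_lt_of_ciInf_lt (show mF τ E0 V ω F A < mF τ E0 V ω F A + δ by linarith)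
  exact ⟨φ.1, φ.2, hφ⟩

lemma nonempty_compl_of_isBounded [NeZero d] {Q : Set (Rd d)} (hQ : Bornology.IsBounded Q) :
    Qᶜ.Nonempty := by
  by_contra h
  rw [Set.not_nonempty_iff_eq_empty, Set.compl_empty_iff] at h
  exact NormedSpace.unbounded_univ ℝ (Rd d) (h ▸ hQ)

-- The competitors of disjoint cells do not interact, because each of them vanishes on a boundary
-- layer as wide as the interaction range.
lemma energy1_sum_eq {ω : Ω} (F : Rd d →L[ℝ] Rn n) {Q : Set (Rd d)}
    (hQ : Bornology.IsBounded Q) {ι : Type*} {s : Finset ι} {C : ι → Set (Rd d)}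
    (hC : ∀ i ∈ s, C i ⊆ Q)
    (hdisj : (s : Set ι).PairwiseDisjoint fun i => latticePoints (C i)) {φ : ι → Zd d → Rn n}
    (hφ : ∀ i ∈ s, IsAdmissible E0 (C i) (φ i)) :
    energy1 τ E0 V ω (fun z => F (toRd z) + ∑ i ∈ s, φ i z) Q =
      ∑ i ∈ s, energy1 τ E0 V ω (fun z => F (toRd z) + φ i z) (C i) +
        ∑ z ∈ latticePoints Q \ s.biUnion fun i => latticePoints (C i),
          affineEnergy E0 V F (τ z ω) := by
  have hmem {i} (hi : i ∈ s) (z : Zd d) : z ∈ latticePoints (C i) ↔ toRd z ∈ C i :=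
    mem_latticePoints (hQ.subset (hC i hi))
  have hsub : s.biUnion (fun i => latticePoints (C i)) ⊆ latticePoints Q :=
    Finset.biUnion_subset.2 fun i hi z hz =>
      (mem_latticePoints hQ).2 (hC i hi ((hmem hi z).1 hz))
  rw [energy1_eq_sum _ _ _ _ _ hQ, ← Finset.sum_sdiff hsub, add_comm, Finset.sum_biUnion hdisj]
  congr 1
  · refine Finset.sum_congr rfl fun i hi => ?_
    rw [energy1_eq_sum _ _ _ _ _ (hQ.subset (hC i hi))]
    refine Finset.sum_congr rfl fun z hz => ?_
    have hother (j) (hj : j ∈ s) (hji : j ≠ i) : toRd z ∉ C j := fun hzj =>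
      Finset.disjoint_left.1 (hdisj hi hj hji.symm) hz ((hmem hj z).2 hzj)
    refine siteEnergy_congr ?_ fun b hb => ?_
    · rw [Finset.sum_eq_single_of_mem i hi fun j hj hji =>
        (hφ j hj).apply_eq_zero (hother j hj hji)]
    · rw [Finset.sum_eq_single_of_mem i hi fun j hj hji =>
        (hφ j hj).apply_add_eq_zero hb (hother j hj hji)]
  · refine Finset.sum_congr rfl fun z hz => ?_
    have hout (i) (hi : i ∈ s) : toRd z ∉ C i := fun hzi =>
      (Finset.mem_sdiff.1 hz).2 (Finset.mem_biUnion.2 ⟨i, hi, (hmem hi z).2 hzi⟩)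
    rw [← siteEnergy_affine]
    refine siteEnergy_congr ?_ fun b hb => ?_
    · rw [Finset.sum_eq_zero fun i hi => (hφ i hi).apply_eq_zero (hout i hi), add_zero]
    · rw [Finset.sum_eq_zero fun i hi => (hφ i hi).apply_add_eq_zero hb (hout i hi), add_zero]

theorem mF_le_sum_add_sum [NeZero d] (hV : ∀ b ∈ E0, ∀ ω r, 0 ≤ V b ω r) (ω : Ω)
    (F : Rd d →L[ℝ] Rn n) {Q : Set (Rd d)} (hQ : Bornology.IsBounded Q) {ι : Type*}
    {s : Finset ι} {C : ι → Set (Rd d)} (hC : ∀ i ∈ s, C i ⊆ Q)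
    (hdisj : (s : Set ι).PairwiseDisjoint fun i => latticePoints (C i)) :
    mF τ E0 V ω F Q ≤ ∑ i ∈ s, mF τ E0 V ω F (C i) +
      ∑ z ∈ latticePoints Q \ s.biUnion fun i => latticePoints (C i),
        affineEnergy E0 V F (τ z ω) := by
  refine le_of_forall_pos_le_add fun δ hδ => ?_
  have hδ' : 0 < δ / (s.card + 1) := by positivity
  choose φ hφ hφ_lt using fun i => exists_energy1_lt_mF_add τ E0 V ω F (C i) hδ'
  have hsum : IsAdmissible E0 Q (fun z => ∑ i ∈ s, φ i z) :=
    .sum fun i hi => (hφ i).mono (hC i hi) (nonempty_compl_of_isBounded hQ)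
  refine (mF_le hV ω F hQ hsum).trans ?_
  rw [energy1_sum_eq F hQ hC hdisj fun i _ => hφ i]
  have hcells : ∑ i ∈ s, energy1 τ E0 V ω (fun z => F (toRd z) + φ i z) (C i) ≤
      ∑ i ∈ s, mF τ E0 V ω F (C i) + s.card * (δ / (s.card + 1)) := by
    refine (Finset.sum_le_sum fun i _ => (hφ_lt i).le).trans_eq ?_
    rw [Finset.sum_add_distrib, Finset.sum_const, nsmul_eq_mul]
  have herr : (s.card : ℝ) * (δ / (s.card + 1)) ≤ δ := by
    rw [← mul_div_assoc, div_le_iff₀ (by positivity)]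
    nlinarith
  linarith

lemma mF_le_sum_affineEnergy (hV : ∀ b ∈ E0, ∀ ω r, 0 ≤ V b ω r) (ω : Ω)
    (F : Rd d →L[ℝ] Rn n) {Q : Set (Rd d)} (hQ : Bornology.IsBounded Q) :
    mF τ E0 V ω F Q ≤ ∑ z ∈ latticePoints Q, affineEnergy E0 V F (τ z ω) := by
  refine (mF_le hV ω F hQ (φ := fun _ => 0) fun _ _ => rfl).trans_eq ?_
  simp only [add_zero, energy1_eq_sum _ _ _ _ _ hQ, siteEnergy_affine]

lemma infDist_toRd_add_compl {A A' : Set (Rd d)} {w : Zd d}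
    (hA : ∀ x, x ∈ A' ↔ x - toRd w ∈ A) (z : Zd d) :
    infDist (toRd (z + w)) A'ᶜ = infDist (toRd z) Aᶜ := by
  have hA' : A'ᶜ = (fun x => x + toRd w) '' Aᶜ := by
    ext x
    simp only [Set.mem_compl_iff, hA, Set.image_add_right, Set.mem_preimage, sub_eq_add_neg]
  rw [hA', toRd_add]
  exact infDist_image (Φ := fun x : Rd d => x + toRd w) (isometry_add_right _)

lemma siteEnergy_add_affine_shift (hτ : ∀ x y : Zd d, τ (x + y) = τ x ∘ τ y) (ω : Ω)
    (F : Rd d →L[ℝ] Rn n) (φ : Zd d → Rn n) (z w : Zd d) :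
    siteEnergy τ E0 V ω (fun x => F (toRd x) + φ x) (z + w) =
      siteEnergy τ E0 V (τ w ω) (fun x => F (toRd x) + φ (x + w)) z := by
  refine Finset.sum_congr rfl fun b _ => ?_
  rw [hτ, Function.comp_apply, add_right_comm z w b]
  simp only [toRd_add, map_add]
  congr 2
  abel

theorem mF_shift (hτ : ∀ x y : Zd d, τ (x + y) = τ x ∘ τ y) (ω : Ω) (F : Rd d →L[ℝ] Rn n)
    {A A' : Set (Rd d)} {w : Zd d} (hA : ∀ x, x ∈ A' ↔ x - toRd w ∈ A) :
    mF τ E0 V ω F A' = mF τ E0 V (τ w ω) F A := by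
  let e : {φ : Zd d → Rn n // IsAdmissible E0 A' φ} ≃ {φ : Zd d → Rn n // IsAdmissible E0 A φ} :=
    { toFun := fun φ => ⟨fun z => φ.1 (z + w), fun z hz =>
        φ.2 _ (by rwa [infDist_toRd_add_compl hA])⟩
      invFun := fun φ => ⟨fun z => φ.1 (z - w), fun z hz =>
        φ.2 _ (by rwa [← infDist_toRd_add_compl hA, sub_add_cancel])⟩
      left_inv := fun φ => by ext z; simp
      right_inv := fun φ => by ext z; simp }
  refine e.iInf_congr fun φ => Eq.symm ?_
  rw [energy1, energy1, ← (Equiv.addRight w).tsum_eq]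
  refine tsum_congr fun z => ?_
  have hmem : toRd (z + w) ∈ A' ↔ toRd z ∈ A := by
    rw [hA, toRd_add, add_sub_cancel_right]
  simp only [Equiv.coe_addRight, hmem]
  split_ifs
  · exact siteEnergy_add_affine_shift hτ ω F φ.1 z w
  · rfl

end CellProblem

/-! ### The cell problem in a random environment -/

/-- A measure-preserving action of `ℤ^d` on the probability space of environments. -/
structure IsMeasurePreservingAction (P : Measure Ω) (τ : Zd d → Ω → Ω) : Prop where
  map_zero : τ 0 = id
  map_add : ∀ x y : Zd d, τ (x + y) = τ x ∘ τ y
  measurePreserving : ∀ z : Zd d, MeasurePreserving (τ z) P P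

/-- An ergodic measure-preserving action of `ℤ^d`; ergodicity refers to strictly invariant
events. -/
structure IsErgodicAction (P : Measure Ω) (τ : Zd d → Ω → Ω) : Prop
    extends IsMeasurePreservingAction P τ where
  ergodic : ∀ B : Set Ω, MeasurableSet B → (∀ z : Zd d, τ z ⁻¹' B = B) → P B = 0 ∨ P B = 1

/-- A family of nonnegative Carathéodory interaction potentials, indexed by the edge
directions. -/
structure IsRandomPotential (E0 : Finset (Zd d)) (V : Zd d → Ω → Rn n → ℝ) : Prop where
  nonneg : ∀ b ∈ E0, ∀ (ω : Ω) (r : Rn n), 0 ≤ V b ω r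
  continuous : ∀ b ∈ E0, ∀ ω : Ω, Continuous (V b ω)
  measurable : ∀ b ∈ E0, Measurable fun q : Ω × Rn n => V b q.1 q.2

/-- The degenerate `p`-growth condition with random weights `lam`. -/
structure HasGrowth {Ω : Type*} (E0 : Finset (Zd d)) (p c₁ : ℝ) (V : Zd d → Ω → Rn n → ℝ)
    (lam : Zd d → Ω → ℝ) : Prop where
  one_lt : 1 < p
  pos : 0 < c₁
  weight_nonneg : ∀ b ∈ E0, ∀ ω : Ω, 0 ≤ lam b ω
  lower : ∀ b ∈ E0, ∀ (ω : Ω) (r : Rn n), lam b ω * (‖r‖ ^ p / c₁ - c₁) ≤ V b ω r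
  upper : ∀ b ∈ E0, ∀ (ω : Ω) (r : Rn n), V b ω r ≤ c₁ * (1 + lam b ω * (‖r‖ ^ p + 1))

section Measurability

variable {P : Measure Ω} {τ : Zd d → Ω → Ω} {E0 : Finset (Zd d)} {V : Zd d → Ω → Rn n → ℝ}

lemma IsMeasurePreservingAction.integrable_comp (hτ : IsMeasurePreservingAction P τ) {f : Ω → ℝ}
    (hf : Integrable f P) (z : Zd d) : Integrable (fun ω => f (τ z ω)) P :=
  (hτ.measurePreserving z).integrable_comp_of_integrable hf

lemma IsMeasurePreservingAction.integral_comp (hτ : IsMeasurePreservingAction P τ) {f : Ω → ℝ}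
    (hf : AEStronglyMeasurable f P) (z : Zd d) : ∫ ω, f (τ z ω) ∂P = ∫ ω, f ω ∂P := by
  have hmap := (hτ.measurePreserving z).map_eq
  conv_rhs => rw [← hmap]
  rw [integral_map (hτ.measurePreserving z).measurable.aemeasurable (by rwa [hmap])]

lemma IsRandomPotential.measurable_affineEnergy (hV : IsRandomPotential E0 V)
    (F : Rd d →L[ℝ] Rn n) : Measurable (affineEnergy E0 V F) :=
  Finset.measurable_fun_sum _ fun b hb =>
    (hV.measurable b hb).comp (measurable_id.prodMk measurable_const)

/-- Extension of a function defined on the lattice points of `A` to an admissible competitor: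
the values on the boundary layer are replaced by zero. -/
def extendAdmissible (E0 : Finset (Zd d)) (A : Set (Rd d)) (ψ : latticePoints A → Rn n)
    (z : Zd d) : Rn n :=
  if h : z ∈ latticePoints A ∧ ¬ infDist (toRd z) Aᶜ ≤ irange d E0 then ψ ⟨z, h.1⟩ else 0

lemma isAdmissible_extendAdmissible (E0 : Finset (Zd d)) {A : Set (Rd d)}
    (ψ : latticePoints A → Rn n) : IsAdmissible E0 A (extendAdmissible E0 A ψ) :=
  fun _ hz => dif_neg fun h => h.2 hz

lemma IsAdmissible.extendAdmissible_restrict {A : Set (Rd d)} (hA : Bornology.IsBounded A)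
    {φ : Zd d → Rn n} (hφ : IsAdmissible E0 A φ) :
    extendAdmissible E0 A (fun z : latticePoints A => φ z) = φ := by
  funext z
  by_cases h : z ∈ latticePoints A ∧ ¬ infDist (toRd z) Aᶜ ≤ irange d E0
  · exact dif_pos h
  · rw [extendAdmissible, dif_neg h]
    by_cases hz : toRd z ∈ A
    · exact (hφ z (not_not.1 fun h' => h ⟨(mem_latticePoints hA).2 hz, h'⟩)).symm
    · exact (hφ.apply_eq_zero hz).symm

lemma continuous_extendAdmissible (E0 : Finset (Zd d)) (A : Set (Rd d)) (z : Zd d) :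
    Continuous fun ψ : latticePoints A → Rn n => extendAdmissible E0 A ψ z := by
  unfold extendAdmissible
  split_ifs <;> fun_prop

lemma mF_eq_iInf_extendAdmissible {Ω : Type*} {τ : Zd d → Ω → Ω} {V : Zd d → Ω → Rn n → ℝ}
    (ω : Ω) (F : Rd d →L[ℝ] Rn n) {A : Set (Rd d)} (hA : Bornology.IsBounded A) :
    mF τ E0 V ω F A = ⨅ ψ : latticePoints A → Rn n,
      energy1 τ E0 V ω (fun z => F (toRd z) + extendAdmissible E0 A ψ z) A := by
  let e : (latticePoints A → Rn n) → {φ : Zd d → Rn n // IsAdmissible E0 A φ} := fun ψ =>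
    ⟨extendAdmissible E0 A ψ, isAdmissible_extendAdmissible E0 ψ⟩
  have he : Function.Surjective e := fun φ =>
    ⟨fun z => φ.1 z, Subtype.ext (φ.2.extendAdmissible_restrict hA)⟩
  exact (he.iInf_comp _).symm

lemma continuous_energy1_extendAdmissible (hV : IsRandomPotential E0 V) (ω : Ω)
    (F : Rd d →L[ℝ] Rn n) {A : Set (Rd d)} (hA : Bornology.IsBounded A) :
    Continuous fun ψ : latticePoints A → Rn n =>
      energy1 τ E0 V ω (fun z => F (toRd z) + extendAdmissible E0 A ψ z) A := by
  simp only [energy1_eq_sum _ _ _ _ _ hA]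
  refine continuous_finsetSum _ fun z _ => continuous_finsetSum _ fun b hb => ?_
  have hz := continuous_extendAdmissible (n := n) E0 A z
  have hzb := continuous_extendAdmissible (n := n) E0 A (z + b)
  exact (hV.continuous b hb _).comp (by fun_prop)

lemma IsMeasurePreservingAction.measurable_energy1_affine_add
    (hτ : IsMeasurePreservingAction P τ) (hV : IsRandomPotential E0 V) {A : Set (Rd d)}
    (hA : Bornology.IsBounded A) (φ : Zd d → Rn n) :
    Measurable fun q : Ω × (Rd d →L[ℝ] Rn n) =>
      energy1 τ E0 V q.1 (fun z => q.2 (toRd z) + φ z) A := by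
  simp only [energy1_eq_sum _ _ _ _ _ hA]
  refine Finset.measurable_fun_sum _ fun z _ => Finset.measurable_fun_sum _ fun b hb => ?_
  have heval (x : Rd d) : Measurable fun q : Ω × (Rd d →L[ℝ] Rn n) => q.2 x :=
    (ContinuousLinearMap.measurable_apply x).comp measurable_snd
  have hstate : Measurable fun q : Ω × (Rd d →L[ℝ] Rn n) => τ z q.1 :=
    (hτ.measurePreserving z).measurable.comp measurable_fst
  have hslope : Measurable fun q : Ω × (Rd d →L[ℝ] Rn n) =>
      ‖toRd b‖⁻¹ • (q.2 (toRd (z + b)) + φ (z + b) - (q.2 (toRd z) + φ z)) :=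
    (((heval _).add_const _).sub ((heval _).add_const _)).const_smul ‖toRd b‖⁻¹
  exact (hV.measurable b hb).comp (hstate.prodMk hslope)

-- By continuity the infimum may be restricted to a countable dense set of competitors.
lemma IsMeasurePreservingAction.measurable_mF_uncurry (hτ : IsMeasurePreservingAction P τ)
    (hV : IsRandomPotential E0 V) {A : Set (Rd d)} (hA : Bornology.IsBounded A) :
    Measurable fun q : Ω × (Rd d →L[ℝ] Rn n) => mF τ E0 V q.1 q.2 A := by
  let ψ := TopologicalSpace.denseSeq (latticePoints A → Rn n)
  have hdense (q : Ω × (Rd d →L[ℝ] Rn n)) : mF τ E0 V q.1 q.2 A =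
      ⨅ k, energy1 τ E0 V q.1 (fun z => q.2 (toRd z) + extendAdmissible E0 A (ψ k) z) A := by
    rw [mF_eq_iInf_extendAdmissible q.1 q.2 hA,
      ← (TopologicalSpace.denseRange_denseSeq (latticePoints A → Rn n)).ciInf'
        (continuous_energy1_extendAdmissible hV q.1 q.2 hA)]
    exact (Set.rangeFactorization_surjective.iInf_comp (f := Set.rangeFactorization _) _).symm
  simp only [hdense]
  exact .iInf fun k => hτ.measurable_energy1_affine_add hV hA _

lemma IsMeasurePreservingAction.measurable_mF (hτ : IsMeasurePreservingAction P τ)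
    (hV : IsRandomPotential E0 V) (F : Rd d →L[ℝ] Rn n) {A : Set (Rd d)}
    (hA : Bornology.IsBounded A) : Measurable fun ω => mF τ E0 V ω F A := by
  have hpair : Measurable fun ω : Ω => (ω, F) := by fun_prop
  simpa only [Function.comp_def] using (hτ.measurable_mF_uncurry hV hA).comp hpair

lemma IsMeasurePreservingAction.measurable_W0 [SFinite P] (hτ : IsMeasurePreservingAction P τ)
    (hV : IsRandomPotential E0 V) : Measurable (W0 P τ E0 V) :=
  .iInf fun _ => ((hτ.measurable_mF_uncurry hV (isBounded_cube _)).stronglyMeasurable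
    |>.integral_prod_left').measurable.const_mul _

lemma IsMeasurePreservingAction.integrable_mF (hτ : IsMeasurePreservingAction P τ)
    (hV : IsRandomPotential E0 V) {F : Rd d →L[ℝ] Rn n} (hF : Integrable (affineEnergy E0 V F) P)
    {A : Set (Rd d)} (hA : Bornology.IsBounded A) : Integrable (fun ω => mF τ E0 V ω F A) P := by
  have hsum := integrable_finsetSum (latticePoints A) fun z _ => hτ.integrable_comp hF z
  refine hsum.mono' (hτ.measurable_mF hV F hA).aestronglyMeasurable (.of_forall fun ω => ?_)
  rw [Real.norm_of_nonneg (mF_nonneg hV.nonneg ω F hA)]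
  exact mF_le_sum_affineEnergy hV.nonneg ω F hA

end Measurability

section Homogenized

variable {P : Measure Ω} {τ : Zd d → Ω → Ω} {E0 : Finset (Zd d)} {V : Zd d → Ω → Rn n → ℝ}

lemma W0_nonneg (hV : ∀ b ∈ E0, ∀ ω r, 0 ≤ V b ω r) (F : Rd d →L[ℝ] Rn n) :
    0 ≤ W0 P τ E0 V F :=
  Real.iInf_nonneg fun _ => mul_nonneg (by positivity)
    (integral_nonneg fun ω => mF_nonneg hV ω F (isBounded_cube _))

lemma W0_mul_pow_le (hV : ∀ b ∈ E0, ∀ ω r, 0 ≤ V b ω r) (F : Rd d →L[ℝ] Rn n) {k : ℕ}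
    (hk : 0 < k) : W0 P τ E0 V F * (k : ℝ) ^ d ≤ ∫ ω, mF τ E0 V ω F (cube d k) ∂P := by
  have hk' : (0 : ℝ) < (k : ℝ) ^ d := by positivity
  rw [← le_div_iff₀ hk', div_eq_inv_mul]
  refine ciInf_le ⟨0, ?_⟩ (⟨k, hk⟩ : {k : ℕ // 0 < k})
  rintro _ ⟨j, rfl⟩
  exact mul_nonneg (by positivity)
    (integral_nonneg fun ω => mF_nonneg hV ω F (isBounded_cube _))

lemma W0_le_card_mul_integral (hτ : IsMeasurePreservingAction P τ) (hV : IsRandomPotential E0 V)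
    {F : Rd d →L[ℝ] Rn n} (hF : Integrable (affineEnergy E0 V F) P) :
    W0 P τ E0 V F ≤ (latticePoints (cube d 1)).card * ∫ ω, affineEnergy E0 V F ω ∂P := by
  have hcomp := fun z => hτ.integrable_comp hF z
  calc W0 P τ E0 V F ≤ ∫ ω, mF τ E0 V ω F (cube d 1) ∂P := by
        simpa using W0_mul_pow_le (P := P) (τ := τ) hV.nonneg F one_pos
    _ ≤ ∫ ω, ∑ z ∈ latticePoints (cube d 1), affineEnergy E0 V F (τ z ω) ∂P :=
        integral_mono (hτ.integrable_mF hV hF (isBounded_cube _))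
          (integrable_finsetSum _ fun z _ => hcomp z)
          fun ω => mF_le_sum_affineEnergy hV.nonneg ω F (isBounded_cube _)
    _ = (latticePoints (cube d 1)).card * ∫ ω, affineEnergy E0 V F ω ∂P := by
        rw [integral_finsetSum _ fun z _ => hcomp z]
        simp only [hτ.integral_comp hF.aestronglyMeasurable, Finset.sum_const, nsmul_eq_mul]

end Homogenized

section Growth

/-- The sum of the weights of the edges issuing from the origin. -/
def totalWeight {Ω : Type*} (E0 : Finset (Zd d)) (lam : Zd d → Ω → ℝ) (ω : Ω) : ℝ :=
  ∑ b ∈ E0, lam b ω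

lemma norm_inv_smul_apply_le (F : Rd d →L[ℝ] Rn n) (x : Rd d) : ‖‖x‖⁻¹ • F x‖ ≤ ‖F‖ := by
  rw [norm_smul, norm_inv, norm_norm, inv_mul_eq_div]
  exact F.ratio_le_opNorm x

section Pathwise

variable {Ω : Type*} {E0 : Finset (Zd d)} {p c₁ : ℝ} {V : Zd d → Ω → Rn n → ℝ}
  {lam : Zd d → Ω → ℝ}

lemma HasGrowth.totalWeight_nonneg (hG : HasGrowth E0 p c₁ V lam) (ω : Ω) :
    0 ≤ totalWeight E0 lam ω :=
  Finset.sum_nonneg fun b hb => hG.weight_nonneg b hb ω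

lemma HasGrowth.weight_le_totalWeight (hG : HasGrowth E0 p c₁ V lam) {b : Zd d} (hb : b ∈ E0)
    (ω : Ω) : lam b ω ≤ totalWeight E0 lam ω :=
  Finset.single_le_sum (f := fun b => lam b ω) (fun b hb => hG.weight_nonneg b hb ω) hb

lemma HasGrowth.le_of_norm_le (hG : HasGrowth E0 p c₁ V lam) {b : Zd d} (hb : b ∈ E0) (ω : Ω)
    {r : Rn n} {K : ℝ} (hr : ‖r‖ ≤ K) :
    V b ω r ≤ c₁ * (K ^ p + 1) * (1 + totalWeight E0 lam ω) := by
  have hK : 0 ≤ K := (norm_nonneg _).trans hr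
  have hKp : 0 ≤ K ^ p := by positivity
  have hp := hG.one_lt
  have hweight : lam b ω * (‖r‖ ^ p + 1) ≤ totalWeight E0 lam ω * (K ^ p + 1) := by
    gcongr
    · exact hG.totalWeight_nonneg ω
    · exact hG.weight_le_totalWeight hb ω
  calc V b ω r ≤ c₁ * (1 + lam b ω * (‖r‖ ^ p + 1)) := hG.upper b hb ω r
    _ ≤ c₁ * ((K ^ p + 1) * (1 + totalWeight E0 lam ω)) :=
        mul_le_mul_of_nonneg_left (by linarith) hG.pos.le
    _ = c₁ * (K ^ p + 1) * (1 + totalWeight E0 lam ω) := by ring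

lemma HasGrowth.affineEnergy_le (hG : HasGrowth E0 p c₁ V lam) {F : Rd d →L[ℝ] Rn n} {K : ℝ}
    (hF : ‖F‖ ≤ K) (ω : Ω) :
    affineEnergy E0 V F ω ≤ E0.card * (c₁ * (K ^ p + 1) * (1 + totalWeight E0 lam ω)) := by
  rw [← nsmul_eq_mul]
  exact Finset.sum_le_card_nsmul _ _ _ fun b hb =>
    hG.le_of_norm_le hb ω ((norm_inv_smul_apply_le F _).trans hF)

end Pathwise

variable {P : Measure Ω} {τ : Zd d → Ω → Ω} {E0 : Finset (Zd d)} {p c₁ : ℝ}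
  {V : Zd d → Ω → Rn n → ℝ} {lam : Zd d → Ω → ℝ}

lemma integrable_totalWeight (hlam : ∀ b ∈ E0, Integrable (lam b) P) :
    Integrable (totalWeight E0 lam) P :=
  integrable_finsetSum _ hlam

lemma HasGrowth.integrable_affineEnergy [IsFiniteMeasure P] (hG : HasGrowth E0 p c₁ V lam)
    (hV : IsRandomPotential E0 V) (hlam : ∀ b ∈ E0, Integrable (lam b) P)
    (F : Rd d →L[ℝ] Rn n) : Integrable (affineEnergy E0 V F) P := by
  refine Integrable.mono' ((((integrable_const 1).add (integrable_totalWeight hlam)).const_mul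
    (c₁ * (‖F‖ ^ p + 1))).const_mul (E0.card : ℝ))
    (hV.measurable_affineEnergy F).aestronglyMeasurable (.of_forall fun ω => ?_)
  rw [Real.norm_of_nonneg (affineEnergy_nonneg hV.nonneg F ω)]
  exact hG.affineEnergy_le le_rfl ω

lemma HasGrowth.exists_W0_le_of_norm_le [IsProbabilityMeasure P] (hG : HasGrowth E0 p c₁ V lam)
    (hτ : IsMeasurePreservingAction P τ) (hV : IsRandomPotential E0 V)
    (hlam : ∀ b ∈ E0, Integrable (lam b) P) (K : ℝ) :
    ∃ M, ∀ F : Rd d →L[ℝ] Rn n, ‖F‖ ≤ K → W0 P τ E0 V F ≤ M := by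
  have hint := integrable_totalWeight hlam
  refine ⟨(latticePoints (cube d 1)).card * ∫ ω, E0.card * (c₁ * (K ^ p + 1) *
    (1 + totalWeight E0 lam ω)) ∂P, fun F hF => ?_⟩
  have hFint := hG.integrable_affineEnergy hV hlam F
  refine (W0_le_card_mul_integral hτ hV hFint).trans ?_
  refine mul_le_mul_of_nonneg_left ?_ (Nat.cast_nonneg _)
  refine integral_mono hFint ?_ fun ω => hG.affineEnergy_le hF ω
  exact (((integrable_const 1).add hint).const_mul _).const_mul _

end Growth

/-! ### Lattice cubes and a Vitali transference principle -/

section LatticeCubes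

/-- The lattice cube of side length `2 * T + 1` centred at `z`, that is, the closed ball of radius
`T` for the supremum distance. -/
def latticeCube (z : Zd d) (T : ℕ) : Finset (Zd d) :=
  Finset.Icc (fun i => z i - T) (fun i => z i + T)

lemma mem_latticeCube {z y : Zd d} {T : ℕ} : y ∈ latticeCube z T ↔ ∀ i, |y i - z i| ≤ T := by
  simp only [latticeCube, Finset.mem_Icc, Pi.le_def, abs_le, ← forall_and]
  exact forall_congr' fun i => by constructor <;> rintro ⟨h₁, h₂⟩ <;> constructor <;> linarith

lemma mem_latticeCube_zero {y : Zd d} {T : ℕ} : y ∈ latticeCube 0 T ↔ ∀ i, |y i| ≤ T := by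
  simp only [mem_latticeCube, Pi.zero_apply, sub_zero]

lemma mem_latticeCube_iff_mem_closedBall {z y : Zd d} {T : ℕ} :
    y ∈ latticeCube z T ↔ y ∈ closedBall z (T : ℝ) := by
  rw [mem_closedBall, mem_latticeCube, dist_pi_le_iff T.cast_nonneg]
  refine forall_congr' fun i => ?_
  rw [Int.dist_eq]
  norm_cast

lemma card_latticeCube (z : Zd d) (T : ℕ) :
    ((latticeCube z T).card : ℝ) = (2 * (T : ℝ) + 1) ^ d := by
  have hside (i : Fin d) : (Finset.Icc (z i - (T : ℤ)) (z i + T)).card = 2 * T + 1 := by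
    rw [Int.card_Icc]
    omega
  rw [latticeCube, Pi.card_Icc]
  simp [hside]

lemma latticeCube_mono (z : Zd d) {S T : ℕ} (h : S ≤ T) : latticeCube z S ⊆ latticeCube z T :=
  fun y hy => mem_latticeCube.2 fun i => (mem_latticeCube.1 hy i).trans (by exact_mod_cast h)

lemma mem_latticeCube_add {x y z : Zd d} {S T : ℕ} (hxy : x ∈ latticeCube y S)
    (hyz : y ∈ latticeCube z T) : x ∈ latticeCube z (T + S) := by
  rw [mem_latticeCube] at *
  intro i
  have := abs_le.1 (hxy i)
  have := abs_le.1 (hyz i)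
  rw [abs_le]
  push_cast
  constructor <;> linarith

lemma latticeCube_subset_latticeCube_zero {z : Zd d} {S T : ℕ} (hST : S ≤ T)
    (hz : z ∈ latticeCube 0 (T - S)) : latticeCube z S ⊆ latticeCube 0 T := fun y hy => by
  simpa [Nat.sub_add_cancel hST] using mem_latticeCube_add hy hz

lemma latticeCube_zero_add_singleton (z : Zd d) (T : ℕ) :
    latticeCube 0 T + {z} = latticeCube z T := by
  ext y
  simp only [Finset.mem_add, Finset.mem_singleton, exists_eq_left, mem_latticeCube,
    Pi.zero_apply, sub_zero]
  constructor
  · rintro ⟨x, hx, rfl⟩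
    simpa using hx
  · exact fun hy => ⟨y - z, by simpa using hy, by simp⟩

lemma tendsto_const_div_two_mul_add_one (c : ℝ) :
    Tendsto (fun N : ℕ => c / (2 * (N : ℝ) + 1)) atTop (𝓝 0) :=
  (tendsto_atTop_add_const_right _ _
    (tendsto_natCast_atTop_atTop.const_mul_atTop two_pos)).const_div_atTop c

lemma tendsto_two_mul_add_one_add_pow_div (d : ℕ) (c : ℝ) :
    Tendsto (fun N : ℕ => (2 * (N : ℝ) + 1 + c) ^ d / (2 * (N : ℝ) + 1) ^ d) atTop (𝓝 1) := by
  have h := ((tendsto_const_div_two_mul_add_one c).const_add 1).pow d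
  rw [add_zero, one_pow] at h
  refine h.congr fun N => ?_
  have : 2 * (N : ℝ) + 1 ≠ 0 := by positivity
  rw [← div_pow, add_div, div_self this]

lemma exists_pairwiseDisjoint_latticeCube_cover (s : Finset (Zd d)) (r : Zd d → ℕ) :
    ∃ t ⊆ s, (t : Set (Zd d)).PairwiseDisjoint (fun z => latticeCube z (r z)) ∧
      s ⊆ t.biUnion fun z => latticeCube z (5 * r z) := by
  obtain ⟨u, hus, hdisj, hcov⟩ :=
    Vitali.exists_disjoint_subfamily_covering_enlargement_closedBall (s : Set (Zd d)) id
      (fun z => (r z : ℝ)) (s.sup r : ℕ) (fun z hz => by exact_mod_cast Finset.le_sup hz) 5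
      (by norm_num)
  lift u to Finset (Zd d) using s.finite_toSet.subset hus
  refine ⟨u, by exact_mod_cast hus, fun y hy z hz hyz => ?_, fun z hz => ?_⟩
  · refine Finset.disjoint_left.2 fun x hxy hxz => ?_
    exact Set.disjoint_left.1 (hdisj hy hz hyz) (mem_latticeCube_iff_mem_closedBall.1 hxy)
      (mem_latticeCube_iff_mem_closedBall.1 hxz)
  · obtain ⟨y, hy, hzy⟩ := hcov z hz
    refine Finset.mem_biUnion.2 ⟨y, hy, mem_latticeCube_iff_mem_closedBall.2 ?_⟩
    simpa using hzy (mem_closedBall_self (r z).cast_nonneg)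

lemma card_le_of_sum_packing_le {s : Finset (Zd d)} {r : Zd d → ℕ} {g : Zd d → ℝ} {δ C : ℝ}
    (hδ : 0 < δ) (hg : ∀ z ∈ s, δ * (2 * (r z : ℝ) + 1) ^ d ≤ g z)
    (hC : ∀ t ⊆ s, (t : Set (Zd d)).PairwiseDisjoint (fun z => latticeCube z (r z)) →
      ∑ z ∈ t, g z ≤ C) :
    (s.card : ℝ) ≤ 5 ^ d / δ * C := by
  obtain ⟨t, hts, hdisj, hcov⟩ := exists_pairwiseDisjoint_latticeCube_cover s r
  have hcube (z : Zd d) (hz : z ∈ t) :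
      ((latticeCube z (5 * r z)).card : ℝ) ≤ 5 ^ d / δ * g z := by
    calc ((latticeCube z (5 * r z)).card : ℝ) ≤ (5 * (2 * (r z : ℝ) + 1)) ^ d := by
          rw [card_latticeCube]
          push_cast
          gcongr
          linarith
      _ = 5 ^ d / δ * (δ * (2 * (r z : ℝ) + 1) ^ d) := by rw [mul_pow]; field_simp
      _ ≤ 5 ^ d / δ * g z := by gcongr; exact hg z (hts hz)
  calc (s.card : ℝ) ≤ ∑ z ∈ t, ((latticeCube z (5 * r z)).card : ℝ) := by
        exact_mod_cast (Finset.card_le_card hcov).trans Finset.card_biUnion_le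
    _ ≤ 5 ^ d / δ * ∑ z ∈ t, g z := by
        rw [Finset.mul_sum]
        exact Finset.sum_le_sum hcube
    _ ≤ 5 ^ d / δ * C := by gcongr; exact hC t hts hdisj

end LatticeCubes

section Transference
variable {P : Measure Ω} {τ : Zd d → Ω → Ω} {X S : ℕ → Ω → ℝ} {δ κ : ℝ}

lemma card_filter_exists_lt_le {Ω : Type*} {τ : Zd d → Ω → Ω} {X : ℕ → Ω → ℝ} {ω : Ω}
    {T₀ N : ℕ} {C : ℝ} (hN : T₀ ≤ N) (hδ : 0 < δ)
    (hC : ∀ (s : Finset (Zd d)) (r : Zd d → ℕ),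
      (∀ z ∈ s, latticeCube z (r z) ⊆ latticeCube 0 N) →
      (s : Set (Zd d)).PairwiseDisjoint (fun z => latticeCube z (r z)) →
      ∑ z ∈ s, X (r z) (τ z ω) ≤ C) :
    (((latticeCube (0 : Zd d) (N - T₀)).filter
      fun z => ∃ T ≤ T₀, δ * (2 * (T : ℝ) + 1) ^ d < X T (τ z ω)).card : ℝ) ≤ 5 ^ d / δ * C := by
  set s := (latticeCube (0 : Zd d) (N - T₀)).filter
    fun z => ∃ T ≤ T₀, δ * (2 * (T : ℝ) + 1) ^ d < X T (τ z ω)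
  have hex (z : Zd d) (hz : z ∈ s) : ∃ T ≤ T₀, δ * (2 * (T : ℝ) + 1) ^ d < X T (τ z ω) :=
    (Finset.mem_filter.1 hz).2
  choose! r hr hX using hex
  refine card_le_of_sum_packing_le (r := r) hδ (fun z hz => (hX z hz).le) fun t hts hdisj => ?_
  refine hC t r (fun z hz => ?_) hdisj
  refine (latticeCube_mono z (hr z (hts hz))).trans (latticeCube_subset_latticeCube_zero hN ?_)
  exact (Finset.mem_filter.1 (hts hz)).1

lemma IsMeasurePreservingAction.integral_sum_comp (hτ : IsMeasurePreservingAction P τ) {f : Ω → ℝ}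
    (hf : Integrable f P) (s : Finset (Zd d)) :
    ∫ ω, ∑ z ∈ s, f (τ z ω) ∂P = s.card * ∫ ω, f ω ∂P := by
  rw [integral_finsetSum _ fun z _ => hτ.integrable_comp hf z]
  simp only [hτ.integral_comp hf.aestronglyMeasurable, Finset.sum_const, nsmul_eq_mul]

lemma IsMeasurePreservingAction.measureReal_exists_le_mul_pow_lt_le [IsFiniteMeasure P]
    (hτ : IsMeasurePreservingAction P τ) (hX : ∀ T, Measurable (X T))
    (hS : ∀ N, Integrable (S N) P) (hδ : 0 < δ)
    (hXS : ∀ ω N (s : Finset (Zd d)) (r : Zd d → ℕ),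
      (∀ z ∈ s, latticeCube z (r z) ⊆ latticeCube 0 N) →
      (s : Set (Zd d)).PairwiseDisjoint (fun z => latticeCube z (r z)) →
      ∑ z ∈ s, X (r z) (τ z ω) ≤ S N ω)
    (hlim : ∀ η > 0, ∀ᶠ N : ℕ in atTop, ∫ ω, S N ω ∂P ≤ (κ + η) * (2 * (N : ℝ) + 1) ^ d)
    (T₀ : ℕ) :
    P.real {ω | ∃ T ≤ T₀, δ * (2 * (T : ℝ) + 1) ^ d < X T ω} ≤ 5 ^ d / δ * κ := by
  set G := {ω | ∃ T ≤ T₀, δ * (2 * (T : ℝ) + 1) ^ d < X T ω} with hG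
  have hGm : MeasurableSet G := by
    simp only [hG, Set.ofPred_exists, Set.ofPred_and]
    exact MeasurableSet.iUnion fun T =>
      (MeasurableSet.const _).inter (measurableSet_lt measurable_const (hX T))
  have hGi : Integrable (G.indicator fun _ => (1 : ℝ)) P := (integrable_const _).indicator hGm
  have hcount (N : ℕ) (hN : T₀ ≤ N) :
      (2 * (N : ℝ) + 1 + -(2 * T₀)) ^ d * P.real G ≤ 5 ^ d / δ * ∫ ω, S N ω ∂P := by
    have hside : 2 * ((N - T₀ : ℕ) : ℝ) + 1 = 2 * N + 1 + -(2 * T₀) := by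
      push_cast [Nat.cast_sub hN]
      ring
    have hint := hτ.integral_sum_comp hGi (latticeCube 0 (N - T₀))
    rw [card_latticeCube, hside, integral_indicator_const _ hGm, smul_eq_mul, mul_one] at hint
    rw [← hint, ← integral_const_mul]
    refine integral_mono (integrable_finsetSum _ fun z _ => hτ.integrable_comp hGi z)
      ((hS N).const_mul _) fun ω => ?_
    simp only [Set.indicator_apply]
    refine (Finset.sum_boole (fun z => τ z ω ∈ G) _).trans_le ?_
    exact card_filter_exists_lt_le hN hδ (hXS ω N)
  refine le_of_forall_pos_le_add fun η hη => ?_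
  have hratio := (tendsto_two_mul_add_one_add_pow_div d (-(2 * T₀))).mul_const (P.real G)
  rw [one_mul] at hratio
  refine le_of_tendsto hratio ?_
  filter_upwards [hlim (η * δ / 5 ^ d) (by positivity), eventually_ge_atTop T₀] with N hSN hN
  rw [div_mul_eq_mul_div, div_le_iff₀ (by positivity)]
  calc _ ≤ 5 ^ d / δ * ((κ + η * δ / 5 ^ d) * (2 * (N : ℝ) + 1) ^ d) :=
        (hcount N hN).trans (by gcongr)
    _ = (5 ^ d / δ * κ + η) * (2 * (N : ℝ) + 1) ^ d := by field_simp

theorem IsMeasurePreservingAction.measureReal_exists_mul_pow_lt_le [IsFiniteMeasure P]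
    (hτ : IsMeasurePreservingAction P τ) (hX : ∀ T, Measurable (X T))
    (hS : ∀ N, Integrable (S N) P) (hδ : 0 < δ)
    (hXS : ∀ ω N (s : Finset (Zd d)) (r : Zd d → ℕ),
      (∀ z ∈ s, latticeCube z (r z) ⊆ latticeCube 0 N) →
      (s : Set (Zd d)).PairwiseDisjoint (fun z => latticeCube z (r z)) →
      ∑ z ∈ s, X (r z) (τ z ω) ≤ S N ω)
    (hlim : ∀ η > 0, ∀ᶠ N : ℕ in atTop, ∫ ω, S N ω ∂P ≤ (κ + η) * (2 * (N : ℝ) + 1) ^ d) :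
    P.real {ω | ∃ T : ℕ, δ * (2 * (T : ℝ) + 1) ^ d < X T ω} ≤ 5 ^ d / δ * κ := by
  set G : ℕ → Set Ω := fun T₀ => {ω | ∃ T ≤ T₀, δ * (2 * (T : ℝ) + 1) ^ d < X T ω} with hG
  have hmono : Monotone G := fun T₀ T₁ hT ω ⟨T, hTT₀, hω⟩ => ⟨T, hTT₀.trans hT, hω⟩
  have hunion : {ω | ∃ T : ℕ, δ * (2 * (T : ℝ) + 1) ^ d < X T ω} = ⋃ T₀, G T₀ := by
    ext ω
    simp only [hG, mem_iUnion, Set.mem_ofPred_eq]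
    exact ⟨fun ⟨T, hT⟩ => ⟨T, T, le_rfl, hT⟩, fun ⟨_, T, _, hT⟩ => ⟨T, hT⟩⟩
  rw [hunion]
  exact le_of_tendsto' ((ENNReal.tendsto_toReal (measure_ne_top _ _)).comp
    (tendsto_measure_iUnion_atTop hmono))
    (hτ.measureReal_exists_le_mul_pow_lt_le hX hS hδ hXS hlim)

end Transference

/-! ### The multiparameter ergodic theorem -/

section LatticeBoxes

/-- The set of `x` with `ε • x` in the open box with corners `lo` and `hi`. -/
def rescaledBox (ε : ℝ) (lo hi : Fin d → ℝ) : Set (Rd d) :=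
  {x | ε • x ∈ openBox lo hi}

/-- The lattice points `z` with `ε • z` in the open box with corners `lo` and `hi`. -/
def latticeBox (ε : ℝ) (lo hi : Fin d → ℝ) : Finset (Zd d) :=
  Finset.Icc (fun i => ⌊lo i / ε⌋ + 1) (fun i => ⌈hi i / ε⌉ - 1)

variable {ε σ : ℝ} {lo hi : Fin d → ℝ}

lemma mem_latticeBox (hε : 0 < ε) {z : Zd d} :
    z ∈ latticeBox ε lo hi ↔ ∀ i, lo i < ε * z i ∧ ε * z i < hi i := by
  simp only [latticeBox, Finset.mem_Icc, Pi.le_def, ← forall_and]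
  refine forall_congr' fun i => ?_
  rw [Int.add_one_le_iff, Int.floor_lt, Int.le_sub_one_iff, Int.lt_ceil, div_lt_iff₀ hε,
    lt_div_iff₀ hε, mul_comm ε]

lemma mem_latticeBox_iff_mem_rescaledBox (hε : 0 < ε) {z : Zd d} :
    z ∈ latticeBox ε lo hi ↔ toRd z ∈ rescaledBox ε lo hi := by
  simp [mem_latticeBox hε, rescaledBox, openBox]

lemma latticeBox_subset_latticeBox (hε : 0 < ε) {lo' hi' : Fin d → ℝ} (hlo : lo' ≤ lo)
    (hhi : hi ≤ hi') : latticeBox ε lo hi ⊆ latticeBox ε lo' hi' := fun z hz => by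
  rw [mem_latticeBox hε] at hz ⊢
  exact fun i => ⟨(hlo i).trans_lt (hz i).1, (hz i).2.trans_le (hhi i)⟩

lemma add_mem_latticeBox (hε : 0 < ε) {y z : Zd d} (hy : ∀ i, ε * |(y i : ℝ)| ≤ σ)
    (hz : z ∈ latticeBox ε lo hi) :
    z + y ∈ latticeBox ε (fun i => lo i - σ) (fun i => hi i + σ) := by
  rw [mem_latticeBox hε] at hz ⊢
  intro i
  have hyi : |ε * (y i : ℝ)| ≤ σ := by rw [abs_mul, abs_of_pos hε]; exact hy i
  have := abs_le.1 hyi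
  have := hz i
  push_cast [Pi.add_apply]
  constructor <;> linarith

lemma exists_forall_mem_rescaledBox_abs_le (lo hi : Fin d → ℝ) :
    ∃ K : ℕ, 0 < K ∧ ∀ ε > 0, ∀ x ∈ rescaledBox ε lo hi, ∀ i, |x i| ≤ K / ε := by
  obtain ⟨K, hK⟩ := exists_nat_gt (max ‖lo‖ ‖hi‖)
  have hK0 : (0 : ℝ) < K := (le_max_of_le_left (norm_nonneg lo)).trans_lt hK
  refine ⟨K, by exact_mod_cast hK0, fun ε hε x hx i => ?_⟩
  have hloK := abs_le.1 ((norm_le_pi_norm lo i).trans ((le_max_left _ _).trans hK.le))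
  have hhiK := abs_le.1 ((norm_le_pi_norm hi i).trans ((le_max_right _ _).trans hK.le))
  have hxi : lo i < ε * x i ∧ ε * x i < hi i := hx i
  have habs : |ε * x i| ≤ K := abs_le.2 ⟨by linarith, by linarith⟩
  rwa [abs_mul, abs_of_pos hε, mul_comm, ← le_div_iff₀ hε] at habs

lemma latticeBox_subset_latticeCube (hε : 0 < ε) {K : ℝ}
    (hK : ∀ x ∈ rescaledBox ε lo hi, ∀ i, |x i| ≤ K / ε) :
    latticeBox ε lo hi ⊆ latticeCube 0 ⌈K / ε⌉₊ := fun z hz =>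
  mem_latticeCube_zero.2 fun i => by
    have hzi := hK _ ((mem_latticeBox_iff_mem_rescaledBox hε).1 hz) i
    rw [toRd_apply] at hzi
    have hceil : |(z i : ℝ)| ≤ ((⌈K / ε⌉₊ : ℤ) : ℝ) := hzi.trans (Nat.le_ceil _)
    exact_mod_cast hceil

lemma mul_two_mul_ceil_add_one_le {K : ℝ} (hK : 0 ≤ K) (hε : 0 < ε) (hε1 : ε ≤ 1) :
    ε * (2 * (⌈K / ε⌉₊ : ℝ) + 1) ≤ 2 * K + 3 := by
  have hceil := mul_lt_mul_of_pos_left (Nat.ceil_lt_add_one (a := K / ε) (by positivity)) hε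
  rw [mul_add, mul_div_cancel₀ _ hε.ne'] at hceil
  linarith

lemma abs_card_Icc_floor_ceil_sub_le {a b : ℝ} (hab : a < b) :
    |((Finset.Icc (⌊a⌋ + 1) (⌈b⌉ - 1)).card : ℝ) - (b - a)| ≤ 1 := by
  have hnonneg : 0 ≤ ⌈b⌉ - 1 + 1 - (⌊a⌋ + 1) := by
    have : ⌊a⌋ < ⌈b⌉ := by exact_mod_cast (Int.floor_le a).trans_lt (hab.trans_le (Int.le_ceil b))
    omega
  have hcard : ((Finset.Icc (⌊a⌋ + 1) (⌈b⌉ - 1)).card : ℝ) = ⌈b⌉ - ⌊a⌋ - 1 := by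
    rw [Int.card_Icc, ← Int.cast_natCast, Int.toNat_of_nonneg hnonneg]
    push_cast
    ring
  have := Int.ceil_lt_add_one b
  have := Int.le_ceil b
  have := Int.floor_le a
  have := Int.lt_floor_add_one a
  rw [hcard, abs_le]
  constructor <;> linarith

lemma tendsto_mul_card_Icc_floor_ceil {a b : ℝ} (hab : a < b) :
    Tendsto (fun ε : ℝ => ε * ((Finset.Icc (⌊a / ε⌋ + 1) (⌈b / ε⌉ - 1)).card : ℝ)) (𝓝[>] 0)
      (𝓝 (b - a)) := by
  rw [tendsto_iff_norm_sub_tendsto_zero]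
  refine squeeze_zero' (.of_forall fun _ => norm_nonneg _) ?_
    (tendsto_id.mono_left nhdsWithin_le_nhds)
  filter_upwards [self_mem_nhdsWithin] with ε (hε : 0 < ε)
  have hcard := abs_card_Icc_floor_ceil_sub_le (div_lt_div_of_pos_right hab hε)
  calc _ = ε * |((Finset.Icc (⌊a / ε⌋ + 1) (⌈b / ε⌉ - 1)).card : ℝ) - (b / ε - a / ε)| := by
        rw [Real.norm_eq_abs, ← abs_of_pos hε, ← abs_mul, abs_of_pos hε]
        congr 1
        field_simp
    _ ≤ ε * 1 := by gcongr
    _ = id ε := mul_one ε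

lemma tendsto_pow_mul_card_latticeBox (h : ∀ i, lo i < hi i) :
    Tendsto (fun ε : ℝ => ε ^ d * ((latticeBox ε lo hi).card : ℝ)) (𝓝[>] 0)
      (𝓝 (∏ i, (hi i - lo i))) := by
  refine (tendsto_finsetProd Finset.univ fun i _ =>
    tendsto_mul_card_Icc_floor_ceil (h i)).congr fun ε => ?_
  rw [Finset.prod_mul_distrib, latticeBox, Pi.card_Icc]
  simp

end LatticeBoxes

section ErgodicTheorem

/-- The rescaled sum of the values of `f` along the orbit of `ω`, over the points of
`εℤ^d` in an open box. -/
def boxAverage {Ω : Type*} (τ : Zd d → Ω → Ω) (f : Ω → ℝ) (ω : Ω) (lo hi : Fin d → ℝ)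
    (ε : ℝ) : ℝ :=
  ε ^ d * ∑ z ∈ latticeBox ε lo hi, f (τ z ω)

/-- The ergodic averages of `f` along the orbit of `ω` converge, on every open box, to the
volume of the box times the expectation of `f`. -/
def HasErgodicLimit (P : Measure Ω) (τ : Zd d → Ω → Ω) (f : Ω → ℝ) (ω : Ω) : Prop :=
  ∀ lo hi : Fin d → ℝ, (∀ i, lo i < hi i) →
    Tendsto (boxAverage τ f ω lo hi) (𝓝[>] 0) (𝓝 ((∏ i, (hi i - lo i)) * ∫ x, f x ∂P))

variable {P : Measure Ω} {τ : Zd d → Ω → Ω} {f g : Ω → ℝ} {ω : Ω}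

lemma hasErgodicLimit_const [IsProbabilityMeasure P] (τ : Zd d → Ω → Ω) (c : ℝ) (ω : Ω) :
    HasErgodicLimit P τ (fun _ => c) ω := fun lo hi h => by
  simpa [boxAverage, mul_assoc, Function.comp_def] using
    ((tendsto_pow_mul_card_latticeBox h).mul_const c).congr fun ε => by
      rw [boxAverage, Finset.sum_const, nsmul_eq_mul, mul_assoc]

lemma HasErgodicLimit.add (hf : HasErgodicLimit P τ f ω) (hg : HasErgodicLimit P τ g ω)
    (hfi : Integrable f P) (hgi : Integrable g P) :
    HasErgodicLimit P τ (fun x => f x + g x) ω := fun lo hi h => by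
  rw [integral_add hfi hgi, mul_add]
  refine ((hf lo hi h).add (hg lo hi h)).congr fun ε => ?_
  simp only [boxAverage, Finset.sum_add_distrib, mul_add]

lemma HasErgodicLimit.const_mul (c : ℝ) (hf : HasErgodicLimit P τ f ω) :
    HasErgodicLimit P τ (fun x => c * f x) ω := fun lo hi h => by
  rw [integral_const_mul, mul_left_comm]
  refine ((hf lo hi h).const_mul c).congr fun ε => ?_
  simp only [boxAverage, ← Finset.mul_sum, mul_left_comm]

lemma IsMeasurePreservingAction.ae_forall_comp (hτ : IsMeasurePreservingAction P τ)
    {q : Ω → Prop} (hq : ∀ᵐ ω ∂P, q ω) : ∀ᵐ ω ∂P, ∀ z, q (τ z ω) :=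
  ae_all_iff.2 fun z => (hτ.measurePreserving z).quasiMeasurePreserving.ae hq

lemma IsMeasurePreservingAction.ae_hasErgodicLimit_congr (hτ : IsMeasurePreservingAction P τ)
    (hfg : f =ᵐ[P] g) (hf : ∀ᵐ ω ∂P, HasErgodicLimit P τ f ω) :
    ∀ᵐ ω ∂P, HasErgodicLimit P τ g ω := by
  filter_upwards [hf, hτ.ae_forall_comp hfg] with ω hω horbit lo hi h
  rw [← integral_congr_ae hfg]
  exact (hω lo hi h).congr fun ε => by simp only [boxAverage, horbit]

lemma HasErgodicLimit.exists_shell_lt (hf : HasErgodicLimit P τ f ω) {lo hi : Fin d → ℝ}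
    (h : ∀ i, lo i < hi i) {η : ℝ} (hη : 0 < η) :
    ∃ σ > 0, (∀ i, lo i + σ < hi i - σ) ∧ ∀ᶠ ε in 𝓝[>] 0,
      boxAverage τ f ω (fun i => lo i - σ) (fun i => hi i + σ) ε -
        boxAverage τ f ω (fun i => lo i + σ) (fun i => hi i - σ) ε < η := by
  set v : ℝ → ℝ := fun σ => (∏ i, (hi i + σ - (lo i - σ))) * ∫ x, f x ∂P -
    (∏ i, (hi i - σ - (lo i + σ))) * ∫ x, f x ∂P with hv
  have hvlim : Tendsto v (𝓝[>] 0) (𝓝 (v 0)) :=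
    (show Continuous v by fun_prop).continuousAt.mono_left nhdsWithin_le_nhds
  have hvη : ∀ᶠ σ in 𝓝[>] 0, v σ < η := hvlim.eventually_lt_const (by simpa [hv] using hη)
  have hbox : ∀ᶠ σ in 𝓝[>] (0 : ℝ), ∀ i, lo i + σ < hi i - σ :=
    eventually_all.2 fun i => by
      filter_upwards [Ioo_mem_nhdsGT (half_pos (sub_pos.2 (h i)))] with σ hσ
      linarith [hσ.2]
  obtain ⟨σ, hσv, hσ, hσ0⟩ := (hvη.and (hbox.and self_mem_nhdsWithin)).exists
  have hσ0 : 0 < σ := hσ0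
  refine ⟨σ, hσ0, hσ, Tendsto.eventually_lt_const hσv ?_⟩
  exact (hf _ _ fun i => by linarith [h i]).sub (hf _ _ hσ)

lemma abs_sum_sub_sum_le {ι : Type*} {s t I O : Finset ι} {g w : ι → ℝ}
    (hg : ∀ i, |g i| ≤ w i) (hIs : I ⊆ s) (hsO : s ⊆ O) (hIt : I ⊆ t) (htO : t ⊆ O) :
    |∑ i ∈ s, g i - ∑ i ∈ t, g i| ≤ ∑ i ∈ O, w i - ∑ i ∈ I, w i := by
  have hle (u : Finset ι) : |∑ i ∈ u, g i| ≤ ∑ i ∈ u, w i :=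
    (Finset.abs_sum_le_sum_abs _ _).trans (Finset.sum_le_sum fun i _ => hg i)
  have hdisj : Disjoint (s \ t) (t \ s) := disjoint_sdiff_sdiff
  have hsub : s \ t ∪ t \ s ⊆ O \ I := by
    intro i hi
    simp only [Finset.mem_union, Finset.mem_sdiff] at hi ⊢
    rcases hi with hi | hi
    · exact ⟨hsO hi.1, fun hI => hi.2 (hIt hI)⟩
    · exact ⟨htO hi.1, fun hI => hi.2 (hIs hI)⟩
  calc |∑ i ∈ s, g i - ∑ i ∈ t, g i| = |∑ i ∈ s \ t, g i - ∑ i ∈ t \ s, g i| := by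
        rw [Finset.sum_sdiff_sub_sum_sdiff]
    _ ≤ ∑ i ∈ s \ t ∪ t \ s, w i := by
        rw [Finset.sum_union hdisj]
        exact (abs_sub _ _).trans (add_le_add (hle _) (hle _))
    _ ≤ ∑ i ∈ O \ I, w i :=
        Finset.sum_le_sum_of_subset_of_nonneg hsub fun i _ _ => (abs_nonneg _).trans (hg i)
    _ = ∑ i ∈ O, w i - ∑ i ∈ I, w i := by
        rw [← Finset.sum_sdiff (hIs.trans hsO), add_sub_cancel_right]

lemma add_singleton_eq_image (B : Finset (Zd d)) (z : Zd d) : B + {z} = B.image (· + z) :=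
  Finset.image₂_singleton_right

lemma sum_comp_comp {Ω : Type*} {τ : Zd d → Ω → Ω} (hτ : ∀ x y, τ (x + y) = τ x ∘ τ y)
    (f : Ω → ℝ) (B : Finset (Zd d)) (z : Zd d) (ω : Ω) :
    ∑ y ∈ B, f (τ y (τ z ω)) = ∑ y ∈ B + {z}, f (τ y ω) := by
  rw [add_singleton_eq_image, Finset.sum_image fun x _ y _ h => add_right_cancel h]
  exact Finset.sum_congr rfl fun y _ => by rw [hτ]; rfl

lemma eventually_mul_abs_le (e : Zd d) {σ : ℝ} (hσ : 0 < σ) :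
    ∀ᶠ ε : ℝ in 𝓝[>] 0, ∀ i, ε * |(e i : ℝ)| ≤ σ := by
  refine eventually_all.2 fun i => ?_
  have hlim : Tendsto (fun ε : ℝ => ε * |(e i : ℝ)|) (𝓝[>] 0) (𝓝 (0 * |(e i : ℝ)|)) :=
    (tendsto_id.mul_const _).mono_left nhdsWithin_le_nhds
  rw [zero_mul] at hlim
  exact hlim.eventually_le_const hσ

lemma IsMeasurePreservingAction.hasErgodicLimit_sub_comp [IsProbabilityMeasure P]
    (hτ : IsMeasurePreservingAction P τ) (hg : Integrable g P) {C : ℝ} (hC : ∀ x, |g x| ≤ C)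
    (e : Zd d) (ω : Ω) : HasErgodicLimit P τ (fun x => g x - g (τ e x)) ω := by
  intro lo hi h
  rw [integral_sub hg (hτ.integrable_comp hg e), hτ.integral_comp hg.aestronglyMeasurable, sub_self,
    mul_zero, Metric.tendsto_nhds]
  intro η hη
  obtain ⟨σ, hσ, -, hshell⟩ := (hasErgodicLimit_const (P := P) τ C ω).exists_shell_lt h hη
  filter_upwards [hshell, eventually_mul_abs_le e hσ, self_mem_nhdsWithin]
    with ε hεη hεe (hε : 0 < ε)
  refine lt_of_le_of_lt ?_ hεη
  have hinner : latticeBox ε (fun i => lo i + σ) (fun i => hi i - σ) ⊆ latticeBox ε lo hi + {e} :=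
    fun z hz => by
      have hze := add_mem_latticeBox hε (y := -e) (by simpa using hεe) hz
      simp only [add_sub_cancel_right, sub_add_cancel, ← sub_eq_add_neg] at hze
      exact add_singleton_eq_image _ e ▸ Finset.mem_image.2 ⟨z - e, hze, sub_add_cancel z e⟩
  have houter : latticeBox ε lo hi + {e} ⊆ latticeBox ε (fun i => lo i - σ) (fun i => hi i + σ) :=
    add_singleton_eq_image _ e ▸
      Finset.image_subset_iff.2 fun z hz => add_mem_latticeBox hε hεe hz
  have hsum := abs_sum_sub_sum_le (g := fun z => g (τ z ω)) (fun z => hC (τ z ω))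
    (latticeBox_subset_latticeBox hε (fun i => le_add_of_nonneg_right hσ.le)
      fun i => sub_le_self _ hσ.le)
    (latticeBox_subset_latticeBox hε (fun i => sub_le_self _ hσ.le)
      fun i => le_add_of_nonneg_right hσ.le) hinner houter
  have hcomm (x : Zd d) : τ e (τ x ω) = τ x (τ e ω) := by
    rw [← Function.comp_apply (f := τ e), ← hτ.map_add, add_comm, hτ.map_add, Function.comp_apply]
  rw [Real.dist_eq, sub_zero, boxAverage, Finset.sum_sub_distrib]
  simp only [hcomm]
  rw [sum_comp_comp hτ.map_add, abs_mul, abs_of_pos (pow_pos hε d), boxAverage, boxAverage,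
    ← mul_sub]
  gcongr

lemma IsMeasurePreservingAction.measureReal_exists_mul_pow_lt_sum_le [IsFiniteMeasure P]
    (hτ : IsMeasurePreservingAction P τ) (hfm : Measurable f) (hf0 : ∀ x, 0 ≤ f x)
    (hf : Integrable f P) {δ : ℝ} (hδ : 0 < δ) :
    P.real {ω | ∃ T : ℕ, δ * (2 * (T : ℝ) + 1) ^ d < ∑ z ∈ latticeCube 0 T, f (τ z ω)} ≤
      5 ^ d / δ * ∫ x, f x ∂P := by
  refine hτ.measureReal_exists_mul_pow_lt_le (S := fun T ω => ∑ z ∈ latticeCube 0 T, f (τ z ω))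
    (fun T => Finset.measurable_fun_sum _ fun z _ => hfm.comp (hτ.measurePreserving z).measurable)
    (fun N => integrable_finsetSum _ fun z _ => hτ.integrable_comp hf z) hδ
    (fun ω N s r hsub hdisj => ?_) fun η hη => .of_forall fun N => ?_
  · simp only [sum_comp_comp hτ.map_add, latticeCube_zero_add_singleton]
    rw [← Finset.sum_biUnion hdisj]
    exact Finset.sum_le_sum_of_subset_of_nonneg (Finset.biUnion_subset.2 hsub) fun z _ _ => hf0 _
  · rw [hτ.integral_sum_comp hf, card_latticeCube, mul_comm]
    gcongr
    linarith

lemma abs_boxAverage_sub_le {Ω : Type*} {τ : Zd d → Ω → Ω} {f g : Ω → ℝ} {ω : Ω}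
    {lo hi : Fin d → ℝ} {K : ℕ} {η ε : ℝ} (hη : 0 ≤ η) (hε : 0 < ε) (hε1 : ε ≤ 1)
    (hK : latticeBox ε lo hi ⊆ latticeCube 0 ⌈K / ε⌉₊)
    (hfg : ∀ T : ℕ, ∑ z ∈ latticeCube 0 T, |f (τ z ω) - g (τ z ω)| ≤ η * (2 * (T : ℝ) + 1) ^ d) :
    |boxAverage τ f ω lo hi ε - boxAverage τ g ω lo hi ε| ≤ η * (2 * (K : ℝ) + 3) ^ d := by
  rw [boxAverage, boxAverage, ← mul_sub, ← Finset.sum_sub_distrib, abs_mul,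
    abs_of_pos (pow_pos hε d)]
  calc ε ^ d * |∑ z ∈ latticeBox ε lo hi, (f (τ z ω) - g (τ z ω))|
      ≤ ε ^ d * ∑ z ∈ latticeCube 0 ⌈K / ε⌉₊, |f (τ z ω) - g (τ z ω)| := by
        gcongr
        exact (Finset.abs_sum_le_sum_abs _ _).trans
          (Finset.sum_le_sum_of_subset_of_nonneg hK fun _ _ _ => abs_nonneg _)
    _ ≤ ε ^ d * (η * (2 * (⌈K / ε⌉₊ : ℝ) + 1) ^ d) := by gcongr; exact hfg _
    _ = η * (ε * (2 * (⌈K / ε⌉₊ : ℝ) + 1)) ^ d := by rw [mul_pow]; ring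
    _ ≤ η * (2 * (K : ℝ) + 3) ^ d := by
        gcongr
        exact mul_two_mul_ceil_add_one_le K.cast_nonneg hε hε1

lemma hasErgodicLimit_of_forall_approx
    (h : ∀ η > 0, ∃ g, HasErgodicLimit P τ g ω ∧ |∫ x, f x ∂P - ∫ x, g x ∂P| ≤ η ∧
      ∀ T : ℕ, ∑ z ∈ latticeCube 0 T, |f (τ z ω) - g (τ z ω)| ≤ η * (2 * (T : ℝ) + 1) ^ d) :
    HasErgodicLimit P τ f ω := by
  intro lo hi hlohi
  obtain ⟨K, -, hK⟩ := exists_forall_mem_rescaledBox_abs_le lo hi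
  set v := ∏ i, (hi i - lo i)
  have hv : 0 ≤ v := Finset.prod_nonneg fun i _ => (sub_pos.2 (hlohi i)).le
  rw [Metric.tendsto_nhds]
  intro η hη
  set Q : ℝ := (2 * (K : ℝ) + 3) ^ d + v + 1
  have hQ : 0 < Q := by positivity
  obtain ⟨g, hg, hint, hmax⟩ := h (η / Q) (by positivity)
  have hlimit : |v * ∫ x, f x ∂P - v * ∫ x, g x ∂P| ≤ v * (η / Q) := by
    rw [← mul_sub, abs_mul, abs_of_nonneg hv]
    gcongr
  filter_upwards [Metric.tendsto_nhds.1 (hg lo hi hlohi) (η / Q) (by positivity),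
    Ioc_mem_nhdsGT one_pos] with ε hgε hε
  have havg := abs_boxAverage_sub_le (by positivity) hε.1 hε.2
    (latticeBox_subset_latticeCube hε.1 (hK ε hε.1)) hmax
  have hbudget : η / Q * (2 * (K : ℝ) + 3) ^ d + v * (η / Q) + η / Q = η := by
    field_simp
    ring
  rw [Real.dist_eq] at hgε ⊢
  rw [abs_lt] at *
  rw [abs_le] at havg hlimit
  constructor <;> linarith [havg.1, havg.2, hlimit.1, hlimit.2, hgε.1, hgε.2]

lemma IsMeasurePreservingAction.ae_exists_approx [IsFiniteMeasure P]
    (hτ : IsMeasurePreservingAction P τ) (hfm : Measurable f) (hf : Integrable f P)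
    (happ : ∀ κ > 0, ∃ g, Measurable g ∧ Integrable g P ∧ (∀ᵐ ω ∂P, HasErgodicLimit P τ g ω) ∧
      ∫ x, |f x - g x| ∂P ≤ κ) {η : ℝ} (hη : 0 < η) :
    ∀ᵐ ω ∂P, ∃ g, HasErgodicLimit P τ g ω ∧ |∫ x, f x ∂P - ∫ x, g x ∂P| ≤ η ∧
      ∀ T : ℕ, ∑ z ∈ latticeCube 0 T, |f (τ z ω) - g (τ z ω)| ≤ η * (2 * (T : ℝ) + 1) ^ d := by
  rw [ae_iff, ← measureReal_eq_zero_iff]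
  refine le_antisymm (le_of_forall_pos_le_add fun θ hθ => ?_) measureReal_nonneg
  obtain ⟨g, hgm, hgi, hg, hfg⟩ := happ (min η (θ * η / 5 ^ d)) (by positivity)
  have hint : |∫ x, f x ∂P - ∫ x, g x ∂P| ≤ η := by
    rw [← integral_sub hf hgi]
    exact abs_integral_le_integral_abs.trans (hfg.trans (min_le_left _ _))
  have hmax := hτ.measureReal_exists_mul_pow_lt_sum_le (f := fun x => |f x - g x|)
    (hfm.sub hgm).abs (fun x => abs_nonneg _) (hf.sub hgi).abs hη
  calc _ ≤ P.real {ω | ∃ T : ℕ, η * (2 * (T : ℝ) + 1) ^ d <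
        ∑ z ∈ latticeCube 0 T, |f (τ z ω) - g (τ z ω)|} := by
        refine ENNReal.toReal_mono (measure_ne_top _ _) (measure_mono_ae ?_)
        filter_upwards [hg] with ω hω hbad
        by_contra hT
        exact hbad ⟨g, hω, hint, fun T => not_lt.1 fun h => hT ⟨T, h⟩⟩
    _ ≤ 5 ^ d / η * (θ * η / 5 ^ d) := hmax.trans (by gcongr; exact hfg.trans (min_le_right _ _))
    _ = 0 + θ := by field_simp; ring

lemma IsMeasurePreservingAction.ae_hasErgodicLimit_of_forall_approx [IsFiniteMeasure P]
    (hτ : IsMeasurePreservingAction P τ) (hfm : Measurable f) (hf : Integrable f P)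
    (happ : ∀ κ > 0, ∃ g, Measurable g ∧ Integrable g P ∧ (∀ᵐ ω ∂P, HasErgodicLimit P τ g ω) ∧
      ∫ x, |f x - g x| ∂P ≤ κ) : ∀ᵐ ω ∂P, HasErgodicLimit P τ f ω := by
  have hnat : ∀ᵐ ω ∂P, ∀ m : ℕ, ∃ g, HasErgodicLimit P τ g ω ∧
      |∫ x, f x ∂P - ∫ x, g x ∂P| ≤ 1 / ((m : ℝ) + 1) ∧
      ∀ T : ℕ, ∑ z ∈ latticeCube 0 T, |f (τ z ω) - g (τ z ω)| ≤
        1 / ((m : ℝ) + 1) * (2 * (T : ℝ) + 1) ^ d :=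
    ae_all_iff.2 fun m => hτ.ae_exists_approx hfm hf happ (by positivity)
  filter_upwards [hnat] with ω hω
  refine hasErgodicLimit_of_forall_approx fun η hη => ?_
  obtain ⟨m, hm⟩ := exists_nat_one_div_lt hη
  obtain ⟨g, hg, hint, hmax⟩ := hω m
  exact ⟨g, hg, hint.trans hm.le, fun T => (hmax T).trans (by gcongr)⟩

lemma IsMeasurePreservingAction.ae_eq_comp_of_forall_setIntegral_eq
    (hτ : IsMeasurePreservingAction P τ) (hf : Measurable f) (hfi : Integrable f P) (e : Zd d)
    (hset : ∀ s, MeasurableSet s → ∫ x in s, f x ∂P = ∫ x in τ (-e) ⁻¹' s, f x ∂P) :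
    (fun x => f (τ e x)) =ᵐ[P] f := by
  refine Integrable.ae_eq_of_forall_setIntegral_eq _ _ (hτ.integrable_comp hfi e) hfi
    fun s hs _ => ?_
  have hinv (x : Ω) : τ e (τ (-e) x) = x := by
    rw [← Function.comp_apply (f := τ e), ← hτ.map_add, add_neg_cancel, hτ.map_zero, id]
  have hfe : Measurable fun x => f (τ e x) := hf.comp (hτ.measurePreserving e).measurable
  rw [hset s hs, ← integral_indicator hs, ← integral_indicator
    ((hτ.measurePreserving (-e)).measurable hs),
    ← hτ.integral_comp (hfe.indicator hs).aestronglyMeasurable (-e)]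
  simp only [Set.indicator_apply, Set.mem_preimage, hinv]

lemma IsErgodicAction.ae_neg_or_ae_nonneg [IsProbabilityMeasure P] (hτ : IsErgodicAction P τ)
    (hf : Measurable f) (hinv : ∀ z, (fun x => f (τ z x)) =ᵐ[P] f) :
    (∀ᵐ ω ∂P, f ω < 0) ∨ ∀ᵐ ω ∂P, 0 ≤ f ω := by
  set B : Set Ω := {ω | ∀ z, f (τ z ω) < 0} with hB
  have hBm : MeasurableSet B := by
    simp only [hB, Set.ofPred_forall]
    exact .iInter fun z =>
      measurableSet_lt (hf.comp (hτ.measurePreserving z).measurable) measurable_const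
  have hBinv (z : Zd d) : τ z ⁻¹' B = B := by
    ext ω
    have hcomp (y : Zd d) : τ y (τ z ω) = τ (y + z) ω := by rw [hτ.map_add]; rfl
    simp only [hB, Set.mem_preimage, Set.mem_ofPred_eq, hcomp]
    exact ⟨fun h y => by simpa using h (y - z), fun h y => h (y + z)⟩
  have hBae : ∀ᵐ ω ∂P, ω ∈ B ↔ f ω < 0 := by
    filter_upwards [ae_all_iff.2 hinv] with ω hω
    simp only [hB, Set.mem_ofPred_eq, hω, forall_const]
  rcases hτ.ergodic B hBm hBinv with h0 | h1
  · right
    filter_upwards [measure_eq_zero_iff_ae_notMem.1 h0, hBae] with ω hω hiff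
    exact not_lt.1 (hiff.not.1 hω)
  · left
    filter_upwards [mem_ae_iff.2 ((prob_compl_eq_zero_iff hBm).2 h1), hBae] with ω hω hiff
    exact hiff.1 hω

lemma IsErgodicAction.ae_eq_zero_of_integral_eq_zero [IsProbabilityMeasure P]
    (hτ : IsErgodicAction P τ) (hf : Measurable f) (hfi : Integrable f P)
    (hinv : ∀ z, (fun x => f (τ z x)) =ᵐ[P] f) (h0 : ∫ x, f x ∂P = 0) : f =ᵐ[P] 0 := by
  rcases hτ.ae_neg_or_ae_nonneg hf hinv with hneg | hnonneg
  · have hzero : -f =ᵐ[P] 0 := by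
      refine (integral_eq_zero_iff_of_nonneg_ae ?_ hfi.neg).1 (by simp [integral_neg, h0])
      filter_upwards [hneg] with ω hω
      simpa using hω.le
    filter_upwards [hzero] with ω hω
    simpa using hω
  · exact (integral_eq_zero_iff_of_nonneg_ae hnonneg hfi).1 h0

/-- The subspace of `L²` formed by the functions whose ergodic averages converge almost surely. -/
def ergodicSubmodule [IsProbabilityMeasure P] (hτ : IsMeasurePreservingAction P τ) :
    Submodule ℝ (Lp ℝ 2 P) where
  carrier := {k | ∀ᵐ ω ∂P, HasErgodicLimit P τ k ω}
  zero_mem' := hτ.ae_hasErgodicLimit_congr (Lp.coeFn_zero ℝ 2 P).symm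
    (.of_forall (hasErgodicLimit_const τ 0))
  add_mem' {k l} hk hl := by
    refine hτ.ae_hasErgodicLimit_congr (Lp.coeFn_add k l).symm ?_
    filter_upwards [hk, hl] with ω hkω hlω
    exact hkω.add hlω ((Lp.memLp k).integrable one_le_two) ((Lp.memLp l).integrable one_le_two)
  smul_mem' c k hk := by
    refine hτ.ae_hasErgodicLimit_congr (Lp.coeFn_smul c k).symm ?_
    filter_upwards [hk] with ω hkω using hkω.const_mul c

lemma indicatorConstLp_univ_mem_ergodicSubmodule [IsProbabilityMeasure P]
    (hτ : IsMeasurePreservingAction P τ) :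
    indicatorConstLp 2 MeasurableSet.univ (measure_ne_top P _) (1 : ℝ) ∈ ergodicSubmodule hτ := by
  refine hτ.ae_hasErgodicLimit_congr (indicatorConstLp_coeFn).symm ?_
  simpa only [Set.indicator_univ] using Eventually.of_forall (hasErgodicLimit_const τ 1)

lemma indicatorConstLp_sub_preimage_mem_ergodicSubmodule [IsProbabilityMeasure P]
    (hτ : IsMeasurePreservingAction P τ) (e : Zd d) {s : Set Ω} (hs : MeasurableSet s) :
    indicatorConstLp 2 hs (measure_ne_top P _) (1 : ℝ) -
      indicatorConstLp 2 ((hτ.measurePreserving e).measurable hs) (measure_ne_top P _) (1 : ℝ) ∈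
        ergodicSubmodule hτ := by
  have hcoe := (Lp.coeFn_sub _ _).trans ((indicatorConstLp_coeFn (p := 2) (hs := hs)
    (hμs := measure_ne_top P _) (c := (1 : ℝ))).sub (indicatorConstLp_coeFn (p := 2)
      (hs := (hτ.measurePreserving e).measurable hs) (hμs := measure_ne_top P _) (c := (1 : ℝ))))
  refine hτ.ae_hasErgodicLimit_congr hcoe.symm (.of_forall ?_)
  refine hτ.hasErgodicLimit_sub_comp (g := s.indicator fun _ => 1) (C := 1)
    ((integrable_const _).indicator hs) (fun x => ?_) e
  by_cases hx : x ∈ s <;> simp [hx]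

lemma IsErgodicAction.orthogonal_ergodicSubmodule [IsProbabilityMeasure P]
    (hτ : IsErgodicAction P τ) :
    (ergodicSubmodule hτ.toIsMeasurePreservingAction)ᗮ = ⊥ := by
  rw [Submodule.eq_bot_iff]
  intro h hh
  rw [Submodule.mem_orthogonal] at hh
  have hm : Measurable (h : Ω → ℝ) := (Lp.stronglyMeasurable h).measurable
  have hi : Integrable (h : Ω → ℝ) P := (Lp.memLp h).integrable one_le_two
  refine Lp.eq_zero_iff_ae_eq_zero.2 (hτ.ae_eq_zero_of_integral_eq_zero hm hi (fun e => ?_) ?_)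
  · refine hτ.ae_eq_comp_of_forall_setIntegral_eq hm hi e fun s hs => ?_
    have hinner := hh _ (indicatorConstLp_sub_preimage_mem_ergodicSubmodule _ (-e) hs)
    rwa [inner_sub_left, L2.inner_indicatorConstLp_one, L2.inner_indicatorConstLp_one,
      sub_eq_zero] at hinner
  · have hinner := hh _ (indicatorConstLp_univ_mem_ergodicSubmodule _)
    rwa [L2.inner_indicatorConstLp_one, setIntegral_univ] at hinner

lemma IsErgodicAction.exists_mem_ergodicSubmodule_integral_abs_sub_le [IsProbabilityMeasure P]
    (hτ : IsErgodicAction P τ) (hf : Integrable f P) {κ : ℝ} (hκ : 0 < κ) :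
    ∃ k ∈ ergodicSubmodule hτ.toIsMeasurePreservingAction, ∫ x, |f x - k x| ∂P ≤ κ := by
  obtain ⟨s, hs, -⟩ := (memLp_one_iff_integrable.2 hf).exists_simpleFunc_eLpNorm_sub_lt
    ENNReal.one_ne_top (ε := ENNReal.ofReal (κ / 2)) (by simpa using hκ)
  have hs2 : MemLp s 2 P := s.memLp_of_isFiniteMeasure _ _
  have hdense : hs2.toLp s ∈ (ergodicSubmodule hτ.toIsMeasurePreservingAction).topologicalClosure :=
    Submodule.topologicalClosure_eq_top_iff.2 hτ.orthogonal_ergodicSubmodule ▸ Submodule.mem_top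
  obtain ⟨k, hk, hdist⟩ := Metric.mem_closure_iff.1 hdense (κ / 2) (by positivity)
  have hsk : eLpNorm (⇑s - ⇑k) 1 P ≤ ENNReal.ofReal (κ / 2) := by
    calc eLpNorm (⇑s - ⇑k) 1 P ≤ eLpNorm (⇑s - ⇑k) 2 P :=
          eLpNorm_le_eLpNorm_of_exponent_le one_le_two
            (s.aestronglyMeasurable.sub (Lp.aestronglyMeasurable k))
      _ = edist (hs2.toLp s) k := by
          rw [Lp.edist_def]
          exact eLpNorm_congr_ae (hs2.coeFn_toLp.symm.sub .rfl)
      _ ≤ ENNReal.ofReal (κ / 2) := by rw [edist_dist]; exact ENNReal.ofReal_le_ofReal hdist.le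
  refine ⟨k, hk, ?_⟩
  have hfk : eLpNorm (f - ⇑k) 1 P ≤ ENNReal.ofReal κ := by
    calc eLpNorm (f - ⇑k) 1 P = eLpNorm ((f - ⇑s) + (⇑s - ⇑k)) 1 P := by rw [sub_add_sub_cancel]
      _ ≤ eLpNorm (f - ⇑s) 1 P + eLpNorm (⇑s - ⇑k) 1 P :=
          eLpNorm_add_le (hf.aestronglyMeasurable.sub s.aestronglyMeasurable)
            (s.aestronglyMeasurable.sub (Lp.aestronglyMeasurable k)) le_rfl
      _ ≤ ENNReal.ofReal (κ / 2) + ENNReal.ofReal (κ / 2) := add_le_add hs.le hsk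
      _ = ENNReal.ofReal κ := by
          rw [← ENNReal.ofReal_add (by positivity) (by positivity), add_halves]
  have hint := integral_norm_eq_lintegral_enorm
    (hf.aestronglyMeasurable.sub (Lp.aestronglyMeasurable k))
  rw [← eLpNorm_one_eq_lintegral_enorm] at hint
  exact hint.trans_le (ENNReal.toReal_le_of_le_ofReal hκ.le hfk)

/-- Wiener's multiparameter ergodic theorem, along the dilates of arbitrary boxes. -/
theorem IsErgodicAction.ae_hasErgodicLimit [IsProbabilityMeasure P] (hτ : IsErgodicAction P τ)
    (hf : Integrable f P) : ∀ᵐ ω ∂P, HasErgodicLimit P τ f ω := by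
  have hmk := hf.aestronglyMeasurable.ae_eq_mk
  refine hτ.ae_hasErgodicLimit_congr hmk.symm (hτ.ae_hasErgodicLimit_of_forall_approx
    hf.aestronglyMeasurable.stronglyMeasurable_mk.measurable (hf.congr hmk) fun κ hκ => ?_)
  obtain ⟨k, hk, hfk⟩ :=
    hτ.exists_mem_ergodicSubmodule_integral_abs_sub_le (hf.congr hmk) hκ
  exact ⟨k, (Lp.stronglyMeasurable k).measurable, (Lp.memLp k).integrable one_le_two, hk, hfk⟩

end ErgodicTheorem

/-! ### The subadditive lower bound -/

section LatticeCells

lemma toRd_mem_intBox {a b z : Zd d} : toRd z ∈ intBox a b ↔ ∀ i, a i ≤ z i ∧ z i < b i := by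
  simp only [intBox, Set.mem_ofPred_eq, toRd_apply, Int.cast_le, Int.cast_lt]

lemma isBounded_intBox (a b : Zd d) : Bornology.IsBounded (intBox a b) :=
  (isBounded_closedBox (fun i => a i) fun i => b i).subset fun _ hx i => ⟨(hx i).1, (hx i).2.le⟩

/-- The half-open cube of side length `k` whose smallest lattice point is `w`. -/
def cornerBox (w : Zd d) (k : ℕ) : Set (Rd d) :=
  intBox w fun i => w i + k

/-- The half-open cube whose lattice points are those of `latticeCube z T`. -/
def centeredBox (z : Zd d) (T : ℕ) : Set (Rd d) :=
  cornerBox (fun i => z i - T) (2 * T + 1)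

lemma isBounded_cornerBox (w : Zd d) (k : ℕ) : Bornology.IsBounded (cornerBox w k) :=
  isBounded_intBox _ _

lemma isBounded_centeredBox (z : Zd d) (T : ℕ) : Bornology.IsBounded (centeredBox z T) :=
  isBounded_cornerBox _ _

lemma mem_latticePoints_cornerBox {w z : Zd d} {k : ℕ} :
    z ∈ latticePoints (cornerBox w k) ↔ ∀ i, w i ≤ z i ∧ z i < w i + k := by
  rw [mem_latticePoints (isBounded_cornerBox w k), cornerBox, toRd_mem_intBox]

lemma latticePoints_centeredBox (z : Zd d) (T : ℕ) :
    latticePoints (centeredBox z T) = latticeCube z T := by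
  ext y
  rw [centeredBox, mem_latticePoints_cornerBox, mem_latticeCube]
  refine forall_congr' fun i => ?_
  rw [abs_le]
  push_cast
  constructor <;> rintro ⟨h₁, h₂⟩ <;> constructor <;> linarith

lemma mem_cornerBox_iff_sub_mem_cube {w : Zd d} {k : ℕ} {x : Rd d} :
    x ∈ cornerBox w k ↔ x - toRd w ∈ cube d k := by
  simp [cornerBox, intBox, cube, sub_lt_iff_lt_add']

lemma mem_centeredBox_iff_sub_mem {z : Zd d} {T : ℕ} {x : Rd d} :
    x ∈ centeredBox z T ↔ x - toRd z ∈ centeredBox 0 T := by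
  rw [centeredBox, centeredBox, mem_cornerBox_iff_sub_mem_cube, mem_cornerBox_iff_sub_mem_cube,
    sub_sub, ← toRd_add]
  refine iff_of_eq (congrArg (fun y => x - toRd y ∈ cube d (2 * T + 1)) ?_)
  funext i
  simp [sub_eq_add_neg]

lemma cornerBox_subset_centeredBox {w : Zd d} {k N : ℕ} (hk : 0 < k)
    (h : latticePoints (cornerBox w k) ⊆ latticeCube 0 N) :
    cornerBox w k ⊆ centeredBox 0 N := fun x hx i => by
  have : (1 : ℤ) ≤ k := by exact_mod_cast hk
  have hfirst : w ∈ latticeCube 0 N :=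
    h (mem_latticePoints_cornerBox.2 fun j => ⟨le_rfl, by linarith⟩)
  have hlast : (fun j => w j + (k - 1)) ∈ latticeCube 0 N :=
    h (mem_latticePoints_cornerBox.2 fun j => ⟨by linarith, by linarith⟩)
  have hlow : (-N : ℝ) ≤ w i := by exact_mod_cast (abs_le.1 (mem_latticeCube_zero.1 hfirst i)).1
  have hhigh : (w i : ℝ) + (k - 1) ≤ N := by
    exact_mod_cast (abs_le.1 (mem_latticeCube_zero.1 hlast i)).2
  have hxi := hx i
  push_cast [Pi.zero_apply] at hxi ⊢
  constructor <;> linarith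

/-- The residue class modulo `k` of a lattice point. The cubes `cornerBox w k`, with `w` in a fixed
residue class, tile the lattice. -/
def latticeResidue (k : ℕ) (w : Zd d) (i : Fin d) : ZMod k :=
  w i

lemma self_mem_latticePoints_cornerBox (w : Zd d) {k : ℕ} (hk : 0 < k) :
    w ∈ latticePoints (cornerBox w k) :=
  mem_latticePoints_cornerBox.2 fun i => ⟨le_rfl, by simpa using hk⟩

lemma exists_mem_latticePoints_cornerBox {k : ℕ} (hk : 0 < k) (o : Fin d → ZMod k) (z : Zd d) :
    ∃ w : Zd d, latticeResidue k w = o ∧ z ∈ latticePoints (cornerBox w k) := by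
  choose y hy using fun i => ZMod.intCast_surjective (o i)
  have hk' : (0 : ℤ) < k := by exact_mod_cast hk
  refine ⟨fun i => z i - (z i - y i) % k, ?_, mem_latticePoints_cornerBox.2 fun i => ?_⟩
  · funext i
    simp [latticeResidue, hy]
  · have := Int.emod_nonneg (z i - y i) hk'.ne'
    have := Int.emod_lt_of_pos (z i - y i) hk'
    constructor <;> linarith

lemma eq_of_mem_latticePoints_cornerBox {k : ℕ} {w w' z : Zd d}
    (hww' : latticeResidue k w = latticeResidue k w')
    (hz : z ∈ latticePoints (cornerBox w k)) (hz' : z ∈ latticePoints (cornerBox w' k)) :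
    w = w' := by
  funext i
  have hzi := mem_latticePoints_cornerBox.1 hz i
  have hzi' := mem_latticePoints_cornerBox.1 hz' i
  refine sub_eq_zero.1 (Int.eq_zero_of_abs_lt_dvd (m := k)
    ((ZMod.intCast_eq_intCast_iff_dvd_sub _ _ _).1 (congrFun hww'.symm i)) ?_)
  rw [abs_lt]
  constructor <;> linarith

lemma latticePoints_cornerBox_subset_latticeCube {w z : Zd d} {k : ℕ}
    (hz : z ∈ latticePoints (cornerBox w k)) :
    latticePoints (cornerBox w k) ⊆ latticeCube z k := fun y hy => by
  rw [mem_latticePoints_cornerBox] at hy hz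
  refine mem_latticeCube.2 fun i => abs_le.2 ?_
  have := hy i
  have := hz i
  constructor <;> linarith

end LatticeCells

section Tiling

variable {Ω : Type*} {τ : Zd d → Ω → Ω} {E0 : Finset (Zd d)} {V : Zd d → Ω → Rn n → ℝ}
  {ω : Ω} {k N : ℕ}

lemma mF_cornerBox (hτ : ∀ x y : Zd d, τ (x + y) = τ x ∘ τ y) (ω : Ω) (F : Rd d →L[ℝ] Rn n)
    (w : Zd d) (k : ℕ) :
    mF τ E0 V ω F (cornerBox w k) = mF τ E0 V (τ w ω) F (cube d k) :=
  mF_shift hτ ω F fun _ => mem_cornerBox_iff_sub_mem_cube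

lemma mF_centeredBox (hτ : ∀ x y : Zd d, τ (x + y) = τ x ∘ τ y) (ω : Ω) (F : Rd d →L[ℝ] Rn n)
    (z : Zd d) (T : ℕ) :
    mF τ E0 V ω F (centeredBox z T) = mF τ E0 V (τ z ω) F (centeredBox 0 T) :=
  mF_shift hτ ω F fun _ => mem_centeredBox_iff_sub_mem

/-- The minimal energy `m_F` of `[0,k)^d` per unit volume; its expectations have infimum `W₀(F)`. -/
def normalizedCellEnergy (τ : Zd d → Ω → Ω) (E0 : Finset (Zd d)) (V : Zd d → Ω → Rn n → ℝ)
    (F : Rd d →L[ℝ] Rn n) (k : ℕ) (ω : Ω) : ℝ :=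
  ((k : ℝ) ^ d)⁻¹ * mF τ E0 V ω F (cube d k)

lemma normalizedCellEnergy_nonneg (hV : ∀ b ∈ E0, ∀ ω r, 0 ≤ V b ω r) (F : Rd d →L[ℝ] Rn n)
    (k : ℕ) (ω : Ω) : 0 ≤ normalizedCellEnergy τ E0 V F k ω :=
  mul_nonneg (by positivity) (mF_nonneg hV ω F (isBounded_cube k))

/-- The points of `R` at which a cube of side length `k` contained in `R` can be placed. -/
def tileCorners (k : ℕ) (R : Finset (Zd d)) : Finset (Zd d) :=
  R.filter fun w => latticePoints (cornerBox w k) ⊆ R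

lemma sdiff_biUnion_tileCorners_subset (hk : 0 < k) (R : Finset (Zd d)) (o : Fin d → ZMod k) :
    R \ ((tileCorners k R).filter fun w => latticeResidue k w = o).biUnion
      (fun w => latticePoints (cornerBox w k)) ⊆ R.filter fun z => ¬ latticeCube z k ⊆ R := by
  intro z hz
  rw [Finset.mem_sdiff, Finset.mem_biUnion] at hz
  refine Finset.mem_filter.2 ⟨hz.1, fun hR => hz.2 ?_⟩
  obtain ⟨w, hwo, hzw⟩ := exists_mem_latticePoints_cornerBox hk o z
  have hsub := (latticePoints_cornerBox_subset_latticeCube hzw).trans hR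
  exact ⟨w, Finset.mem_filter.2 ⟨Finset.mem_filter.2
    ⟨hsub (self_mem_latticePoints_cornerBox w hk), hsub⟩, hwo⟩, hzw⟩

variable {ι : Type*} {s : Finset ι} {C : ι → Set (Rd d)} {R : Finset (Zd d)}

lemma pairwiseDisjoint_latticePoints_sumElim {t : Finset (Zd d)} {o : Fin d → ZMod k}
    (hdisj : (s : Set ι).PairwiseDisjoint fun i => latticePoints (C i))
    (hR : ∀ i ∈ s, Disjoint (latticePoints (C i)) R)
    (htR : ∀ w ∈ t, latticePoints (cornerBox w k) ⊆ R) (ht : ∀ w ∈ t, latticeResidue k w = o) :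
    (s.disjSum t : Set (ι ⊕ Zd d)).PairwiseDisjoint fun i =>
      latticePoints (Sum.elim C (fun w => cornerBox w k) i) := by
  rintro (i | w) h (j | w') h' hne
  · exact hdisj (Finset.inl_mem_disjSum.1 h) (Finset.inl_mem_disjSum.1 h')
      fun hij => hne (congrArg _ hij)
  · exact (hR i (Finset.inl_mem_disjSum.1 h)).mono_right (htR w' (Finset.inr_mem_disjSum.1 h'))
  · exact ((hR j (Finset.inl_mem_disjSum.1 h')).mono_right
      (htR w (Finset.inr_mem_disjSum.1 h))).symm
  · refine Finset.disjoint_left.2 fun z hz hz' => hne (congrArg _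
      (eq_of_mem_latticePoints_cornerBox ?_ hz hz'))
    exact (ht w (Finset.inr_mem_disjSum.1 h)).trans (ht w' (Finset.inr_mem_disjSum.1 h')).symm

lemma mF_centeredBox_le_sum_tileCorners_residue [NeZero d] (hV : ∀ b ∈ E0, ∀ ω r, 0 ≤ V b ω r)
    (ω : Ω) (F : Rd d →L[ℝ] Rn n) (hk : 0 < k) (hC : ∀ i ∈ s, C i ⊆ centeredBox 0 N)
    (hdisj : (s : Set ι).PairwiseDisjoint fun i => latticePoints (C i))
    (hR : R = latticeCube 0 N \ s.biUnion fun i => latticePoints (C i)) (o : Fin d → ZMod k) :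
    mF τ E0 V ω F (centeredBox 0 N) ≤ ∑ i ∈ s, mF τ E0 V ω F (C i) +
      ∑ w ∈ tileCorners k R with latticeResidue k w = o, mF τ E0 V ω F (cornerBox w k) +
        ∑ z ∈ R with ¬ latticeCube z k ⊆ R, affineEnergy E0 V F (τ z ω) := by
  set t := (tileCorners k R).filter fun w => latticeResidue k w = o
  have htR : ∀ w ∈ t, latticePoints (cornerBox w k) ⊆ R := fun w hw =>
    (Finset.mem_filter.1 (Finset.mem_filter.1 hw).1).2
  have hdisjR : ∀ i ∈ s, Disjoint (latticePoints (C i)) R := fun i hi => by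
    rw [hR]
    exact Finset.disjoint_sdiff.mono_left
      (Finset.subset_biUnion_of_mem (fun i => latticePoints (C i)) hi)
  have hbound := mF_le_sum_add_sum (τ := τ) hV ω F (isBounded_centeredBox 0 N)
    (s := s.disjSum t) (C := Sum.elim C fun w => cornerBox w k) ?_ ?_
  · rw [Finset.sum_disjSum, latticePoints_centeredBox] at hbound
    refine hbound.trans (add_le_add le_rfl (Finset.sum_le_sum_of_subset_of_nonneg (fun z hz => ?_)
      fun z _ _ => affineEnergy_nonneg hV F _))
    refine sdiff_biUnion_tileCorners_subset hk R o ?_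
    have hz' : ∀ i ∈ s.disjSum t, z ∉ latticePoints (Sum.elim C (fun w => cornerBox w k) i) :=
      fun i hi hzi => (Finset.mem_sdiff.1 hz).2 (Finset.mem_biUnion.2 ⟨i, hi, hzi⟩)
    rw [hR, sdiff_sdiff_left, ← hR, Finset.mem_sdiff, Finset.sup_eq_union, Finset.mem_union,
      Finset.mem_biUnion, Finset.mem_biUnion]
    refine ⟨(Finset.mem_sdiff.1 hz).1, ?_⟩
    rintro (⟨i, hi, hzi⟩ | ⟨w, hw, hzw⟩)
    · exact hz' (.inl i) (Finset.inl_mem_disjSum.2 hi) hzi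
    · exact hz' (.inr w) (Finset.inr_mem_disjSum.2 hw) hzw
  · rintro (i | w) h
    · exact hC i (Finset.inl_mem_disjSum.1 h)
    · exact cornerBox_subset_centeredBox hk
        ((htR w (Finset.inr_mem_disjSum.1 h)).trans (hR ▸ Finset.sdiff_subset))
  · exact pairwiseDisjoint_latticePoints_sumElim hdisj hdisjR htR
      fun w hw => (Finset.mem_filter.1 hw).2

/-- The tiling of `R` by cubes of side length `k` is averaged over its `k ^ d` positions. -/
theorem mF_centeredBox_le_sum_normalizedCellEnergy [NeZero d]
    (hV : ∀ b ∈ E0, ∀ ω r, 0 ≤ V b ω r) (hτ : ∀ x y : Zd d, τ (x + y) = τ x ∘ τ y) (ω : Ω)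
    (F : Rd d →L[ℝ] Rn n) (hk : 0 < k) (hC : ∀ i ∈ s, C i ⊆ centeredBox 0 N)
    (hdisj : (s : Set ι).PairwiseDisjoint fun i => latticePoints (C i))
    (hR : R = latticeCube 0 N \ s.biUnion fun i => latticePoints (C i)) :
    mF τ E0 V ω F (centeredBox 0 N) ≤ ∑ i ∈ s, mF τ E0 V ω F (C i) +
      ∑ z ∈ R, normalizedCellEnergy τ E0 V F k (τ z ω) +
        ∑ z ∈ R with ¬ latticeCube z k ⊆ R, affineEnergy E0 V F (τ z ω) := by
  have : NeZero k := ⟨hk.ne'⟩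
  have hkd : (0 : ℝ) < (k : ℝ) ^ d := by positivity
  have hcell : ∀ w, ((k : ℝ) ^ d)⁻¹ * mF τ E0 V ω F (cornerBox w k) =
      normalizedCellEnergy τ E0 V F k (τ w ω) := fun w => by
    rw [mF_cornerBox hτ, normalizedCellEnergy]
  have hsum := Finset.sum_le_sum fun (o : Fin d → ZMod k) (_ : o ∈ Finset.univ) =>
    mF_centeredBox_le_sum_tileCorners_residue (τ := τ) hV ω F hk hC hdisj hR o
  rw [Finset.sum_add_distrib, Finset.sum_add_distrib, Finset.sum_fiberwise] at hsum
  simp only [Finset.sum_const, Finset.card_univ, Fintype.card_fun, ZMod.card, Fintype.card_fin,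
    nsmul_eq_mul, Nat.cast_pow] at hsum
  have htiles : ((k : ℝ) ^ d)⁻¹ * ∑ w ∈ tileCorners k R, mF τ E0 V ω F (cornerBox w k) ≤
      ∑ z ∈ R, normalizedCellEnergy τ E0 V F k (τ z ω) := by
    simp only [Finset.mul_sum, hcell]
    exact Finset.sum_le_sum_of_subset_of_nonneg (Finset.filter_subset _ _) fun z _ _ =>
      normalizedCellEnergy_nonneg hV F k _
  have := mul_le_mul_of_nonneg_left hsum (inv_nonneg.2 hkd.le)
  rw [mul_add, mul_add] at this
  simp only [inv_mul_cancel_left₀ hkd.ne'] at this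
  linarith

/-- The lattice points within distance `k` of both `B` and its complement. -/
def boundaryLayer (k : ℕ) (B : Finset (Zd d)) : Finset (Zd d) :=
  (B + latticeCube 0 k).filter fun z => ¬ latticeCube z k ⊆ B

lemma mem_boundaryLayer {B : Finset (Zd d)} {z : Zd d} :
    z ∈ boundaryLayer k B ↔ (∃ y ∈ B, z ∈ latticeCube y k) ∧ ¬ latticeCube z k ⊆ B := by
  refine Finset.mem_filter.trans (and_congr_left fun _ => ?_)
  rw [Finset.mem_add]
  constructor
  · rintro ⟨y, hy, x, hx, rfl⟩
    exact ⟨y, hy, mem_latticeCube.2 fun i => by simpa using mem_latticeCube_zero.1 hx i⟩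
  · rintro ⟨y, hy, hz⟩
    exact ⟨y, hy, z - y, mem_latticeCube_zero.2 (mem_latticeCube.1 hz), add_sub_cancel _ _⟩

lemma mem_latticeCube_comm {y z : Zd d} : y ∈ latticeCube z k ↔ z ∈ latticeCube y k := by
  simp only [mem_latticeCube, abs_sub_comm]

lemma filter_not_latticeCube_subset_sdiff_subset {Q : Finset (Zd d)} {B : ι → Finset (Zd d)}
    (hR : R = Q \ s.biUnion B) :
    (R.filter fun z => ¬ latticeCube z k ⊆ R) ⊆
      boundaryLayer k Q ∪ s.biUnion fun i => boundaryLayer k (B i) := fun z hz => by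
  obtain ⟨hzR, hzk⟩ := Finset.mem_filter.1 hz
  obtain ⟨y, hyz, hyR⟩ := Finset.not_subset.1 hzk
  have hzz : z ∈ latticeCube z k := mem_latticeCube.2 fun i => by simp
  rw [hR, Finset.mem_sdiff, Finset.mem_biUnion] at hzR hyR
  simp only [Finset.mem_union, Finset.mem_biUnion, mem_boundaryLayer]
  by_cases hyQ : y ∈ Q
  · obtain ⟨i, hi, hyi⟩ := not_not.1 fun h => hyR ⟨hyQ, h⟩
    exact .inr ⟨i, hi, ⟨y, hyi, mem_latticeCube_comm.1 hyz⟩, fun h => hzR.2 ⟨i, hi, h hzz⟩⟩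
  · exact .inl ⟨⟨z, hzR.1, hzz⟩, fun h => hyQ (h hyz)⟩

lemma sum_union_biUnion_le {f : Zd d → ℝ} (hf : ∀ z, 0 ≤ f z) (Q : Finset (Zd d))
    (B : ι → Finset (Zd d)) :
    ∑ z ∈ Q ∪ s.biUnion B, f z ≤ ∑ z ∈ Q, f z + ∑ i ∈ s, ∑ z ∈ B i, f z := by
  induction s using Finset.induction_on with
  | empty => simp
  | insert i s hi ih =>
    rw [Finset.biUnion_insert, Finset.union_left_comm, Finset.sum_insert hi]
    have := Finset.sum_union_inter (s₁ := B i) (s₂ := Q ∪ s.biUnion B) (f := f)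
    have := Finset.sum_nonneg fun z (_ : z ∈ B i ∩ (Q ∪ s.biUnion B)) => hf z
    linarith

/-- By how much `m_F(A)`, up to a boundary term, falls short of the energy of a tiling of `A` by
cubes of side length `k`. It is superadditive up to boundary terms, see `sum_cellDefect_le`. -/
def cellDefect (τ : Zd d → Ω → Ω) (E0 : Finset (Zd d)) (V : Zd d → Ω → Rn n → ℝ)
    (F : Rd d →L[ℝ] Rn n) (k : ℕ) (ω : Ω) (A : Set (Rd d)) : ℝ :=
  ∑ z ∈ latticePoints A, normalizedCellEnergy τ E0 V F k (τ z ω) - mF τ E0 V ω F A -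
    ∑ z ∈ boundaryLayer k (latticePoints A), affineEnergy E0 V F (τ z ω)

theorem sum_cellDefect_le [NeZero d] (hV : ∀ b ∈ E0, ∀ ω r, 0 ≤ V b ω r)
    (hτ : ∀ x y : Zd d, τ (x + y) = τ x ∘ τ y) (ω : Ω) (F : Rd d →L[ℝ] Rn n) (hk : 0 < k)
    (hC : ∀ i ∈ s, C i ⊆ centeredBox 0 N)
    (hdisj : (s : Set ι).PairwiseDisjoint fun i => latticePoints (C i)) :
    ∑ i ∈ s, cellDefect τ E0 V F k ω (C i) ≤ cellDefect τ E0 V F k ω (centeredBox 0 N) +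
      2 * ∑ z ∈ boundaryLayer k (latticeCube 0 N), affineEnergy E0 V F (τ z ω) := by
  set R := latticeCube 0 N \ s.biUnion fun i => latticePoints (C i) with hR
  have hmain := mF_centeredBox_le_sum_normalizedCellEnergy hV hτ ω F hk hC hdisj hR
  have hlayer : ∑ z ∈ R with ¬ latticeCube z k ⊆ R, affineEnergy E0 V F (τ z ω) ≤
      ∑ z ∈ boundaryLayer k (latticeCube 0 N), affineEnergy E0 V F (τ z ω) +
        ∑ i ∈ s, ∑ z ∈ boundaryLayer k (latticePoints (C i)), affineEnergy E0 V F (τ z ω) :=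
    (Finset.sum_le_sum_of_subset_of_nonneg (filter_not_latticeCube_subset_sdiff_subset hR)
      fun z _ _ => affineEnergy_nonneg hV F _).trans
        (sum_union_biUnion_le (fun z => affineEnergy_nonneg hV F _) _ _)
  have hsub : (s.biUnion fun i => latticePoints (C i)) ⊆ latticeCube 0 N :=
    Finset.biUnion_subset.2 fun i hi z hz => by
      rw [← latticePoints_centeredBox, mem_latticePoints (isBounded_centeredBox 0 N)]
      exact hC i hi ((mem_latticePoints ((isBounded_centeredBox 0 N).subset (hC i hi))).1 hz)
  have hsplit : ∑ z ∈ latticeCube 0 N, normalizedCellEnergy τ E0 V F k (τ z ω) =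
      ∑ z ∈ R, normalizedCellEnergy τ E0 V F k (τ z ω) +
        ∑ i ∈ s, ∑ z ∈ latticePoints (C i), normalizedCellEnergy τ E0 V F k (τ z ω) := by
    rw [← Finset.sum_biUnion hdisj, Finset.sum_sdiff hsub]
  simp only [cellDefect, latticePoints_centeredBox, Finset.sum_sub_distrib]
  linarith

end Tiling

section LowerBound

lemma boundaryLayer_add_singleton (k : ℕ) (B : Finset (Zd d)) (w : Zd d) :
    boundaryLayer k (B + {w}) = boundaryLayer k B + {w} := by
  have hmem : ∀ {B : Finset (Zd d)} {z : Zd d}, z ∈ B + {w} ↔ z - w ∈ B := fun {B z} => by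
    simp [add_singleton_eq_image, sub_eq_add_neg]
  have hcube : ∀ y z : Zd d, z ∈ latticeCube y k ↔ z - w ∈ latticeCube (y - w) k := fun y z => by
    simp [mem_latticeCube]
  ext z
  rw [hmem, mem_boundaryLayer, mem_boundaryLayer]
  refine and_congr ⟨fun ⟨y, hy, hz⟩ => ⟨y - w, hmem.1 hy, (hcube _ _).1 hz⟩,
    fun ⟨y, hy, hz⟩ => ⟨y + w, hmem.2 (by simpa), (hcube _ _).2 (by simpa)⟩⟩ (not_congr ?_)
  exact ⟨fun h y hy => by simpa using hmem.1 (h ((hcube z (y + w)).2 (by simpa))),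
    fun h y hy => hmem.2 (h ((hcube z y).1 hy))⟩

lemma card_boundaryLayer_latticeCube_le {k N : ℕ} (h : k ≤ N) :
    ((boundaryLayer k (latticeCube (0 : Zd d) N)).card : ℝ) ≤
      (2 * (N : ℝ) + 1 + 2 * k) ^ d - (2 * (N : ℝ) + 1 + -(2 * k)) ^ d := by
  have hsub : boundaryLayer k (latticeCube (0 : Zd d) N) ⊆
      latticeCube 0 (N + k) \ latticeCube 0 (N - k) := fun z hz => by
    obtain ⟨⟨y, hy, hzy⟩, hzN⟩ := mem_boundaryLayer.1 hz
    exact Finset.mem_sdiff.2 ⟨mem_latticeCube_add hzy hy,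
      fun hzk => hzN (latticeCube_subset_latticeCube_zero h hzk)⟩
  have hcard := Finset.card_le_card hsub
  rw [Finset.card_sdiff_of_subset (latticeCube_mono 0 (by omega))] at hcard
  have hcard' := Nat.cast_le (α := ℝ).2 hcard
  rw [Nat.cast_sub (Finset.card_le_card (latticeCube_mono 0 (by omega))), card_latticeCube,
    card_latticeCube, Nat.cast_sub h] at hcard'
  refine hcard'.trans_eq ?_
  push_cast
  ring_nf

lemma eventually_card_boundaryLayer_latticeCube_le (d k : ℕ) {η : ℝ} (hη : 0 < η) :
    ∀ᶠ N : ℕ in atTop,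
      ((boundaryLayer k (latticeCube (0 : Zd d) N)).card : ℝ) ≤ η * (2 * (N : ℝ) + 1) ^ d := by
  have hlim := (tendsto_two_mul_add_one_add_pow_div d (2 * k)).sub
    (tendsto_two_mul_add_one_add_pow_div d (-(2 * k)))
  rw [sub_self] at hlim
  filter_upwards [hlim.eventually_le_const hη, eventually_ge_atTop k] with N hN hkN
  rw [← sub_div, div_le_iff₀ (by positivity)] at hN
  exact (card_boundaryLayer_latticeCube_le hkN).trans hN

variable {P : Measure Ω} {τ : Zd d → Ω → Ω} {E0 : Finset (Zd d)} {V : Zd d → Ω → Rn n → ℝ}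
  {F : Rd d →L[ℝ] Rn n} {k : ℕ}

lemma cellDefect_centeredBox {Ω : Type*} {τ : Zd d → Ω → Ω} {V : Zd d → Ω → Rn n → ℝ}
    (hτ : ∀ x y : Zd d, τ (x + y) = τ x ∘ τ y) (ω : Ω) (F : Rd d →L[ℝ] Rn n) (k : ℕ) (z : Zd d)
    (T : ℕ) :
    cellDefect τ E0 V F k ω (centeredBox z T) =
      cellDefect τ E0 V F k (τ z ω) (centeredBox 0 T) := by
  simp only [cellDefect, latticePoints_centeredBox, mF_centeredBox hτ ω F z,
    sum_comp_comp hτ, ← boundaryLayer_add_singleton, latticeCube_zero_add_singleton]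

lemma IsMeasurePreservingAction.integrable_normalizedCellEnergy
    (hτ : IsMeasurePreservingAction P τ) (hV : IsRandomPotential E0 V)
    (hF : Integrable (affineEnergy E0 V F) P) (k : ℕ) :
    Integrable (normalizedCellEnergy τ E0 V F k) P :=
  (hτ.integrable_mF hV hF (isBounded_cube k)).const_mul _

lemma IsMeasurePreservingAction.integrable_cellDefect (hτ : IsMeasurePreservingAction P τ)
    (hV : IsRandomPotential E0 V) (hF : Integrable (affineEnergy E0 V F) P) (k : ℕ)
    {A : Set (Rd d)} (hA : Bornology.IsBounded A) :
    Integrable (fun ω => cellDefect τ E0 V F k ω A) P :=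
  ((integrable_finsetSum _ fun z _ => hτ.integrable_comp
    (hτ.integrable_normalizedCellEnergy hV hF k) z).sub (hτ.integrable_mF hV hF hA)).sub
      (integrable_finsetSum _ fun z _ => hτ.integrable_comp hF z)

lemma IsMeasurePreservingAction.measurable_cellDefect (hτ : IsMeasurePreservingAction P τ)
    (hV : IsRandomPotential E0 V) (F : Rd d →L[ℝ] Rn n) (k : ℕ) {A : Set (Rd d)}
    (hA : Bornology.IsBounded A) : Measurable fun ω => cellDefect τ E0 V F k ω A := by
  have hτm : ∀ z, Measurable (τ z) := fun z => (hτ.measurePreserving z).measurable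
  exact ((Finset.measurable_fun_sum _ fun z _ =>
    ((hτ.measurable_mF hV F (isBounded_cube k)).const_mul _).comp (hτm z)).sub
      (hτ.measurable_mF hV F hA)).sub
        (Finset.measurable_fun_sum _ fun z _ => (hV.measurable_affineEnergy F).comp (hτm z))

/-- A random variable whose expectation exceeds that of `cellDefect` only by a boundary term, and
which dominates the sum of `cellDefect` over any packing of `centeredBox 0 N`. -/
def packingBound (τ : Zd d → Ω → Ω) (E0 : Finset (Zd d)) (V : Zd d → Ω → Rn n → ℝ)
    (F : Rd d →L[ℝ] Rn n) (k N : ℕ) (ω : Ω) : ℝ :=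
  cellDefect τ E0 V F k ω (centeredBox 0 N) +
    2 * ∑ z ∈ boundaryLayer k (latticeCube 0 N), affineEnergy E0 V F (τ z ω)

lemma W0_mul_pow_le_integral_mF_centeredBox (hτ : IsMeasurePreservingAction P τ)
    (hV : IsRandomPotential E0 V) (F : Rd d →L[ℝ] Rn n) (N : ℕ) :
    W0 P τ E0 V F * (2 * (N : ℝ) + 1) ^ d ≤ ∫ ω, mF τ E0 V ω F (centeredBox 0 N) ∂P := by
  have hW := W0_mul_pow_le (P := P) (τ := τ) hV.nonneg F (Nat.succ_pos (2 * N))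
  simp only [centeredBox, mF_cornerBox hτ.map_add]
  rw [hτ.integral_comp (f := fun ω => mF τ E0 V ω F (cube d (2 * N + 1)))
    (hτ.measurable_mF hV F (isBounded_cube _)).aestronglyMeasurable]
  exact_mod_cast hW

lemma IsMeasurePreservingAction.integral_packingBound (hτ : IsMeasurePreservingAction P τ)
    (hV : IsRandomPotential E0 V) (hF : Integrable (affineEnergy E0 V F) P) (k N : ℕ) :
    ∫ ω, packingBound τ E0 V F k N ω ∂P =
      (2 * (N : ℝ) + 1) ^ d * ∫ ω, normalizedCellEnergy τ E0 V F k ω ∂P -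
        ∫ ω, mF τ E0 V ω F (centeredBox 0 N) ∂P +
          (boundaryLayer k (latticeCube (0 : Zd d) N)).card * ∫ ω, affineEnergy E0 V F ω ∂P := by
  have hh := hτ.integrable_normalizedCellEnergy hV hF k
  have hsum : ∀ {f : Ω → ℝ}, Integrable f P → ∀ s : Finset (Zd d),
      Integrable (fun ω => ∑ z ∈ s, f (τ z ω)) P := fun hf s =>
    integrable_finsetSum _ fun z _ => hτ.integrable_comp hf z
  have hm := hτ.integrable_mF hV hF (isBounded_centeredBox 0 N)
  have hdiff : Integrable (fun ω => ∑ z ∈ latticeCube 0 N, normalizedCellEnergy τ E0 V F k (τ z ω) -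
      mF τ E0 V ω F (centeredBox 0 N)) P := (hsum hh _).sub hm
  have hpack : packingBound τ E0 V F k N = fun ω =>
      (∑ z ∈ latticeCube 0 N, normalizedCellEnergy τ E0 V F k (τ z ω) -
        mF τ E0 V ω F (centeredBox 0 N)) +
          ∑ z ∈ boundaryLayer k (latticeCube 0 N), affineEnergy E0 V F (τ z ω) := by
    funext ω
    rw [packingBound, cellDefect, latticePoints_centeredBox]
    ring
  rw [hpack, integral_add hdiff (hsum hF _), integral_sub (hsum hh _) hm,
    hτ.integral_sum_comp hh, hτ.integral_sum_comp hF, card_latticeCube]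

lemma IsMeasurePreservingAction.eventually_integral_packingBound_le
    (hτ : IsMeasurePreservingAction P τ) (hV : IsRandomPotential E0 V)
    (hF : Integrable (affineEnergy E0 V F) P) (k : ℕ) {η : ℝ} (hη : 0 < η) :
    ∀ᶠ N : ℕ in atTop, ∫ ω, packingBound τ E0 V F k N ω ∂P ≤
      (∫ ω, normalizedCellEnergy τ E0 V F k ω ∂P - W0 P τ E0 V F + η) * (2 * (N : ℝ) + 1) ^ d := by
  have hI : 0 ≤ ∫ ω, affineEnergy E0 V F ω ∂P :=
    integral_nonneg fun ω => affineEnergy_nonneg hV.nonneg F ω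
  filter_upwards [eventually_card_boundaryLayer_latticeCube_le d k
    (η := η / (∫ ω, affineEnergy E0 V F ω ∂P + 1)) (by positivity)] with N hN
  have hlayer : (boundaryLayer k (latticeCube (0 : Zd d) N)).card * ∫ ω, affineEnergy E0 V F ω ∂P ≤
      η * (2 * (N : ℝ) + 1) ^ d :=
    calc _ ≤ η / (∫ ω, affineEnergy E0 V F ω ∂P + 1) * (2 * (N : ℝ) + 1) ^ d *
          (∫ ω, affineEnergy E0 V F ω ∂P + 1) := by gcongr; linarith
      _ = η * (2 * (N : ℝ) + 1) ^ d := by field_simp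
  have := W0_mul_pow_le_integral_mF_centeredBox hτ hV F N
  rw [hτ.integral_packingBound hV hF]
  linarith

theorem IsMeasurePreservingAction.measureReal_exists_mul_pow_lt_cellDefect_le [NeZero d]
    [IsFiniteMeasure P] (hτ : IsMeasurePreservingAction P τ) (hV : IsRandomPotential E0 V)
    (hF : Integrable (affineEnergy E0 V F) P) (hk : 0 < k) {δ : ℝ} (hδ : 0 < δ) :
    P.real {ω | ∃ T : ℕ, δ * (2 * (T : ℝ) + 1) ^ d < cellDefect τ E0 V F k ω (centeredBox 0 T)} ≤
      5 ^ d / δ * (∫ ω, normalizedCellEnergy τ E0 V F k ω ∂P - W0 P τ E0 V F) := by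
  refine hτ.measureReal_exists_mul_pow_lt_le (S := packingBound τ E0 V F k)
    (fun T => hτ.measurable_cellDefect hV F k (isBounded_centeredBox 0 T))
    (fun N => (hτ.integrable_cellDefect hV hF k (isBounded_centeredBox 0 N)).add
      ((integrable_finsetSum _ fun z _ => hτ.integrable_comp hF z).const_mul _)) hδ
    (fun ω N s r hsub hdisj => ?_)
    fun η hη => hτ.eventually_integral_packingBound_le hV hF k hη
  simp only [← cellDefect_centeredBox hτ.map_add]
  refine sum_cellDefect_le hV.nonneg hτ.map_add ω F hk (fun z hz => ?_)
    (by simpa only [latticePoints_centeredBox] using hdisj)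
  refine cornerBox_subset_centeredBox (Nat.succ_pos _) ?_
  change latticePoints (centeredBox z (r z)) ⊆ _
  exact (latticePoints_centeredBox z (r z)).trans_subset (hsub z hz)

lemma exists_integral_normalizedCellEnergy_lt (P : Measure Ω) (τ : Zd d → Ω → Ω)
    (E0 : Finset (Zd d)) (V : Zd d → Ω → Rn n → ℝ) (F : Rd d →L[ℝ] Rn n) {κ : ℝ} (hκ : 0 < κ) :
    ∃ k, 0 < k ∧ ∫ ω, normalizedCellEnergy τ E0 V F k ω ∂P < W0 P τ E0 V F + κ := by
  have : Nonempty {k : ℕ // 0 < k} := ⟨⟨1, one_pos⟩⟩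
  obtain ⟨k, hk⟩ := exists_lt_of_ciInf_lt (lt_add_of_pos_right (W0 P τ E0 V F) hκ)
  exact ⟨k, k.2, by simpa only [normalizedCellEnergy, integral_const_mul] using hk⟩

lemma W0_le_integral_normalizedCellEnergy (hV : ∀ b ∈ E0, ∀ ω r, 0 ≤ V b ω r)
    (F : Rd d →L[ℝ] Rn n) (hk : 0 < k) :
    W0 P τ E0 V F ≤ ∫ ω, normalizedCellEnergy τ E0 V F k ω ∂P := by
  simp only [normalizedCellEnergy, integral_const_mul]
  rw [inv_mul_eq_div, le_div_iff₀ (by positivity)]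
  exact W0_mul_pow_le hV F hk

lemma IsMeasurePreservingAction.ae_exists_cellDefect_le [NeZero d] [IsFiniteMeasure P]
    (hτ : IsMeasurePreservingAction P τ) (hV : IsRandomPotential E0 V)
    (hF : Integrable (affineEnergy E0 V F) P) {δ : ℝ} (hδ : 0 < δ) :
    ∀ᵐ ω ∂P, ∃ k, 0 < k ∧
      ∀ T : ℕ, cellDefect τ E0 V F k ω (centeredBox 0 T) ≤ δ * (2 * (T : ℝ) + 1) ^ d := by
  rw [ae_iff, ← measureReal_eq_zero_iff]
  refine le_antisymm (le_of_forall_pos_le_add fun θ hθ => ?_) measureReal_nonneg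
  obtain ⟨k, hk, hkW⟩ :=
    exists_integral_normalizedCellEnergy_lt P τ E0 V F (κ := θ * δ / 5 ^ d) (by positivity)
  calc _ ≤ P.real {ω | ∃ T : ℕ,
        δ * (2 * (T : ℝ) + 1) ^ d < cellDefect τ E0 V F k ω (centeredBox 0 T)} := by
        refine measureReal_mono fun ω hbad => ?_
        by_contra hT
        exact hbad ⟨k, hk, fun T => not_lt.1 fun h => hT ⟨T, h⟩⟩
    _ ≤ 5 ^ d / δ * (θ * δ / 5 ^ d) :=
        (hτ.measureReal_exists_mul_pow_lt_cellDefect_le hV hF hk hδ).trans (by gcongr; linarith)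
    _ = 0 + θ := by field_simp; ring

lemma mem_latticeBox_of_mem_latticeCube {ε σ : ℝ} {lo hi : Fin d → ℝ} {y z : Zd d} (hε : 0 < ε)
    (hk : ε * k ≤ σ) (hy : y ∈ latticeBox ε lo hi) (hz : z ∈ latticeCube y k) :
    z ∈ latticeBox ε (fun i => lo i - σ) (fun i => hi i + σ) := by
  rw [← add_sub_cancel y z]
  refine add_mem_latticeBox hε (fun i => le_trans ?_ hk) hy
  gcongr
  exact_mod_cast mem_latticeCube.1 hz i

lemma HasErgodicLimit.eventually_pow_mul_sum_boundaryLayer_lt {f : Ω → ℝ} {ω : Ω}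
    (hf : HasErgodicLimit P τ f ω) (hf0 : ∀ ω, 0 ≤ f ω) (k : ℕ) {lo hi : Fin d → ℝ}
    (h : ∀ i, lo i < hi i) {B : ℝ → Finset (Zd d)}
    (hlower : ∀ᶠ ε in 𝓝[>] 0, latticeBox ε lo hi ⊆ B ε)
    (hupper : ∀ σ > 0, ∀ᶠ ε in 𝓝[>] 0,
      B ε ⊆ latticeBox ε (fun i => lo i - σ) (fun i => hi i + σ))
    {η : ℝ} (hη : 0 < η) :
    ∀ᶠ ε in 𝓝[>] 0, ε ^ d * ∑ z ∈ boundaryLayer k (B ε), f (τ z ω) < η := by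
  obtain ⟨σ, hσ, -, hshell⟩ := hf.exists_shell_lt h hη
  have hsmall : ∀ᶠ ε : ℝ in 𝓝[>] 0, ε < σ / 2 / (k + 1) := by
    filter_upwards [Ioo_mem_nhdsGT (show 0 < σ / 2 / ((k : ℝ) + 1) by positivity)] with ε hε
      using hε.2
  filter_upwards [hshell, hlower, hupper (σ / 2) (half_pos hσ), hsmall, self_mem_nhdsWithin]
    with ε hε hlo hup hεk (hε0 : 0 < ε)
  rw [lt_div_iff₀ (by positivity)] at hεk
  have hkσ : ε * k ≤ σ / 2 := by linarith
  have hsub : boundaryLayer k (B ε) ⊆ latticeBox ε (fun i => lo i - σ) (fun i => hi i + σ) \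
      latticeBox ε (fun i => lo i + σ) (fun i => hi i - σ) := fun z hz => by
    obtain ⟨⟨y, hy, hzy⟩, hzB⟩ := mem_boundaryLayer.1 hz
    refine Finset.mem_sdiff.2 ⟨?_, fun hzin => hzB fun x hx => hlo ?_⟩
    · simpa only [sub_sub, add_assoc, add_halves] using
        mem_latticeBox_of_mem_latticeCube hε0 hkσ (hup hy) hzy
    · simpa only [sub_add_cancel, add_sub_cancel_right] using
        mem_latticeBox_of_mem_latticeCube hε0 (hkσ.trans (half_le_self hσ.le)) hzin hx
  have hinner := latticeBox_subset_latticeBox (lo := fun i => lo i + σ) (hi := fun i => hi i - σ)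
    (lo' := fun i => lo i - σ) (hi' := fun i => hi i + σ) hε0 (fun i => by linarith)
    fun i => by linarith
  refine lt_of_le_of_lt ?_ hε
  rw [boxAverage, boxAverage, ← mul_sub, ← Finset.sum_sdiff hinner, add_sub_cancel_right]
  exact mul_le_mul_of_nonneg_left
    (Finset.sum_le_sum_of_subset_of_nonneg hsub fun z _ _ => hf0 _) (by positivity)

lemma HasErgodicLimit.eventually_pow_mul_sum_boundaryLayer_latticeBox_lt {f : Ω → ℝ} {ω : Ω}
    (hf : HasErgodicLimit P τ f ω) (hf0 : ∀ ω, 0 ≤ f ω) (k : ℕ) {lo hi : Fin d → ℝ}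
    (h : ∀ i, lo i < hi i) {η : ℝ} (hη : 0 < η) :
    ∀ᶠ ε in 𝓝[>] 0, ε ^ d * ∑ z ∈ boundaryLayer k (latticeBox ε lo hi), f (τ z ω) < η := by
  refine hf.eventually_pow_mul_sum_boundaryLayer_lt hf0 k h
    (Eventually.of_forall fun _ => subset_rfl) (fun σ hσ => ?_) hη
  filter_upwards [self_mem_nhdsWithin] with ε (hε : 0 < ε)
  exact latticeBox_subset_latticeBox hε (fun i => by linarith) fun i => by linarith

lemma HasErgodicLimit.eventually_pow_mul_sum_boundaryLayer_latticeCube_lt {f : Ω → ℝ} {ω : Ω}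
    (hf : HasErgodicLimit P τ f ω) (hf0 : ∀ ω, 0 ≤ f ω) (k : ℕ) {K : ℝ} (hK : 0 < K) {η : ℝ}
    (hη : 0 < η) :
    ∀ᶠ ε in 𝓝[>] 0, ε ^ d * ∑ z ∈ boundaryLayer k (latticeCube 0 ⌈K / ε⌉₊), f (τ z ω) < η := by
  refine hf.eventually_pow_mul_sum_boundaryLayer_lt hf0 k (lo := fun _ => -K) (hi := fun _ => K)
    (fun _ => by linarith) ?_ (fun σ hσ => ?_) hη
  · filter_upwards [self_mem_nhdsWithin] with ε (hε : 0 < ε)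
    refine latticeBox_subset_latticeCube hε fun x hx i => ?_
    have hxi : -K < ε * x i ∧ ε * x i < K := hx i
    have habs : |ε * x i| ≤ K := abs_le.2 ⟨hxi.1.le, hxi.2.le⟩
    rwa [abs_mul, abs_of_pos hε, mul_comm, ← le_div_iff₀ hε] at habs
  · filter_upwards [Ioo_mem_nhdsGT hσ] with ε hε z hz
    refine (mem_latticeBox hε.1).2 fun i => ?_
    have hzi : |(z i : ℝ)| ≤ ⌈K / ε⌉₊ := by exact_mod_cast mem_latticeCube_zero.1 hz i
    have hlt : |ε * (z i : ℝ)| < K + σ :=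
      calc |ε * (z i : ℝ)| = ε * |(z i : ℝ)| := by rw [abs_mul, abs_of_pos hε.1]
        _ < ε * (K / ε + 1) := mul_lt_mul_of_pos_left
            (hzi.trans_lt (Nat.ceil_lt_add_one (div_nonneg hK.le hε.1.le))) hε.1
        _ = K + ε := by rw [mul_add, mul_div_cancel₀ _ hε.1.ne', mul_one]
        _ < K + σ := by linarith [hε.2]
    exact ⟨by linarith [(abs_lt.1 hlt).1], (abs_lt.1 hlt).2⟩

lemma rescaledBox_subset_centeredBox {ε K : ℝ} {lo hi : Fin d → ℝ}
    (hK : ∀ x ∈ rescaledBox ε lo hi, ∀ i, |x i| ≤ K / ε) :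
    rescaledBox ε lo hi ⊆ centeredBox 0 ⌈K / ε⌉₊ := fun x hx i => by
  have hxi := abs_le.1 ((hK x hx i).trans (Nat.le_ceil _))
  push_cast [Pi.zero_apply]
  constructor <;> linarith

lemma isBounded_rescaledBox {ε : ℝ} (hε : 0 < ε) (lo hi : Fin d → ℝ) :
    Bornology.IsBounded (rescaledBox ε lo hi) := by
  obtain ⟨K, -, hK⟩ := exists_forall_mem_rescaledBox_abs_le lo hi
  exact (isBounded_centeredBox 0 _).subset (rescaledBox_subset_centeredBox (hK ε hε))

lemma latticePoints_rescaledBox {ε : ℝ} (hε : 0 < ε) (lo hi : Fin d → ℝ) :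
    latticePoints (rescaledBox ε lo hi) = latticeBox ε lo hi := by
  ext z
  rw [mem_latticePoints (isBounded_rescaledBox hε lo hi), mem_latticeBox_iff_mem_rescaledBox hε]

lemma sum_latticeBox_le_mF_rescaledBox_add {Ω : Type*} {τ : Zd d → Ω → Ω}
    {V : Zd d → Ω → Rn n → ℝ} [NeZero d] (hV : ∀ b ∈ E0, ∀ ω r, 0 ≤ V b ω r)
    (hτ : ∀ x y : Zd d, τ (x + y) = τ x ∘ τ y) {ω : Ω} {F : Rd d →L[ℝ] Rn n} (hk : 0 < k)
    {ε K δ : ℝ} (hε : 0 < ε) {lo hi : Fin d → ℝ}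
    (hK : ∀ x ∈ rescaledBox ε lo hi, ∀ i, |x i| ≤ K / ε)
    (hdefect : ∀ T : ℕ, cellDefect τ E0 V F k ω (centeredBox 0 T) ≤ δ * (2 * (T : ℝ) + 1) ^ d) :
    ∑ z ∈ latticeBox ε lo hi, normalizedCellEnergy τ E0 V F k (τ z ω) ≤
      mF τ E0 V ω F (rescaledBox ε lo hi) + δ * (2 * (⌈K / ε⌉₊ : ℝ) + 1) ^ d +
        ∑ z ∈ boundaryLayer k (latticeBox ε lo hi), affineEnergy E0 V F (τ z ω) +
          2 * ∑ z ∈ boundaryLayer k (latticeCube 0 ⌈K / ε⌉₊), affineEnergy E0 V F (τ z ω) := by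
  have hbox := sum_cellDefect_le hV hτ ω F hk (s := {()}) (C := fun _ => rescaledBox ε lo hi)
    (fun _ _ => rescaledBox_subset_centeredBox hK) (by simp)
  rw [Finset.sum_singleton, cellDefect, latticePoints_rescaledBox hε] at hbox
  linarith [hdefect ⌈K / ε⌉₊]

lemma eventually_le_pow_mul_mF_rescaledBox [NeZero d] (hV : ∀ b ∈ E0, ∀ ω r, 0 ≤ V b ω r)
    (hτ : ∀ x y : Zd d, τ (x + y) = τ x ∘ τ y) {ω : Ω} {F : Rd d →L[ℝ] Rn n} (hk : 0 < k)
    {K δ η : ℝ} (hK0 : 0 < K) (hδ : 0 ≤ δ) (hη : 0 < η) {lo hi : Fin d → ℝ}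
    (h : ∀ i, lo i < hi i)
    (hK : ∀ ε > 0, ∀ x ∈ rescaledBox ε lo hi, ∀ i, |x i| ≤ K / ε)
    (hdefect : ∀ T : ℕ, cellDefect τ E0 V F k ω (centeredBox 0 T) ≤ δ * (2 * (T : ℝ) + 1) ^ d)
    (hcell : HasErgodicLimit P τ (normalizedCellEnergy τ E0 V F k) ω)
    (haffine : HasErgodicLimit P τ (affineEnergy E0 V F) ω) :
    ∀ᶠ ε in 𝓝[>] 0, (∏ i, (hi i - lo i)) * W0 P τ E0 V F - δ * (2 * K + 3) ^ d - η ≤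
      ε ^ d * mF τ E0 V ω F (rescaledBox ε lo hi) := by
  have hvol : 0 ≤ ∏ i, (hi i - lo i) := Finset.prod_nonneg fun i _ => sub_nonneg.2 (h i).le
  have hnonneg := affineEnergy_nonneg hV F
  filter_upwards [self_mem_nhdsWithin, Ioo_mem_nhdsGT one_pos,
    (hcell lo hi h).eventually_const_lt (sub_lt_self _ (show 0 < η / 4 by positivity)),
    haffine.eventually_pow_mul_sum_boundaryLayer_latticeBox_lt hnonneg k h
      (show 0 < η / 4 by positivity),
    haffine.eventually_pow_mul_sum_boundaryLayer_latticeCube_lt hnonneg k hK0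
      (show 0 < η / 4 by positivity)] with ε (hε : 0 < ε) hε1 haverage hbox hcube
  have hsum := mul_le_mul_of_nonneg_left
    (sum_latticeBox_le_mF_rescaledBox_add hV hτ hk hε (hK ε hε) hdefect) (pow_nonneg hε.le d)
  have hpow : ε ^ d * (2 * (⌈K / ε⌉₊ : ℝ) + 1) ^ d ≤ (2 * K + 3) ^ d := by
    rw [← mul_pow]
    gcongr
    exact mul_two_mul_ceil_add_one_le hK0.le hε hε1.2.le
  have hW := mul_le_mul_of_nonneg_left
    (W0_le_integral_normalizedCellEnergy (P := P) (τ := τ) hV F hk) hvol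
  have hδpow := mul_le_mul_of_nonneg_left hpow hδ
  rw [boxAverage] at haverage
  linarith

theorem IsErgodicAction.ae_eventually_le_pow_mul_mF_rescaledBox [NeZero d]
    [IsProbabilityMeasure P] (hτ : IsErgodicAction P τ) (hV : IsRandomPotential E0 V)
    {F : Rd d →L[ℝ] Rn n} (hF : Integrable (affineEnergy E0 V F) P) :
    ∀ᵐ ω ∂P, ∀ lo hi : Fin d → ℝ, (∀ i, lo i < hi i) → ∀ δ > 0, ∀ᶠ ε in 𝓝[>] 0,
      (∏ i, (hi i - lo i)) * W0 P τ E0 V F - δ ≤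
        ε ^ d * mF τ E0 V ω F (rescaledBox ε lo hi) := by
  have hμ := hτ.toIsMeasurePreservingAction
  filter_upwards [hτ.ae_hasErgodicLimit hF,
    ae_all_iff.2 fun k => hτ.ae_hasErgodicLimit (hμ.integrable_normalizedCellEnergy hV hF k),
    ae_all_iff.2 fun m : ℕ => hμ.ae_exists_cellDefect_le hV hF (Nat.one_div_pos_of_nat (n := m))]
    with ω haffine hcell hdefect lo hi h δ hδ
  obtain ⟨K, hK0, hK⟩ := exists_forall_mem_rescaledBox_abs_le lo hi
  obtain ⟨m, hm⟩ := exists_nat_one_div_lt (show 0 < δ / 2 / (2 * (K : ℝ) + 3) ^ d by positivity)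
  obtain ⟨k, hk, hkdefect⟩ := hdefect m
  rw [lt_div_iff₀ (by positivity)] at hm
  filter_upwards [eventually_le_pow_mul_mF_rescaledBox hV.nonneg hμ.map_add hk
    (Nat.cast_pos.2 hK0) (by positivity) (half_pos hδ) h hK hkdefect (hcell k) haffine] with ε hε
  linarith

end LowerBound

/-! ### Truncation and localisation of competitors -/

section Truncation

/-- The piecewise linear function that rises from `0` at `0` to `1` at `1`. -/
def ramp (s : ℝ) : ℝ :=
  projIcc (0 : ℝ) 1 zero_le_one s

lemma ramp_nonneg (s : ℝ) : 0 ≤ ramp s :=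
  (projIcc (0 : ℝ) 1 zero_le_one s).2.1

lemma ramp_le_one (s : ℝ) : ramp s ≤ 1 :=
  (projIcc (0 : ℝ) 1 zero_le_one s).2.2

lemma ramp_of_nonpos {s : ℝ} (h : s ≤ 0) : ramp s = 0 :=
  congrArg Subtype.val (projIcc_of_le_left zero_le_one h)

lemma ramp_of_one_le {s : ℝ} (h : 1 ≤ s) : ramp s = 1 :=
  congrArg Subtype.val (projIcc_of_right_le zero_le_one h)

lemma abs_ramp_sub_ramp_le (s t : ℝ) : |ramp s - ramp t| ≤ |s - t| := by
  simpa [Real.dist_eq, Subtype.dist_eq, ramp] using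
    (LipschitzWith.projIcc (zero_le_one' ℝ)).dist_le_mul s t

variable {E : Type*} [SeminormedAddCommGroup E] [NormedSpace ℝ E] {t L ρ ρ' : ℝ} {y y' : E}

lemma norm_ramp_smul_le (s : ℝ) (y : E) : ‖ramp s • y‖ ≤ ‖y‖ := by
  rw [norm_smul, Real.norm_of_nonneg (ramp_nonneg s)]
  exact mul_le_of_le_one_left (norm_nonneg y) (ramp_le_one s)

/-- The truncation which is the identity on the ball of radius `t` and vanishes outside the ball
of radius `2 * t`. -/
def softTruncation (t : ℝ) (y : E) : E :=
  ramp (2 - ‖y‖ / t) • y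

lemma softTruncation_of_norm_le (ht : 0 < t) (h : ‖y‖ ≤ t) : softTruncation t y = y := by
  have : ‖y‖ / t ≤ 1 := (div_le_one ht).2 h
  rw [softTruncation, ramp_of_one_le (by linarith), one_smul]

lemma softTruncation_of_le_norm (ht : 0 < t) (h : 2 * t ≤ ‖y‖) : softTruncation t y = 0 := by
  have : 2 ≤ ‖y‖ / t := (le_div_iff₀ ht).2 h
  rw [softTruncation, ramp_of_nonpos (by linarith), zero_smul]

lemma norm_softTruncation_le (ht : 0 < t) (y : E) : ‖softTruncation t y‖ ≤ 2 * t := by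
  rcases le_total (2 * t) ‖y‖ with h | h
  · rw [softTruncation_of_le_norm ht h, norm_zero]
    positivity
  · exact (norm_ramp_smul_le _ y).trans h

lemma norm_softTruncation_sub_le (ht : 0 < t) (y y' : E) :
    ‖softTruncation t y' - softTruncation t y‖ ≤ 3 * ‖y' - y‖ := by
  wlog h : ‖y‖ ≤ ‖y'‖ generalizing y y'
  · rw [norm_sub_rev, norm_sub_rev y']
    exact this y' y (le_of_not_ge h)
  rcases le_total (2 * t) ‖y‖ with hy | hy
  · rw [softTruncation_of_le_norm ht hy, softTruncation_of_le_norm ht (hy.trans h), sub_self,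
      norm_zero]
    positivity
  have hramp : |ramp (2 - ‖y'‖ / t) - ramp (2 - ‖y‖ / t)| ≤ ‖y' - y‖ / t := by
    refine (abs_ramp_sub_ramp_le _ _).trans ?_
    rw [sub_sub_sub_cancel_left, ← sub_div, abs_div, abs_of_pos ht, norm_sub_rev]
    gcongr
    exact abs_norm_sub_norm_le y y'
  calc ‖softTruncation t y' - softTruncation t y‖
      = ‖ramp (2 - ‖y'‖ / t) • (y' - y) +
          (ramp (2 - ‖y'‖ / t) - ramp (2 - ‖y‖ / t)) • y‖ := by
        rw [smul_sub, sub_smul, sub_add_sub_cancel]; rfl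
    _ ≤ ‖y' - y‖ + ‖y' - y‖ / t * (2 * t) := by
        refine (norm_add_le _ _).trans (add_le_add (norm_ramp_smul_le _ _) ?_)
        rw [norm_smul, Real.norm_eq_abs]
        gcongr
    _ = 3 * ‖y' - y‖ := by field_simp; ring

lemma norm_softTruncation_sub_le_mul_div (ht : 0 < t) (h : t < max ‖y‖ ‖y'‖) :
    ‖softTruncation t y' - softTruncation t y‖ ≤ 12 * ‖y' - y‖ * (t / max ‖y‖ ‖y'‖) := by
  wlog hle : ‖y‖ ≤ ‖y'‖ generalizing y y'
  · rw [norm_sub_rev, norm_sub_rev y', max_comm]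
    exact this (by rwa [max_comm]) (le_of_not_ge hle)
  rw [max_eq_right hle] at h ⊢
  have hpos : 0 < ‖y'‖ := ht.trans h
  rcases le_or_gt ‖y'‖ (4 * t) with h4 | h4
  · have hratio : 1 / 4 ≤ t / ‖y'‖ := by rw [le_div_iff₀ hpos]; linarith
    calc _ ≤ 3 * ‖y' - y‖ := norm_softTruncation_sub_le ht y y'
      _ = 12 * ‖y' - y‖ * (1 / 4) := by ring
      _ ≤ 12 * ‖y' - y‖ * (t / ‖y'‖) := by gcongr
  rw [softTruncation_of_le_norm (y := y') ht (by linarith), zero_sub, norm_neg]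
  rcases le_or_gt (‖y'‖ / 2) ‖y‖ with h2 | h2
  · rw [softTruncation_of_le_norm ht (by linarith), norm_zero]
    positivity
  have hfar : ‖y'‖ / 2 ≤ ‖y' - y‖ := by linarith [norm_sub_norm_le y' y]
  calc _ ≤ 2 * t := norm_softTruncation_le ht y
    _ ≤ 6 * t := by linarith
    _ = 12 * (‖y'‖ / 2) * (t / ‖y'‖) := by field_simp; ring
    _ ≤ 12 * ‖y' - y‖ * (t / ‖y'‖) := by gcongr

/-- The value `y`, truncated at level `t` and cut off across the `j`-th layer of width `L`, at a
point at distance `ρ` from the boundary. -/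
def localized (t L : ℝ) (j : ℕ) (ρ : ℝ) (y : E) : E :=
  ramp (ρ / L - (j + 1)) • softTruncation t y

lemma localized_of_le (hL : 0 < L) {j : ℕ} (h : ρ ≤ (j + 1) * L) : localized t L j ρ y = 0 := by
  rw [localized, ramp_of_nonpos (sub_nonpos.2 ((div_le_iff₀ hL).2 h)), zero_smul]

lemma localized_of_ge (hL : 0 < L) {j : ℕ} (h : (j + 2) * L ≤ ρ) :
    localized t L j ρ y = softTruncation t y := by
  have : (j : ℝ) + 2 ≤ ρ / L := (le_div_iff₀ hL).2 h
  rw [localized, ramp_of_one_le (by linarith), one_smul]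

lemma norm_localized_sub_le (ht : 0 < t) (htL : 2 * t ≤ L) (j : ℕ) :
    ‖localized t L j ρ' y' - localized t L j ρ y‖ ≤ |ρ' - ρ| + 3 * ‖y' - y‖ := by
  have hL : 0 < L := lt_of_lt_of_le (by positivity) htL
  have hramp : |ramp (ρ' / L - (j + 1)) - ramp (ρ / L - (j + 1))| ≤ |ρ' - ρ| / L := by
    refine (abs_ramp_sub_ramp_le _ _).trans_eq ?_
    rw [sub_sub_sub_cancel_right, ← sub_div, abs_div, abs_of_pos hL]
  calc ‖localized t L j ρ' y' - localized t L j ρ y‖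
      = ‖(ramp (ρ' / L - (j + 1)) - ramp (ρ / L - (j + 1))) • softTruncation t y +
          ramp (ρ' / L - (j + 1)) • (softTruncation t y' - softTruncation t y)‖ := by
        rw [localized, localized, smul_sub, sub_smul, sub_add_sub_comm, add_comm, add_sub_add_comm]
        simp
    _ ≤ |ρ' - ρ| / L * L + 3 * ‖y' - y‖ := by
        refine (norm_add_le _ _).trans (add_le_add ?_ ?_)
        · rw [norm_smul, Real.norm_eq_abs]
          gcongr
          exact (norm_softTruncation_le ht y).trans htL
        · exact (norm_ramp_smul_le _ _).trans (norm_softTruncation_sub_le ht y y')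
    _ = |ρ' - ρ| + 3 * ‖y' - y‖ := by field_simp

/-- Detects whether a point at distance `x` from the boundary, in units of the layer width, is
close to the `j`-th layer. -/
def layerWeight (x : ℝ) (j : ℕ) : ℝ :=
  if (j : ℝ) < x ∧ x < j + 3 then 1 else 0

/-- The factor by which the truncation at level `t` compresses increments between values of
maximal norm `M`, or `0` if it leaves the values unchanged. -/
def truncationWeight (t M : ℝ) : ℝ :=
  if t < M then t / M else 0

lemma layerWeight_nonneg (x : ℝ) (j : ℕ) : 0 ≤ layerWeight x j := by
  rw [layerWeight]; split_ifs <;> norm_num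

lemma truncationWeight_nonneg (ht : 0 < t) (M : ℝ) : 0 ≤ truncationWeight t M := by
  rw [truncationWeight]; split_ifs with h
  · exact div_nonneg ht.le (ht.trans h).le
  · exact le_rfl

lemma sum_layerWeight_le (x : ℝ) (J : ℕ) : ∑ j ∈ Finset.range J, layerWeight x j ≤ 3 := by
  have hsub : (Finset.range J).filter (fun j : ℕ => (j : ℝ) < x ∧ x < j + 3) ⊆
      Finset.Ico (⌈x⌉₊ - 3) ⌈x⌉₊ := fun j hj => by
 
      obtain ⟨hlow, hhigh⟩ := (Finset.mem_filter.1 hj).2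
      have : ⌈x⌉₊ ≤ j + 3 := Nat.ceil_le.2 (by push_cast; exact hhigh.le)
      exact Finset.mem_Ico.2 ⟨by omega, Nat.lt_ceil.2 hlow⟩
  have hcard := Finset.card_le_card hsub
  rw [Nat.card_Ico] at hcard
  simp only [layerWeight, Finset.sum_boole]
  exact_mod_cast hcard.trans (by omega)

lemma sum_truncationWeight_le {T : ℝ} (hT : 0 < T) (M : ℝ) (J : ℕ) :
    ∑ j ∈ Finset.range J, truncationWeight (4 ^ j * T) M ≤ 2 := by
  rcases le_or_gt M 0 with hM | hM
  · refine (Finset.sum_nonpos fun j _ => ?_).trans zero_le_two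
    rw [truncationWeight, if_neg (not_lt.2 (hM.trans (by positivity)))]
  suffices h : ∑ j ∈ Finset.range J, truncationWeight (4 ^ j * T) M ≤ 4 ^ J * T / M ∧
    ∑ j ∈ Finset.range J, truncationWeight (4 ^ j * T) M ≤ 2 from h.2
  induction J with
  | zero =>
    simp only [Finset.range_zero, Finset.sum_empty]
    exact ⟨by positivity, zero_le_two⟩
  | succ J ih =>
    have hpos : 0 < 4 ^ J * T / M := by positivity
    have hsucc : 4 ^ (J + 1) * T / M = 4 * (4 ^ J * T / M) := by ring
    rw [Finset.sum_range_succ, hsucc, truncationWeight]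
    split_ifs with h
    · have := (div_lt_one hM).2 h
      exact ⟨by linarith [ih.1], by linarith [ih.1]⟩
    · exact ⟨by linarith [ih.1], by linarith [ih.2]⟩

/-- An increment either is unchanged by localisation, or it sits at one of the few sites near the
boundary or with large values, where only the levels `j` of positive weight matter. -/
lemma localized_sub_eq_or_norm_le {β : ℝ} (ht : 0 < t) (htL : 2 * t ≤ L) (hρ : |ρ' - ρ| ≤ β)
    (hβ : β ≤ L) (j : ℕ) :
    localized t L j ρ' y' - localized t L j ρ y = y' - y ∨
      (ρ ≤ (j + 3) * L ∨ t < max ‖y‖ ‖y'‖) ∧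
        ∃ s, 0 ≤ s ∧ s ≤ 1 ∧ s ≤ layerWeight (ρ / L) j + truncationWeight t (max ‖y‖ ‖y'‖) ∧
          ‖localized t L j ρ' y' - localized t L j ρ y‖ ≤ β + 12 * ‖y' - y‖ * s := by
  have hL : 0 < L := lt_of_lt_of_le (by positivity) htL
  have hβ0 : 0 ≤ β := (abs_nonneg _).trans hρ
  have hlayer := layerWeight_nonneg (ρ / L) j
  have htrunc := truncationWeight_nonneg ht (max ‖y‖ ‖y'‖)
  have habs := abs_le.1 (hρ.trans hβ)
  by_cases hout : ρ ≤ (j + 1) * L ∧ ρ' ≤ (j + 1) * L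
  · refine .inr ⟨.inl (by linarith [hout.1]), 0, le_rfl, zero_le_one, by linarith, ?_⟩
    rw [localized_of_le hL hout.1, localized_of_le hL hout.2]
    simpa using hβ0
  by_cases hin : (j + 2) * L ≤ ρ ∧ (j + 2) * L ≤ ρ'
  · rw [localized_of_ge hL hin.1, localized_of_ge hL hin.2]
    rcases lt_or_ge t (max ‖y‖ ‖y'‖) with hM | hM
    · have hpos := ht.trans hM
      refine .inr ⟨.inr hM, t / max ‖y‖ ‖y'‖, by positivity, (div_le_one hpos).2 hM.le, ?_, ?_⟩
      · rw [truncationWeight, if_pos hM]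
        linarith
      · linarith [norm_softTruncation_sub_le_mul_div ht hM]
    · rw [softTruncation_of_norm_le ht ((le_max_left _ _).trans hM),
        softTruncation_of_norm_le ht ((le_max_right _ _).trans hM)]
      exact .inl rfl
  have hlow : j * L < ρ := by
    by_contra! h
    exact hout ⟨by linarith, by linarith⟩
  have hhigh : ρ < (j + 3) * L := by
    by_contra! h
    exact hin ⟨by linarith, by linarith⟩
  refine .inr ⟨.inl hhigh.le, 1, zero_le_one, le_rfl, ?_, ?_⟩
  · rw [layerWeight, if_pos ⟨(lt_div_iff₀ hL).2 hlow, (div_lt_iff₀ hL).2 hhigh⟩]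
    linarith
  · linarith [norm_localized_sub_le (ρ := ρ) (ρ' := ρ') (y := y) (y' := y') ht htL j,
      norm_nonneg (y' - y)]

end Truncation

/-! ### The gluing estimate -/

section Gluing

variable {Ω : Type*} {τ : Zd d → Ω → Ω} {E0 : Finset (Zd d)} {p c₁ : ℝ}
  {V : Zd d → Ω → Rn n → ℝ} {lam : Zd d → Ω → ℝ}

lemma rpow_add_le_mul_rpow_add_rpow {x y p : ℝ} (hx : 0 ≤ x) (hy : 0 ≤ y) (hp : 1 ≤ p) :
    (x + y) ^ p ≤ 2 ^ (p - 1) * (x ^ p + y ^ p) := by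
  lift x to NNReal using hx
  lift y to NNReal using hy
  exact_mod_cast NNReal.rpow_add_le_mul_rpow_add_rpow x y hp

lemma HasGrowth.exists_le_mul_add_rpow (hG : HasGrowth E0 p c₁ V lam) {K : ℝ} (hK : 0 ≤ K) :
    ∃ C, 0 ≤ C ∧ ∀ b ∈ E0, ∀ ω r X, 0 ≤ X → ‖r‖ ≤ K + X →
      V b ω r ≤ C * (1 + totalWeight E0 lam ω + lam b ω * X ^ p) := by
  have hc := hG.pos
  refine ⟨c₁ * (2 ^ (p - 1) * (K ^ p + 1) + 1), by positivity, fun b hb ω r X hX hr => ?_⟩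
  have hlam := hG.weight_nonneg b hb ω
  have hle := hG.weight_le_totalWeight hb ω
  have hpow : ‖r‖ ^ p ≤ 2 ^ (p - 1) * (K ^ p + X ^ p) :=
    (Real.rpow_le_rpow (norm_nonneg r) hr (by linarith [hG.one_lt])).trans
      (rpow_add_le_mul_rpow_add_rpow hK hX hG.one_lt.le)
  set A : ℝ := 2 ^ (p - 1)
  have : 0 ≤ A := by positivity
  calc V b ω r ≤ c₁ * (1 + lam b ω * (‖r‖ ^ p + 1)) := hG.upper b hb ω r
    _ ≤ c₁ * (1 + lam b ω * (A * (K ^ p + X ^ p) + 1)) := by gcongr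
    _ = c₁ * (1 + lam b ω * (A * K ^ p + 1) + A * (lam b ω * X ^ p)) := by ring
    _ ≤ c₁ * ((A * (K ^ p + 1) + 1) * (1 + lam b ω) +
        (A * (K ^ p + 1) + 1) * (lam b ω * X ^ p)) := by
        have h₁ : 0 ≤ A * K ^ p * (1 + lam b ω * X ^ p) := by positivity
        have h₂ : 0 ≤ A * (1 + lam b ω) + lam b ω * X ^ p := by positivity
        exact mul_le_mul_of_nonneg_left (by linarith) hc.le
    _ ≤ c₁ * (A * (K ^ p + 1) + 1) * (1 + totalWeight E0 lam ω + lam b ω * X ^ p) := by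
        rw [← mul_add, mul_assoc]
        gcongr

lemma HasGrowth.exists_weight_mul_rpow_le (hG : HasGrowth E0 p c₁ V lam)
    (hV : ∀ b ∈ E0, ∀ ω r, 0 ≤ V b ω r) {K : ℝ} (hK : 0 ≤ K) :
    ∃ C, 0 ≤ C ∧ ∀ b ∈ E0, ∀ ω r Y, 0 ≤ Y → Y ≤ ‖r‖ + K →
      lam b ω * Y ^ p ≤ C * (V b ω r + (1 + totalWeight E0 lam ω)) := by
  have hc := hG.pos
  refine ⟨2 ^ (p - 1) * (c₁ + c₁ ^ 2 + K ^ p), by positivity, fun b hb ω r Y hY hr => ?_⟩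
  have hlam := hG.weight_nonneg b hb ω
  have hle := hG.weight_le_totalWeight hb ω
  have hVr := hV b hb ω r
  have hpow : Y ^ p ≤ 2 ^ (p - 1) * (‖r‖ ^ p + K ^ p) :=
    (Real.rpow_le_rpow hY hr (by linarith [hG.one_lt])).trans
      (rpow_add_le_mul_rpow_add_rpow (norm_nonneg r) hK hG.one_lt.le)
  have hlow : lam b ω * ‖r‖ ^ p ≤ c₁ * V b ω r + c₁ ^ 2 * lam b ω := by
    have := mul_le_mul_of_nonneg_left (hG.lower b hb ω r) hc.le
    field_simp at this
    linarith
  calc lam b ω * Y ^ p ≤ lam b ω * (2 ^ (p - 1) * (‖r‖ ^ p + K ^ p)) := by gcongr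
    _ = 2 ^ (p - 1) * (lam b ω * ‖r‖ ^ p + K ^ p * lam b ω) := by ring
    _ ≤ 2 ^ (p - 1) * ((c₁ + c₁ ^ 2 + K ^ p) * V b ω r +
        (c₁ + c₁ ^ 2 + K ^ p) * lam b ω) := by
        have : 0 ≤ (c₁ ^ 2 + K ^ p) * V b ω r + c₁ * lam b ω := by positivity
        exact mul_le_mul_of_nonneg_left (by linarith) (by positivity)
    _ ≤ 2 ^ (p - 1) * (c₁ + c₁ ^ 2 + K ^ p) * (V b ω r + (1 + totalWeight E0 lam ω)) := by
        rw [← mul_add, mul_assoc]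
        gcongr
        linarith

lemma HasGrowth.exists_le_mul_add_of_norm_le (hG : HasGrowth E0 p c₁ V lam)
    (hV : ∀ b ∈ E0, ∀ ω r, 0 ≤ V b ω r) {K : ℝ} (hK : 0 ≤ K) :
    ∃ C, 0 ≤ C ∧ ∀ b ∈ E0, ∀ ω r r' Y s, 0 ≤ Y → Y ≤ ‖r‖ + K → 0 ≤ s → s ≤ 1 →
      ‖r'‖ ≤ K + 1 + 12 * Y * s →
        V b ω r' ≤ C * s * (V b ω r + (1 + totalWeight E0 lam ω)) +
          C * (1 + totalWeight E0 lam ω) := by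
  obtain ⟨C₁, hC₁, hupper⟩ := hG.exists_le_mul_add_rpow (K := K + 1) (by positivity)
  obtain ⟨C₂, hC₂, hlower⟩ := hG.exists_weight_mul_rpow_le hV hK
  refine ⟨C₁ + C₁ * (12 ^ p * C₂), by positivity, fun b hb ω r r' Y s hY hYr hs0 hs1 hr' => ?_⟩
  have hW := hG.totalWeight_nonneg ω
  have hlam := hG.weight_nonneg b hb ω
  have he := hV b hb ω r
  have hpow : (12 * Y * s) ^ p ≤ 12 ^ p * Y ^ p * s := by
    rw [Real.mul_rpow (by positivity) hs0, Real.mul_rpow (by norm_num) hY]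
    gcongr
    exact Real.rpow_le_self_of_le_one hs0 hs1 hG.one_lt.le
  have hweight : lam b ω * (12 * Y * s) ^ p ≤
      12 ^ p * C₂ * s * (V b ω r + (1 + totalWeight E0 lam ω)) :=
    calc lam b ω * (12 * Y * s) ^ p ≤ lam b ω * (12 ^ p * Y ^ p * s) := by gcongr
      _ = 12 ^ p * s * (lam b ω * Y ^ p) := by ring
      _ ≤ 12 ^ p * s * (C₂ * (V b ω r + (1 + totalWeight E0 lam ω))) := by
          exact mul_le_mul_of_nonneg_left (hlower b hb ω r Y hY hYr) (by positivity)
      _ = 12 ^ p * C₂ * s * (V b ω r + (1 + totalWeight E0 lam ω)) := by ring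
  calc V b ω r' ≤ C₁ * (1 + totalWeight E0 lam ω + lam b ω * (12 * Y * s) ^ p) :=
        hupper b hb ω r' _ (by positivity) hr'
    _ ≤ C₁ * (1 + totalWeight E0 lam ω +
          12 ^ p * C₂ * s * (V b ω r + (1 + totalWeight E0 lam ω))) := by gcongr
    _ = C₁ * (12 ^ p * C₂) * s * (V b ω r + (1 + totalWeight E0 lam ω)) +
          C₁ * (1 + totalWeight E0 lam ω) := by ring
    _ ≤ _ := by gcongr <;> linarith [show 0 ≤ C₁ * (12 ^ p * C₂) by positivity]

lemma HasGrowth.exists_edge_localized_le (hG : HasGrowth E0 p c₁ V lam)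
    (hV : ∀ b ∈ E0, ∀ ω r, 0 ≤ V b ω r) (hE0 : 0 ∉ E0) {K : ℝ} (hK : 0 ≤ K) :
    ∃ C, 0 ≤ C ∧ ∀ b ∈ E0, ∀ (ω : Ω) (a y y' : Rn n) (t L ρ ρ' : ℝ) (j : ℕ),
      ‖‖toRd b‖⁻¹ • a‖ ≤ K → 0 < t → 2 * t ≤ L → |ρ' - ρ| ≤ ‖toRd b‖ → ‖toRd b‖ ≤ L →
        V b ω (‖toRd b‖⁻¹ • (a + (localized t L j ρ' y' - localized t L j ρ y))) ≤
          V b ω (‖toRd b‖⁻¹ • (a + (y' - y))) +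
          C * (layerWeight (ρ / L) j + truncationWeight t (max ‖y‖ ‖y'‖)) *
            (V b ω (‖toRd b‖⁻¹ • (a + (y' - y))) + (1 + totalWeight E0 lam ω)) +
          if ρ ≤ (j + 3) * L ∨ t < max ‖y‖ ‖y'‖ then C * (1 + totalWeight E0 lam ω) else 0 := by
  obtain ⟨C, hC, hle⟩ := hG.exists_le_mul_add_of_norm_le hV hK
  refine ⟨C, hC, fun b hb ω a y y' t L ρ ρ' j ha ht htL hρ hbL => ?_⟩
  have hβ : 0 < ‖toRd b‖ := norm_toRd_pos fun h => hE0 (h ▸ hb)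
  have hw : 0 ≤ layerWeight (ρ / L) j + truncationWeight t (max ‖y‖ ‖y'‖) :=
    add_nonneg (layerWeight_nonneg _ _) (truncationWeight_nonneg ht _)
  have hW := hG.totalWeight_nonneg ω
  have he := hV b hb ω (‖toRd b‖⁻¹ • (a + (y' - y)))
  rcases localized_sub_eq_or_norm_le (y := y) (y' := y') ht htL hρ hbL j with
    heq | ⟨hbad, s, hs0, hs1, hsw, hs⟩
  · rw [heq]
    refine le_add_of_le_of_nonneg (le_add_of_nonneg_right (by positivity)) ?_
    split_ifs <;> positivity
  have hY : ‖‖toRd b‖⁻¹ • (y' - y)‖ ≤ ‖‖toRd b‖⁻¹ • (a + (y' - y))‖ + K := by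
    rw [smul_add]
    exact (norm_le_add_norm_add' (‖toRd b‖⁻¹ • a) _).trans (by gcongr)
  have hr' : ‖‖toRd b‖⁻¹ • (a + (localized t L j ρ' y' - localized t L j ρ y))‖ ≤
      K + 1 + 12 * ‖‖toRd b‖⁻¹ • (y' - y)‖ * s := by
    have hsmul : ‖‖toRd b‖⁻¹ • (localized t L j ρ' y' - localized t L j ρ y)‖ ≤
        1 + 12 * ‖‖toRd b‖⁻¹ • (y' - y)‖ * s := by
      rw [norm_smul, norm_smul, norm_inv, norm_norm, inv_mul_le_iff₀ hβ]
      exact hs.trans_eq (by field_simp)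
    rw [smul_add]
    exact (norm_add_le _ _).trans (by linarith)
  rw [if_pos hbad]
  refine (hle b hb ω _ _ _ s (norm_nonneg _) hY hs0 hs1 hr').trans ?_
  gcongr
  exact le_add_of_nonneg_of_le he (by gcongr)

lemma HasGrowth.exists_sum_edge_localized_le (hG : HasGrowth E0 p c₁ V lam)
    (hV : ∀ b ∈ E0, ∀ ω r, 0 ≤ V b ω r) (hE0 : 0 ∉ E0) {K : ℝ} (hK : 0 ≤ K) :
    ∃ C, 0 ≤ C ∧ ∀ b ∈ E0, ∀ (ω : Ω) (a y y' : Rn n) (T L ρ ρ' : ℝ) (J : ℕ),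
      ‖‖toRd b‖⁻¹ • a‖ ≤ K → 0 < T → 2 * (4 ^ J * T) ≤ L → |ρ' - ρ| ≤ ‖toRd b‖ → ‖toRd b‖ ≤ L →
        ∑ j ∈ Finset.range J, V b ω (‖toRd b‖⁻¹ •
            (a + (localized (4 ^ j * T) L j ρ' y' - localized (4 ^ j * T) L j ρ y))) ≤
          (J + C) * V b ω (‖toRd b‖⁻¹ • (a + (y' - y))) + C * (1 + totalWeight E0 lam ω) +
          J * if ρ ≤ (J + 2) * L ∨ T < max ‖y‖ ‖y'‖ then C * (1 + totalWeight E0 lam ω)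
            else 0 := by
  obtain ⟨C, hC, hle⟩ := hG.exists_edge_localized_le hV hE0 hK
  refine ⟨5 * C, by positivity, fun b hb ω a y y' T L ρ ρ' J ha hT hTL hρ hbL => ?_⟩
  have hL : 0 < L := lt_of_lt_of_le (by positivity) hTL
  have hW := hG.totalWeight_nonneg ω
  have he := hV b hb ω (‖toRd b‖⁻¹ • (a + (y' - y)))
  set W := totalWeight E0 lam ω
  set e := V b ω (‖toRd b‖⁻¹ • (a + (y' - y)))
  set M := max ‖y‖ ‖y'‖
  set bad := if ρ ≤ (J + 2) * L ∨ T < M then 5 * C * (1 + W) else 0 with hbad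
  have hlevel : ∀ j ∈ Finset.range J, V b ω (‖toRd b‖⁻¹ •
      (a + (localized (4 ^ j * T) L j ρ' y' - localized (4 ^ j * T) L j ρ y))) ≤
        e + C * (e + (1 + W)) * (layerWeight (ρ / L) j + truncationWeight (4 ^ j * T) M) +
          bad := fun j hj => by
    have hjJ : (j : ℝ) + 1 ≤ J := by exact_mod_cast Finset.mem_range.1 hj
    have hpow : (4 : ℝ) ^ j * T ≤ 4 ^ J * T := by
      gcongr
      · norm_num
      · exact (Finset.mem_range.1 hj).le
    have hTj : T ≤ 4 ^ j * T := le_mul_of_one_le_left hT.le (one_le_pow₀ (by norm_num))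
    refine (hle b hb ω a y y' _ L ρ ρ' j ha (by positivity) (by linarith) hρ hbL).trans ?_
    refine add_le_add (by rw [mul_right_comm]) ?_
    split_ifs with h
    · rw [hbad, if_pos (h.imp (fun h => h.trans ?_) hTj.trans_lt)]
      · linarith [mul_nonneg hC (add_nonneg zero_le_one hW)]
      · gcongr ?_ * L
        linarith
    · rw [hbad]
      split_ifs <;> positivity
  calc _ ≤ _ := Finset.sum_le_sum hlevel
    _ = J * e + C * (e + (1 + W)) * (∑ j ∈ Finset.range J, layerWeight (ρ / L) j +
          ∑ j ∈ Finset.range J, truncationWeight (4 ^ j * T) M) + J * bad := by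
        simp only [Finset.sum_add_distrib, Finset.sum_const, Finset.card_range, nsmul_eq_mul,
          ← Finset.mul_sum]
    _ ≤ J * e + C * (e + (1 + W)) * (3 + 2) + J * bad := by
        gcongr
        exacts [sum_layerWeight_le _ J, sum_truncationWeight_le hT M J]
    _ = (J + 5 * C) * e + 5 * C * (1 + W) + J * bad := by ring

/-- The competitor obtained from `φ` by localisation at distance of order `j * L` from the
boundary of `B` and at level `t`. -/
def localizedCompetitor (B : Set (Rd d)) (t L : ℝ) (j : ℕ) (φ : Zd d → Rn n) (z : Zd d) : Rn n :=
  localized t L j (infDist (toRd z) Bᶜ) (φ z)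

lemma isAdmissible_localizedCompetitor {L : ℝ} (hL : 0 < L) (hEL : irange d E0 ≤ L)
    (B : Set (Rd d)) (t : ℝ) (j : ℕ) (φ : Zd d → Rn n) :
    IsAdmissible E0 B (localizedCompetitor B t L j φ) := fun _ hz =>
  localized_of_le hL <| (hz.trans hEL).trans <| le_mul_of_one_le_left hL.le <|
    le_add_of_nonneg_left j.cast_nonneg

/-- The sites at which localisation is expensive: those within distance `r` of the boundary of
`B`, and those where `φ` exceeds `T` at one of the end points of an edge. -/
def IsBadSite (E0 : Finset (Zd d)) (B : Set (Rd d)) (φ : Zd d → Rn n) (T r : ℝ) (z : Zd d) :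
    Prop :=
  infDist (toRd z) Bᶜ ≤ r ∨ T < ‖φ z‖ ∨ ∃ b ∈ E0, T < ‖φ (z + b)‖

lemma abs_infDist_toRd_add_sub_le (B : Set (Rd d)) (z b : Zd d) :
    |infDist (toRd (z + b)) Bᶜ - infDist (toRd z) Bᶜ| ≤ ‖toRd b‖ := by
  simpa [Real.dist_eq, dist_eq_norm, toRd_add] using
    (lipschitz_infDist_pt Bᶜ).dist_le_mul (toRd (z + b)) (toRd z)

lemma HasGrowth.exists_sum_siteEnergy_localizedCompetitor_le (hG : HasGrowth E0 p c₁ V lam)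
    (hV : ∀ b ∈ E0, ∀ ω r, 0 ≤ V b ω r) (hE0 : 0 ∉ E0) {K : ℝ} (hK : 0 ≤ K) :
    ∃ C, 0 ≤ C ∧ ∀ (ω : Ω) (B : Set (Rd d)) (F : Rd d →L[ℝ] Rn n) (c : Rn n)
      (φ : Zd d → Rn n) (T L : ℝ) (J : ℕ) (z : Zd d),
      ‖F‖ ≤ K → 0 < T → 2 * (4 ^ J * T) ≤ L → irange d E0 ≤ L →
        ∑ j ∈ Finset.range J, siteEnergy τ E0 V ω
            (fun x => F (toRd x) + localizedCompetitor B (4 ^ j * T) L j φ x) z ≤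
          (J + C) * siteEnergy τ E0 V ω (fun x => F (toRd x) + c + φ x) z +
          C * (1 + totalWeight E0 lam (τ z ω)) +
          J * if IsBadSite E0 B φ T ((J + 2) * L) z then C * (1 + totalWeight E0 lam (τ z ω))
            else 0 := by
  obtain ⟨C, hC, hle⟩ := hG.exists_sum_edge_localized_le hV hE0 hK
  refine ⟨(E0.card + 1) * C, by positivity, fun ω B F c φ T L J z hF hT hTL hEL => ?_⟩
  have hW := hG.totalWeight_nonneg (τ z ω)
  have hsite := siteEnergy_nonneg (τ := τ) hV ω (fun x => F (toRd x) + c + φ x) z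
  set W := totalWeight E0 lam (τ z ω)
  set q := if IsBadSite E0 B φ T ((J + 2) * L) z then C * (1 + W) else 0 with hq
  have hq0 : 0 ≤ q := by rw [hq]; split_ifs <;> positivity
  have hedge : ∀ b ∈ E0, ∑ j ∈ Finset.range J, V b (τ z ω) (‖toRd b‖⁻¹ •
      (F (toRd (z + b)) + localizedCompetitor B (4 ^ j * T) L j φ (z + b) -
        (F (toRd z) + localizedCompetitor B (4 ^ j * T) L j φ z))) ≤
      (J + C) * V b (τ z ω) (‖toRd b‖⁻¹ •
        (F (toRd (z + b)) + c + φ (z + b) - (F (toRd z) + c + φ z))) +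
        C * (1 + W) + J * q := fun b hb => by
    have haff (y y' : Rn n) : F (toRd (z + b)) + y' - (F (toRd z) + y) =
        F (toRd b) + (y' - y) := by rw [toRd_add, map_add]; abel
    simp only [add_assoc _ c, haff, add_sub_add_left_eq_sub]
    refine (hle b hb _ _ _ _ T L _ _ J ((norm_inv_smul_apply_le F _).trans hF) hT hTL
      (abs_infDist_toRd_add_sub_le B z b) ((norm_toRd_le_irange hb).trans hEL)).trans ?_
    gcongr
    split_ifs with h
    · rw [hq, if_pos]
      exact h.imp_right fun h => (lt_max_iff.1 h).imp_right fun h => ⟨b, hb, h⟩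
    · exact hq0
  calc _ = ∑ b ∈ E0, _ := Finset.sum_comm
    _ ≤ _ := Finset.sum_le_sum hedge
    _ = (J + C) * siteEnergy τ E0 V ω (fun x => F (toRd x) + c + φ x) z +
          E0.card * (C * (1 + W)) + J * (E0.card * q) := by
        simp only [siteEnergy, Finset.sum_add_distrib, ← Finset.mul_sum, Finset.sum_const,
          nsmul_eq_mul]
        ring
    _ ≤ (J + (E0.card + 1) * C) * siteEnergy τ E0 V ω (fun x => F (toRd x) + c + φ x) z +
          (E0.card + 1) * C * (1 + W) + J * ((E0.card + 1) * q) := by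
        rw [mul_assoc _ C]
        gcongr
        · exact le_mul_of_one_le_left hC (by simp)
        all_goals simp
    _ = _ := by rw [hq, mul_ite, mul_zero, mul_assoc _ C (1 + W)]

/-- The total cost of localising at the levels `j < J` is bounded independently of `J`; hence the
coefficient `J + C` instead of a multiple of `J`. -/
theorem HasGrowth.exists_mul_mF_le (hG : HasGrowth E0 p c₁ V lam)
    (hV : ∀ b ∈ E0, ∀ ω r, 0 ≤ V b ω r) (hE0 : 0 ∉ E0) {K : ℝ} (hK : 0 ≤ K) :
    ∃ C, 0 ≤ C ∧ ∀ (ω : Ω) (B : Set (Rd d)) (F : Rd d →L[ℝ] Rn n) (c : Rn n)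
      (φ : Zd d → Rn n) (T L : ℝ) (J : ℕ), Bornology.IsBounded B →
      ‖F‖ ≤ K → 0 < T → 2 * (4 ^ J * T) ≤ L → irange d E0 ≤ L →
        J * mF τ E0 V ω F B ≤
          (J + C) * energy1 τ E0 V ω (fun x => F (toRd x) + c + φ x) B +
          C * ∑ z ∈ latticePoints B, (1 + totalWeight E0 lam (τ z ω)) +
          J * (C * ∑ z ∈ latticePoints B with IsBadSite E0 B φ T ((J + 2) * L) z,
            (1 + totalWeight E0 lam (τ z ω))) := by
  obtain ⟨C, hC, hle⟩ := hG.exists_sum_siteEnergy_localizedCompetitor_le (τ := τ) hV hE0 hK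
  refine ⟨C, hC, fun ω B F c φ T L J hB hF hT hTL hEL => ?_⟩
  have hL : 0 < L := lt_of_lt_of_le (by positivity) hTL
  calc J * mF τ E0 V ω F B = ∑ _ ∈ Finset.range J, mF τ E0 V ω F B := by simp
    _ ≤ ∑ j ∈ Finset.range J, ∑ z ∈ latticePoints B, siteEnergy τ E0 V ω
          (fun x => F (toRd x) + localizedCompetitor B (4 ^ j * T) L j φ x) z :=
        Finset.sum_le_sum fun j _ => by
          rw [← energy1_eq_sum _ _ _ _ _ hB]
          exact mF_le hV ω F hB (isAdmissible_localizedCompetitor hL hEL B _ j φ)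
    _ ≤ _ := by
        rw [Finset.sum_comm, energy1_eq_sum _ _ _ _ _ hB, Finset.sum_filter]
        simp only [Finset.mul_sum, ← Finset.sum_add_distrib, mul_ite, mul_zero]
        refine Finset.sum_le_sum fun z _ => ?_
        simpa only [mul_ite, mul_zero] using hle ω B F c φ T L J z hF hT hTL hEL

end Gluing

/-! ### Lower bound on a box where the limit is nearly affine -/

section SparseSums

/-- Sums of `f` along the orbit of `ω`, over subsets of `latticeBox ε lo hi` whose cardinality is
`o(ε⁻ᵈ)`, are `o(ε⁻ᵈ)`. -/
def HasNegligibleSparseSums {Ω : Type*} (τ : Zd d → Ω → Ω) (f : Ω → ℝ) (ω : Ω) : Prop :=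
  ∀ lo hi : Fin d → ℝ, (∀ i, lo i < hi i) → ∀ S : ℝ → Finset (Zd d),
    (∀ ε, S ε ⊆ latticeBox ε lo hi) →
    Tendsto (fun ε => ε ^ d * ((S ε).card : ℝ)) (𝓝[>] 0) (𝓝 0) →
    Tendsto (fun ε => ε ^ d * ∑ z ∈ S ε, f (τ z ω)) (𝓝[>] 0) (𝓝 0)

variable {P : Measure Ω} {τ : Zd d → Ω → Ω} {f : Ω → ℝ}

lemma tendsto_integral_max_abs_sub_natCast (hf : Integrable f P) :
    Tendsto (fun m : ℕ => ∫ ω, max (|f ω| - m) 0 ∂P) atTop (𝓝 0) := by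
  have h := tendsto_integral_of_dominated_convergence (F := fun (m : ℕ) ω => max (|f ω| - m) 0)
    (f := fun _ => 0) (fun ω => |f ω|)
    (fun m => (hf.abs.aestronglyMeasurable.sub aestronglyMeasurable_const).sup
      aestronglyMeasurable_const) hf.abs
    (fun m => ae_of_all _ fun ω => by
      rw [Real.norm_of_nonneg (le_max_right _ _)]
      exact max_le (sub_le_self _ m.cast_nonneg) (abs_nonneg _))
    (ae_of_all _ fun ω => tendsto_const_nhds.congr' <| by
      obtain ⟨m₀, hm₀⟩ := exists_nat_ge |f ω|
      filter_upwards [eventually_ge_atTop m₀] with m hm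
      have : |f ω| ≤ m := hm₀.trans (by exact_mod_cast hm)
      rw [max_eq_right (by linarith)])
  simpa using h

lemma abs_pow_mul_sum_le_add_boxAverage {Ω : Type*} {τ : Zd d → Ω → Ω} (f : Ω → ℝ) (ω : Ω)
    {lo hi : Fin d → ℝ} {ε : ℝ} (hε : 0 < ε) {S : Finset (Zd d)} (hS : S ⊆ latticeBox ε lo hi)
    (m : ℝ) :
    |ε ^ d * ∑ z ∈ S, f (τ z ω)| ≤
      m * (ε ^ d * S.card) + boxAverage τ (fun x => max (|f x| - m) 0) ω lo hi ε := by
  rw [abs_mul, abs_of_pos (pow_pos hε d)]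
  calc ε ^ d * |∑ z ∈ S, f (τ z ω)|
      ≤ ε ^ d * ∑ z ∈ S, (m + max (|f (τ z ω)| - m) 0) := by
        refine mul_le_mul_of_nonneg_left ((Finset.abs_sum_le_sum_abs _ _).trans
          (Finset.sum_le_sum fun z _ => ?_)) (by positivity)
        linarith [le_max_left (|f (τ z ω)| - m) 0]
    _ ≤ ε ^ d * (S.card * m + ∑ z ∈ latticeBox ε lo hi, max (|f (τ z ω)| - m) 0) := by
        rw [Finset.sum_add_distrib, Finset.sum_const, nsmul_eq_mul]
        gcongr
    _ = _ := by rw [boxAverage]; ring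

theorem IsErgodicAction.ae_hasNegligibleSparseSums [IsProbabilityMeasure P]
    (hτ : IsErgodicAction P τ) (hf : Integrable f P) :
    ∀ᵐ ω ∂P, HasNegligibleSparseSums τ f ω := by
  have htail (m : ℕ) : Integrable (fun ω => max (|f ω| - m) 0) P :=
    (hf.abs.sub (integrable_const _)).pos_part
  filter_upwards [ae_all_iff.2 fun m => hτ.ae_hasErgodicLimit (htail m)]
    with ω hω lo hi h S hS hcard
  refine NormedAddGroup.tendsto_nhds_zero.2 fun δ hδ => ?_
  have hvol := (tendsto_integral_max_abs_sub_natCast hf).const_mul (∏ i, (hi i - lo i))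
  rw [mul_zero] at hvol
  obtain ⟨m, hm⟩ := (hvol.eventually_lt_const hδ).exists
  have hlim := (hcard.const_mul (m : ℝ)).add (hω m lo hi h)
  rw [mul_zero, zero_add] at hlim
  filter_upwards [hlim.eventually_lt_const hm, self_mem_nhdsWithin] with ε hlt hε
  exact (abs_pow_mul_sum_le_add_boxAverage f ω hε (hS ε) m).trans_lt hlt

end SparseSums

section ExceptionalSites

/-- The sites of `L` at which, or at an `E0`-neighbour in `L` of which, `‖g‖` exceeds `T`. -/
def exceptionalSites (E0 : Finset (Zd d)) (T : ℝ) (g : Zd d → Rn n) (L : Finset (Zd d)) :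
    Finset (Zd d) :=
  {z ∈ L | T < ‖g z‖ ∨ ∃ b ∈ E0, z + b ∈ L ∧ T < ‖g (z + b)‖}

variable {E0 : Finset (Zd d)} {T : ℝ} {g : Zd d → Rn n} {L : Finset (Zd d)}

lemma exceptionalSites_subset : exceptionalSites E0 T g L ⊆ L := Finset.filter_subset _ _

lemma card_exceptionalSites_le :
    (exceptionalSites E0 T g L).card ≤ (E0.card + 1) * {z ∈ L | T < ‖g z‖}.card := by
  set N : Finset (Zd d) := {z ∈ L | T < ‖g z‖}
  have hsub : exceptionalSites E0 T g L ⊆ N ∪ E0.biUnion fun b => N.image (· - b) := fun z hz => by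
    rw [exceptionalSites, Finset.mem_filter] at hz
    obtain ⟨hzL, hzT | ⟨b, hb, hzb⟩⟩ := hz
    · exact Finset.mem_union_left _ (Finset.mem_filter.2 ⟨hzL, hzT⟩)
    · exact Finset.mem_union_right _ (Finset.mem_biUnion.2
        ⟨b, hb, Finset.mem_image.2 ⟨z + b, Finset.mem_filter.2 hzb, add_sub_cancel_right z b⟩⟩)
  calc (exceptionalSites E0 T g L).card ≤ N.card + E0.card * N.card :=
        (Finset.card_le_card hsub).trans ((Finset.card_union_le _ _).trans (add_le_add_right
          (Finset.card_biUnion_le_card_mul _ _ _ fun b _ => Finset.card_image_le) _))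
    _ = (E0.card + 1) * N.card := by ring

lemma card_filter_lt_norm_mul_le {v : Zd d → Rn n}
    (hv : ∀ z ∈ L, ‖g z - v z‖ ≤ T / 2) :
    ({z ∈ L | T < ‖g z‖}.card : ℝ) * (T / 2) ≤ ∑ z ∈ L, ‖v z‖ := by
  rw [← nsmul_eq_mul, ← Finset.sum_const]
  refine (Finset.sum_le_sum fun z hz => ?_).trans (Finset.sum_le_sum_of_subset_of_nonneg
    (Finset.filter_subset _ _) fun _ _ _ => norm_nonneg _)
  obtain ⟨hzL, hzT⟩ := Finset.mem_filter.1 hz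
  linarith [hv z hzL, norm_sub_norm_le (g z) (v z)]

lemma tendsto_pow_mul_card_exceptionalSites (hT : 0 < T) {g v : ℝ → Zd d → Rn n}
    {L : ℝ → Finset (Zd d)} (hgv : ∀ ε > 0, ∀ z ∈ L ε, ‖g ε z - v ε z‖ ≤ T / 2)
    (hv : Tendsto (fun ε => ε ^ d * ∑ z ∈ L ε, ‖v ε z‖) (𝓝[>] 0) (𝓝 0)) :
    Tendsto (fun ε => ε ^ d * ((exceptionalSites E0 T (g ε) (L ε)).card : ℝ)) (𝓝[>] 0) (𝓝 0) := by
  refine squeeze_zero' (eventually_mem_nhdsWithin.mono fun ε (hε : 0 < ε) => by positivity)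
    (eventually_mem_nhdsWithin.mono fun ε (hε : 0 < ε) => ?_)
    (by simpa using hv.const_mul ((E0.card + 1) * (2 / T)))
  have hcard : ((exceptionalSites E0 T (g ε) (L ε)).card : ℝ) ≤
      (E0.card + 1) * ({z ∈ L ε | T < ‖g ε z‖}.card : ℝ) := by
    exact_mod_cast card_exceptionalSites_le
  have hcheb := card_filter_lt_norm_mul_le (hgv ε hε)
  rw [← le_div_iff₀ (by positivity)] at hcheb
  calc ε ^ d * ((exceptionalSites E0 T (g ε) (L ε)).card : ℝ)
      ≤ ε ^ d * ((E0.card + 1) * ((∑ z ∈ L ε, ‖v ε z‖) / (T / 2))) := by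
        gcongr
        exact hcard.trans (by gcongr)
    _ = (E0.card + 1) * (2 / T) * (ε ^ d * ∑ z ∈ L ε, ‖v ε z‖) := by field_simp

lemma div_le_infDist_toRd_compl_rescaledBox [NeZero d] {ε r : ℝ} (hε : 0 < ε)
    {lo hi : Fin d → ℝ} {z : Zd d}
    (hz : z ∈ latticeBox ε (fun i => lo i + r) (fun i => hi i - r)) :
    r / ε ≤ infDist (toRd z) (rescaledBox ε lo hi)ᶜ := by
  refine (le_infDist (nonempty_compl_of_isBounded (isBounded_rescaledBox hε lo hi))).2
    fun y hy => ?_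
  obtain ⟨i, hyi⟩ : ∃ i, lo i < ε * y i → hi i ≤ ε * y i := by
    simpa [rescaledBox, openBox] using hy
  have hzi := (mem_latticeBox hε).1 hz i
  have hdist := abs_apply_le_norm (toRd z - y) i
  rw [dist_eq_norm, div_le_iff₀ hε]
  rw [PiLp.sub_apply, toRd_apply] at hdist
  rcases le_or_gt (ε * y i) (lo i) with hylo | hylo
  · nlinarith [le_abs_self ((z i : ℝ) - y i)]
  · nlinarith [neg_le_abs ((z i : ℝ) - y i), hyi hylo]

lemma filter_isBadSite_subset [NeZero d] {ε r ρ : ℝ} (hε : 0 < ε) {lo hi : Fin d → ℝ}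
    (hρ : ρ < r / ε) (hr : ε * irange d E0 ≤ r) :
    {z ∈ latticeBox ε lo hi |
        IsBadSite E0 (rescaledBox ε lo hi) (fun x => ε⁻¹ • g x) (T / ε) ρ z} ⊆
      latticeBox ε lo hi \ latticeBox ε (fun i => lo i + r) (fun i => hi i - r) ∪
        exceptionalSites E0 T g (latticeBox ε lo hi) := fun z hz => by
  obtain ⟨hzL, hbad⟩ := Finset.mem_filter.1 hz
  rw [Finset.mem_union, Finset.mem_sdiff]
  by_cases hzr : z ∈ latticeBox ε (fun i => lo i + r) (fun i => hi i - r)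
  swap
  · exact Or.inl ⟨hzL, hzr⟩
  have hscale (w : Zd d) : T / ε < ‖ε⁻¹ • g w‖ ↔ T < ‖g w‖ := by
    rw [norm_smul, norm_inv, Real.norm_of_nonneg hε.le, ← div_eq_inv_mul,
      div_lt_div_iff_of_pos_right hε]
  simp only [IsBadSite, hscale] at hbad
  refine Or.inr (Finset.mem_filter.2 ⟨hzL, ?_⟩)
  rcases hbad with hnear | hval | ⟨b, hb, hval⟩
  · exact absurd (div_le_infDist_toRd_compl_rescaledBox hε hzr) (hnear.trans_lt hρ).not_ge
  · exact Or.inl hval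
  · refine Or.inr ⟨b, hb, ?_, hval⟩
    have hbr (i) : ε * |(b i : ℝ)| ≤ r := hr.trans' <| mul_le_mul_of_nonneg_left
      (((toRd_apply b i ▸ abs_apply_le_norm (toRd b) i)).trans (norm_toRd_le_irange hb)) hε.le
    simpa using add_mem_latticeBox hε hbr hzr

end ExceptionalSites

section LocalLowerBound

variable {Ω : Type*} {τ : Zd d → Ω → Ω} {E0 : Finset (Zd d)} {p c₁ : ℝ}
  {V : Zd d → Ω → Rn n → ℝ} {lam : Zd d → Ω → ℝ}

lemma energyE_openBox (τ : Zd d → Ω → Ω) (V : Zd d → Ω → Rn n → ℝ) (ε : ℝ) (ω : Ω)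
    (u : Zd d → Rn n) (lo hi : Fin d → ℝ) :
    energyE τ E0 V ε ω u (openBox lo hi) =
      ε ^ d * energy1 τ E0 V ω (fun z => ε⁻¹ • u z) (rescaledBox ε lo hi) := by
  simp only [energyE, energy1, rescaledBox, ← smul_sub, smul_smul, mul_inv, mul_comm ε⁻¹,
    Set.mem_ofPred_eq]

lemma sum_filter_isBadSite_le [NeZero d] {f : Ω → ℝ}
    (hf : ∀ ω, 0 ≤ f ω) (ω : Ω) (g : Zd d → Rn n) {ε r ρ T : ℝ} (hε : 0 < ε)
    {lo hi lo' hi' : Fin d → ℝ} (hlo : ∀ i, lo i + r ≤ lo' i) (hhi : ∀ i, hi' i ≤ hi i - r)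
    (hρ : ρ < r / ε) (hr : ε * irange d E0 ≤ r) (hr0 : 0 ≤ r) :
    ε ^ d * ∑ z ∈ latticeBox ε lo hi with
        IsBadSite E0 (rescaledBox ε lo hi) (fun x => ε⁻¹ • g x) (T / ε) ρ z, f (τ z ω) ≤
      boxAverage τ f ω lo hi ε - boxAverage τ f ω lo' hi' ε +
        ε ^ d * ∑ z ∈ exceptionalSites E0 T g (latticeBox ε lo hi), f (τ z ω) := by
  have hinner : latticeBox ε lo' hi' ⊆ latticeBox ε lo hi :=
    latticeBox_subset_latticeBox hε (fun i => by linarith [hlo i]) fun i => by linarith [hhi i]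
  have hsub : {z ∈ latticeBox ε lo hi |
        IsBadSite E0 (rescaledBox ε lo hi) (fun x => ε⁻¹ • g x) (T / ε) ρ z} ⊆
      latticeBox ε lo hi \ latticeBox ε lo' hi' ∪
        exceptionalSites E0 T g (latticeBox ε lo hi) :=
    (filter_isBadSite_subset hε hρ hr).trans (Finset.union_subset_union_left
      (Finset.sdiff_subset_sdiff le_rfl (latticeBox_subset_latticeBox hε hlo hhi)))
  rw [boxAverage, boxAverage, ← mul_sub, ← mul_add]
  gcongr
  refine (Finset.sum_le_sum_of_subset_of_nonneg hsub fun z _ _ => hf _).trans ?_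
  rw [← Finset.sum_sdiff_eq_sub hinner, ← Finset.sum_union_inter]
  exact le_add_of_nonneg_right (Finset.sum_nonneg fun z _ => hf _)

lemma HasGrowth.exists_mul_pow_mul_mF_rescaledBox_le [NeZero d] (hG : HasGrowth E0 p c₁ V lam)
    (hV : ∀ b ∈ E0, ∀ ω r, 0 ≤ V b ω r) (hE0 : 0 ∉ E0) {K : ℝ} (hK : 0 ≤ K) :
    ∃ C, 0 ≤ C ∧ ∀ (ω : Ω) (F : Rd d →L[ℝ] Rn n) (c : Rn n) (u : Zd d → Rn n)
      (lo hi lo' hi' : Fin d → ℝ) (ε T r : ℝ) (J : ℕ), ‖F‖ ≤ K → 0 < ε → 0 < T →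
      4 ^ (J + 1) * (J + 2) * T ≤ r → 2 * (J + 2) * (ε * irange d E0) ≤ r →
      (∀ i, lo i + r ≤ lo' i) → (∀ i, hi' i ≤ hi i - r) →
        J * (ε ^ d * mF τ E0 V ω F (rescaledBox ε lo hi)) ≤
          (J + C) * energyE τ E0 V ε ω u (openBox lo hi) +
          C * boxAverage τ (fun x => 1 + totalWeight E0 lam x) ω lo hi ε +
          J * (C * (boxAverage τ (fun x => 1 + totalWeight E0 lam x) ω lo hi ε -
            boxAverage τ (fun x => 1 + totalWeight E0 lam x) ω lo' hi' ε +
            ε ^ d * ∑ z ∈ exceptionalSites E0 T (fun z => u z - (F (ε • toRd z) + c))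
              (latticeBox ε lo hi), (1 + totalWeight E0 lam (τ z ω)))) := by
  obtain ⟨C, hC, hle⟩ := hG.exists_mul_mF_le (τ := τ) hV hE0 hK
  refine ⟨C, hC, fun ω F c u lo hi lo' hi' ε T r J hF hε hT hTr hεr hlo hhi => ?_⟩
  have hweight (ω) : 0 ≤ 1 + totalWeight E0 lam ω := by linarith [hG.totalWeight_nonneg ω]
  have hr : 0 < r := lt_of_lt_of_le (by positivity) hTr
  have hrange : ε * irange d E0 ≤ r := hεr.trans' <| le_mul_of_one_le_left
    (mul_nonneg hε.le (irange_nonneg E0)) (by linarith [J.cast_nonneg (α := ℝ)])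
  set g : Zd d → Rn n := fun z => u z - (F (ε • toRd z) + c) with hg
  have hlevel := hle ω (rescaledBox ε lo hi) F (ε⁻¹ • c) (fun z => ε⁻¹ • g z) (T / ε)
    (r / (2 * (J + 2)) / ε) J (isBounded_rescaledBox hε lo hi) hF (by positivity)
    (by
      rw [← mul_div_assoc, ← mul_div_assoc, div_le_div_iff_of_pos_right hε,
        le_div_iff₀ (by positivity)]
      refine hTr.trans' (le_of_eq ?_)
      ring)
    (by
      rw [le_div_iff₀ hε, le_div_iff₀ (by positivity)]
      linarith)
  have hu : (fun z => F (toRd z) + ε⁻¹ • c + ε⁻¹ • g z) = fun z => ε⁻¹ • u z := by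
    funext z
    rw [hg, smul_sub, smul_add, map_smul, smul_smul, inv_mul_cancel₀ hε.ne', one_smul]
    abel
  rw [hu, latticePoints_rescaledBox hε] at hlevel
  have hbad := sum_filter_isBadSite_le (τ := τ) hweight ω g (T := T)
    (ρ := (J + 2) * (r / (2 * (J + 2)) / ε)) hε hlo hhi
    (by
      rw [show ((J : ℝ) + 2) * (r / (2 * (J + 2)) / ε) = r / ε / 2 by field_simp]
      exact half_lt_self (by positivity)) hrange hr.le
  have hlevel' := mul_le_mul_of_nonneg_left hlevel (pow_nonneg hε.le d)
  have hbad' := mul_le_mul_of_nonneg_left hbad (mul_nonneg J.cast_nonneg hC)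
  rw [energyE_openBox]
  simp only [boxAverage] at hbad' ⊢
  linarith

variable [MeasurableSpace Ω] {P : Measure Ω}

lemma HasErgodicLimit.tendsto_boxAverage_sub {f : Ω → ℝ} {ω : Ω} (hf : HasErgodicLimit P τ f ω)
    {lo hi : Fin d → ℝ} (h : ∀ i, lo i < hi i) {θ : ℝ} (hθ : θ < 1 / 2) :
    Tendsto (fun ε => boxAverage τ f ω lo hi ε - boxAverage τ f ω
        (fun i => lo i + θ * (hi i - lo i)) (fun i => hi i - θ * (hi i - lo i)) ε) (𝓝[>] 0)
      (𝓝 ((1 - (1 - 2 * θ) ^ d) * ((∏ i, (hi i - lo i)) * ∫ x, f x ∂P))) := by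
  have hside (i) : hi i - θ * (hi i - lo i) - (lo i + θ * (hi i - lo i)) =
      (1 - 2 * θ) * (hi i - lo i) := by ring
  have hinner := hf (fun i => lo i + θ * (hi i - lo i)) (fun i => hi i - θ * (hi i - lo i))
    fun i => sub_pos.1 (hside i ▸ mul_pos (by linarith) (sub_pos.2 (h i)))
  simp only [hside, Finset.prod_mul_distrib, Finset.prod_const, Finset.card_univ,
    Fintype.card_fin] at hinner
  convert (hf lo hi h).sub hinner using 2
  ring

theorem HasGrowth.exists_eventually_mul_W0_le [NeZero d] (hG : HasGrowth E0 p c₁ V lam)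
    (hV : ∀ b ∈ E0, ∀ ω r, 0 ≤ V b ω r) (hE0 : 0 ∉ E0) {K : ℝ} (hK : 0 ≤ K) :
    ∃ C, 0 ≤ C ∧ ∀ (ω : Ω) (F : Rd d →L[ℝ] Rn n) (c : Rn n) (u : Rd d → Rn n)
      (uε : ℝ → Zd d → Rn n) (lo hi : Fin d → ℝ) (θ T : ℝ) (J : ℕ),
      HasErgodicLimit P τ (fun x => 1 + totalWeight E0 lam x) ω →
      HasNegligibleSparseSums τ (fun x => 1 + totalWeight E0 lam x) ω →
      (∀ δ > 0, ∀ᶠ ε in 𝓝[>] 0, (∏ i, (hi i - lo i)) * W0 P τ E0 V F - δ ≤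
        ε ^ d * mF τ E0 V ω F (rescaledBox ε lo hi)) →
      ‖F‖ ≤ K → θ < 1 / 2 → 0 < T →
      (∀ i, 4 ^ (J + 1) * (J + 2) * T ≤ θ * (hi i - lo i)) → (∀ i, lo i < hi i) →
      (∀ x ∈ openBox lo hi, ‖u x - (F x + c)‖ ≤ T / 2) →
      Tendsto (fun ε => ε ^ d * ∑ z ∈ latticeBox ε lo hi, ‖uε ε z - u (ε • toRd z)‖)
        (𝓝[>] 0) (𝓝 0) →
      ∀ δ > 0, ∀ᶠ ε in 𝓝[>] 0, J * ((∏ i, (hi i - lo i)) * W0 P τ E0 V F) - δ ≤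
        (J + C) * energyE τ E0 V ε ω (uε ε) (openBox lo hi) +
        C * (1 + J * (1 - (1 - 2 * θ) ^ d)) *
          ((∏ i, (hi i - lo i)) * ∫ x, (1 + totalWeight E0 lam x) ∂P) := by
  obtain ⟨C, hC, hle⟩ := hG.exists_mul_pow_mul_mF_rescaledBox_le (τ := τ) hV hE0 hK
  refine ⟨C, hC, fun ω F c u uε lo hi θ T J herg hsparse hmF hF hθ hT hTθ h hu hconv δ hδ => ?_⟩
  have hexc := hsparse lo hi h (fun ε => exceptionalSites E0 T
      (fun z => uε ε z - (F (ε • toRd z) + c)) (latticeBox ε lo hi))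
    (fun ε => exceptionalSites_subset) (tendsto_pow_mul_card_exceptionalSites hT
      (fun ε hε z hz => by
        rw [sub_sub_sub_cancel_left]
        exact hu _ ((mem_latticeBox_iff_mem_rescaledBox hε).1 hz)) hconv)
  have herror := ((herg lo hi h).const_mul C).add
    ((((herg.tendsto_boxAverage_sub h hθ).add hexc).const_mul C).const_mul (J : ℝ))
  set r := 4 ^ (J + 1) * (J + 2) * T
  have hrange : ∀ᶠ ε in 𝓝[>] 0, 2 * (J + 2) * (ε * irange d E0) < r := by
    have : Tendsto (fun ε => 2 * ((J : ℝ) + 2) * (ε * irange d E0)) (𝓝 0) (𝓝 0) :=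
      Continuous.tendsto' (by fun_prop) _ _ (by simp)
    exact (this.mono_left nhdsWithin_le_nhds).eventually_lt_const (by positivity)
  filter_upwards [hmF (δ / (2 * (J + 1))) (by positivity), hrange, self_mem_nhdsWithin,
    herror.eventually_lt_const (lt_add_of_pos_right _ (half_pos hδ))] with ε hεmF hεr hε hεerror
  have hεle := hle ω F c (uε ε) lo hi (fun i => lo i + θ * (hi i - lo i))
    (fun i => hi i - θ * (hi i - lo i)) ε T r J hF hε hT le_rfl hεr.le
    (fun i => by linarith [hTθ i]) (fun i => by linarith [hTθ i])
  have hεJ := mul_le_mul_of_nonneg_left hεmF J.cast_nonneg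
  have hδJ : J * (δ / (2 * (J + 1))) ≤ δ / 2 := by
    rw [mul_div_left_comm]
    field_simp
    linarith
  linarith

end LocalLowerBound

/-! ### Subdivision of boxes -/

lemma openBox_eq_preimage (a b : Fin d → ℝ) : openBox a b =
    (EuclideanSpace.equiv (Fin d) ℝ).toHomeomorph ⁻¹' univ.pi fun i => Ioo (a i) (b i) := by
  ext x; exact mem_univ_pi.symm

lemma closedBox_eq_preimage (a b : Fin d → ℝ) : closedBox a b =
    (EuclideanSpace.equiv (Fin d) ℝ).toHomeomorph ⁻¹' univ.pi fun i => Icc (a i) (b i) := by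
  ext x; exact mem_univ_pi.symm

lemma measurableSet_openBox (a b : Fin d → ℝ) : MeasurableSet (openBox a b) := by
  rw [openBox_eq_preimage]
  exact Homeomorph.measurable _ (MeasurableSet.univ_pi fun _ => measurableSet_Ioo)

lemma volume_openBox (a b : Fin d → ℝ) :
    volume (openBox a b) = ∏ i, ENNReal.ofReal (b i - a i) := by
  rw [openBox_eq_preimage, ← Real.volume_pi_Ioo]
  exact (PiLp.volume_preserving_ofLp (Fin d)).measure_preimage
    (MeasurableSet.univ_pi fun _ => measurableSet_Ioo).nullMeasurableSet

lemma volume_openBox_lt_top (a b : Fin d → ℝ) : volume (openBox a b) < ⊤ := by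
  rw [volume_openBox]
  exact ENNReal.prod_lt_top fun _ _ => ENNReal.ofReal_lt_top

lemma measureReal_openBox {a b : Fin d → ℝ} (h : a ≤ b) :
    volume.real (openBox a b) = ∏ i, (b i - a i) := by
  rw [Measure.real, volume_openBox, ENNReal.toReal_prod]
  exact Finset.prod_congr rfl fun i _ => ENNReal.toReal_ofReal (sub_nonneg.2 (h i))

lemma openBox_eq_empty {a b : Fin d → ℝ} (h : ¬∀ i, a i < b i) : openBox a b = ∅ :=
  eq_empty_of_forall_notMem fun _ hx => h fun i => (hx i).1.trans (hx i).2

lemma isCompact_closedBox (a b : Fin d → ℝ) : IsCompact (closedBox a b) := by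
  rw [closedBox_eq_preimage, Homeomorph.isCompact_preimage]
  exact isCompact_univ_pi fun _ => isCompact_Icc

lemma convex_closedBox (a b : Fin d → ℝ) : Convex ℝ (closedBox a b) :=
  fun _ hx _ hy _ _ hs ht hst i => convex_Icc (a i) (b i) (hx i) (hy i) hs ht hst

lemma openBox_subset_closedBox (a b : Fin d → ℝ) : openBox a b ⊆ closedBox a b :=
  fun _ hx i => ⟨(hx i).1.le, (hx i).2.le⟩

lemma closure_openBox {a b : Fin d → ℝ} (h : ∀ i, a i < b i) :
    closure (openBox a b) = closedBox a b := by
  simp only [openBox_eq_preimage, closedBox_eq_preimage, ← Homeomorph.preimage_closure,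
    closure_pi_set, closure_Ioo (h _).ne]

lemma norm_sub_le_of_mem_closedBox {a b : Fin d → ℝ} {x y : Rd d} (hx : x ∈ closedBox a b)
    (hy : y ∈ closedBox a b) : ‖x - y‖ ≤ ‖WithLp.toLp 2 (b - a)‖ := by
  simp only [EuclideanSpace.norm_eq]
  gcongr with i
  simp only [PiLp.sub_apply, Pi.sub_apply, Real.norm_eq_abs]
  rw [abs_of_nonneg (sub_nonneg.2 ((hx i).1.trans (hx i).2)), abs_le]
  constructor <;> linarith [(hx i).1, (hx i).2, (hy i).1, (hy i).2]

section Subdivision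

variable {a b : Fin d → ℝ} {M : ℕ}

/-- The lower corner of the `k`-th of the `M ^ d` congruent boxes into which the box with corners
`a` and `b` is subdivided. -/
def subdivisionLower (a b : Fin d → ℝ) (M : ℕ) (k : Fin d → Fin M) (i : Fin d) : ℝ :=
  a i + (k i : ℕ) * ((b i - a i) / M)

/-- The upper corner of the `k`-th of the `M ^ d` congruent boxes into which the box with corners
`a` and `b` is subdivided. -/
def subdivisionUpper (a b : Fin d → ℝ) (M : ℕ) (k : Fin d → Fin M) (i : Fin d) : ℝ :=
  subdivisionLower a b M k i + (b i - a i) / M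

lemma subdivisionUpper_sub_subdivisionLower (a b : Fin d → ℝ) (k : Fin d → Fin M) (i : Fin d) :
    subdivisionUpper a b M k i - subdivisionLower a b M k i = (b i - a i) / M :=
  add_sub_cancel_left _ _

lemma norm_toLp_subdivisionUpper_sub_subdivisionLower (a b : Fin d → ℝ) (k : Fin d → Fin M) :
    ‖WithLp.toLp 2 (subdivisionUpper a b M k - subdivisionLower a b M k)‖ =
      ‖WithLp.toLp 2 (b - a)‖ / M := by
  have : subdivisionUpper a b M k - subdivisionLower a b M k = (M : ℝ)⁻¹ • (b - a) :=
    funext fun i => (subdivisionUpper_sub_subdivisionLower a b k i).trans (div_eq_inv_mul _ _)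
  rw [this, WithLp.toLp_smul, norm_smul, norm_inv, Real.norm_natCast, ← div_eq_inv_mul]

lemma subdivisionLower_lt_subdivisionUpper (h : ∀ i, a i < b i) (hM : 0 < M) (k : Fin d → Fin M)
    (i : Fin d) : subdivisionLower a b M k i < subdivisionUpper a b M k i :=
  lt_add_of_pos_right _ (div_pos (sub_pos.2 (h i)) (Nat.cast_pos.2 hM))

lemma le_subdivisionLower (h : ∀ i, a i < b i) (k : Fin d → Fin M) :
    a ≤ subdivisionLower a b M k := fun i =>
  le_add_of_nonneg_right (mul_nonneg (Nat.cast_nonneg _)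
    (div_nonneg (sub_pos.2 (h i)).le (Nat.cast_nonneg _)))

lemma subdivisionUpper_le (h : ∀ i, a i < b i) (hM : 0 < M) (k : Fin d → Fin M) :
    subdivisionUpper a b M k ≤ b := fun i => by
  have hside : 0 < b i - a i := sub_pos.2 (h i)
  have hk : (k i : ℝ) + 1 ≤ M := by exact_mod_cast (k i).2
  calc subdivisionUpper a b M k i
      = a i + (k i + 1) * ((b i - a i) / M) := by
        simp only [subdivisionUpper, subdivisionLower]; ring
    _ ≤ a i + M * ((b i - a i) / M) := by gcongr
    _ = b i := by field_simp; ring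

lemma openBox_subdivision_subset (h : ∀ i, a i < b i) (hM : 0 < M) (k : Fin d → Fin M) :
    openBox (subdivisionLower a b M k) (subdivisionUpper a b M k) ⊆ openBox a b := fun _ hx i =>
  ⟨(le_subdivisionLower h k i).trans_lt (hx i).1, (hx i).2.trans_le (subdivisionUpper_le h hM k i)⟩

lemma closedBox_subdivision_subset (h : ∀ i, a i < b i) (hM : 0 < M) (k : Fin d → Fin M) :
    closedBox (subdivisionLower a b M k) (subdivisionUpper a b M k) ⊆ closedBox a b :=
  fun _ hx i => ⟨(le_subdivisionLower h k i).trans (hx i).1,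
    (hx i).2.trans (subdivisionUpper_le h hM k i)⟩

lemma pairwise_disjoint_openBox_subdivision (h : ∀ i, a i < b i) (hM : 0 < M) :
    Pairwise (Function.onFun Disjoint fun k : Fin d → Fin M =>
      openBox (subdivisionLower a b M k) (subdivisionUpper a b M k)) := by
  refine fun k k' hk => disjoint_left.2 fun x hx hx' => hk (funext fun i => Fin.ext ?_)
  have hs : 0 < (b i - a i) / M := div_pos (sub_pos.2 (h i)) (Nat.cast_pos.2 hM)
  have lt_succ : ∀ {l l' : Fin d → Fin M},
      x ∈ openBox (subdivisionLower a b M l) (subdivisionUpper a b M l) →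
      x ∈ openBox (subdivisionLower a b M l') (subdivisionUpper a b M l') →
      (l i : ℕ) < l' i + 1 := by
    intro l l' hl hl'
    have := (hl i).1.trans (hl' i).2
    simp only [subdivisionUpper, subdivisionLower, add_assoc, ← add_one_mul] at this
    exact_mod_cast lt_of_mul_lt_mul_right (lt_of_add_lt_add_left this) hs.le
  have := lt_succ hx hx'
  have := lt_succ hx' hx
  lia

lemma sum_prod_subdivisionUpper_sub_subdivisionLower (a b : Fin d → ℝ) (hM : 0 < M) :
    ∑ k : Fin d → Fin M, ∏ i, (subdivisionUpper a b M k i - subdivisionLower a b M k i) =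
      ∏ i, (b i - a i) := by
  simp only [subdivisionUpper_sub_subdivisionLower, Finset.sum_const, Finset.card_univ,
    Fintype.card_pi, Fintype.card_fin, Finset.prod_const, Finset.prod_div_distrib, nsmul_eq_mul,
    Nat.cast_pow]
  field_simp

lemma iUnion_openBox_subdivision_ae_eq (h : ∀ i, a i < b i) (hM : 0 < M) :
    (⋃ k : Fin d → Fin M, openBox (subdivisionLower a b M k) (subdivisionUpper a b M k))
      =ᵐ[volume] openBox a b := by
  have hdisj := pairwise_disjoint_openBox_subdivision h hM
  have hsub := iUnion_subset (openBox_subdivision_subset h hM)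
  refine ae_eq_of_subset_of_measure_ge hsub ?_
    (MeasurableSet.iUnion fun _ => measurableSet_openBox _ _).nullMeasurableSet
    (volume_openBox_lt_top a b).ne
  rw [← ENNReal.toReal_le_toReal (volume_openBox_lt_top a b).ne
    ((measure_mono hsub).trans_lt (volume_openBox_lt_top a b)).ne]
  change volume.real _ ≤ volume.real _
  rw [measureReal_iUnion_fintype hdisj (fun _ => measurableSet_openBox _ _)
      (fun _ => (volume_openBox_lt_top _ _).ne), measureReal_openBox fun i => (h i).le]
  simp only [measureReal_openBox fun i => (subdivisionLower_lt_subdivisionUpper h hM _ i).le,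
    sum_prod_subdivisionUpper_sub_subdivisionLower a b hM, le_refl]

lemma setIntegral_openBox_le_sum (h : ∀ i, a i < b i) (hM : 0 < M) {f : Rd d → ℝ}
    (hf : IntegrableOn f (openBox a b)) {w : (Fin d → Fin M) → ℝ}
    (hw : ∀ k, ∀ x ∈ openBox (subdivisionLower a b M k) (subdivisionUpper a b M k), f x ≤ w k) :
    ∫ x in openBox a b, f x ≤
      ∑ k, (∏ i, (subdivisionUpper a b M k i - subdivisionLower a b M k i)) * w k := by
  have hfk := fun k => hf.mono_set (openBox_subdivision_subset h hM k)
  rw [← setIntegral_congr_set (iUnion_openBox_subdivision_ae_eq h hM),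
    integral_iUnion_fintype (fun _ => measurableSet_openBox _ _)
      (pairwise_disjoint_openBox_subdivision h hM) hfk]
  refine Finset.sum_le_sum fun k _ => ?_
  have hconst : IntegrableOn (fun _ => w k)
      (openBox (subdivisionLower a b M k) (subdivisionUpper a b M k)) :=
    integrableOn_const (volume_openBox_lt_top _ _).ne
  refine (setIntegral_mono_on (hfk k) hconst (measurableSet_openBox _ _) (hw k)).trans_eq ?_
  rw [setIntegral_const, smul_eq_mul,
    measureReal_openBox fun i => (subdivisionLower_lt_subdivisionUpper h hM k i).le]

end Subdivision

section Energy

variable {Ω : Type*} {τ : Zd d → Ω → Ω} {E0 : Finset (Zd d)} {V : Zd d → Ω → Rn n → ℝ} {ε : ℝ}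
  {a b : Fin d → ℝ}

lemma energyE_openBox_eq_sum (τ : Zd d → Ω → Ω) (V : Zd d → Ω → Rn n → ℝ) (hε : 0 < ε) (ω : Ω)
    (u : Zd d → Rn n) (a b : Fin d → ℝ) : energyE τ E0 V ε ω u (openBox a b) =
      ε ^ d * ∑ z ∈ latticeBox ε a b, siteEnergy τ E0 V ω (fun z => ε⁻¹ • u z) z := by
  rw [energyE_openBox, energy1_eq_sum _ _ _ _ _ (isBounded_rescaledBox hε a b),
    latticePoints_rescaledBox hε]

lemma energyE_openBox_nonneg (hV : ∀ b ∈ E0, ∀ ω r, 0 ≤ V b ω r) (hε : 0 < ε) (ω : Ω)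
    (u : Zd d → Rn n) (a b : Fin d → ℝ) : 0 ≤ energyE τ E0 V ε ω u (openBox a b) := by
  rw [energyE_openBox_eq_sum _ _ hε]
  exact mul_nonneg (by positivity) (Finset.sum_nonneg fun z _ => siteEnergy_nonneg hV ω _ z)

lemma sum_energyE_subdivision_le (hV : ∀ b ∈ E0, ∀ ω r, 0 ≤ V b ω r) (hε : 0 < ε) (ω : Ω)
    (u : Zd d → Rn n) (h : ∀ i, a i < b i) {M : ℕ} (hM : 0 < M) :
    ∑ k : Fin d → Fin M,
        energyE τ E0 V ε ω u (openBox (subdivisionLower a b M k) (subdivisionUpper a b M k)) ≤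
      energyE τ E0 V ε ω u (openBox a b) := by
  have hdisj : ((Finset.univ : Finset (Fin d → Fin M)) : Set _).PairwiseDisjoint fun k =>
      latticeBox ε (subdivisionLower a b M k) (subdivisionUpper a b M k) := fun k _ k' _ hk =>
    Finset.disjoint_left.2 fun z hz hz' =>
      disjoint_left.1 (pairwise_disjoint_openBox_subdivision h hM hk)
        ((mem_latticeBox_iff_mem_rescaledBox hε).1 hz)
        ((mem_latticeBox_iff_mem_rescaledBox hε).1 hz')
  simp only [energyE_openBox_eq_sum _ _ hε]
  rw [← Finset.mul_sum, ← Finset.sum_biUnion hdisj]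
  gcongr
  · exact fun _ _ _ => siteEnergy_nonneg hV ω _ _
  · exact Finset.biUnion_subset.2 fun k _ => latticeBox_subset_latticeBox hε
      (le_subdivisionLower h k) (subdivisionUpper_le h hM k)

lemma tsum_ite_openBox (hε : 0 < ε) (f : Zd d → ℝ) (a b : Fin d → ℝ) :
    ∑' z : Zd d, (if ε • toRd z ∈ openBox a b then f z else 0) =
      ∑ z ∈ latticeBox ε a b, f z := by
  have hmem : ∀ z, ε • toRd z ∈ openBox a b ↔ z ∈ latticeBox ε a b := fun _ =>
    (mem_latticeBox_iff_mem_rescaledBox hε).symm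
  simp only [hmem]
  rw [tsum_eq_sum fun z hz => if_neg hz]
  exact Finset.sum_congr rfl fun z hz => if_pos hz

end Energy

/-! ### Freezing the gradient -/

section Dense

variable {X : Type*} [PseudoMetricSpace X] [SecondCountableTopology X]

lemma exists_countable_dense_graph (W : X → ℝ) :
    ∃ D : Set X, D.Countable ∧ ∀ x, ∀ r > 0, ∃ y ∈ D, dist y x < r ∧ |W y - W x| < r := by
  obtain ⟨S, hS, hdense⟩ := TopologicalSpace.exists_countable_dense (range fun x => (x, W x))
  refine ⟨(fun q => q.1.1) '' S, hS.image _, fun x r hr => ?_⟩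
  obtain ⟨⟨_, y, rfl⟩, hy, hdist⟩ := hdense.exists_dist_lt ⟨(x, W x), x, rfl⟩ hr
  rw [Subtype.dist_eq, Prod.dist_eq, max_lt_iff, dist_comm x, dist_comm (W x)] at hdist
  exact ⟨y, ⟨_, hy, rfl⟩, hdist⟩

/-- Density of the graph replaces the continuity of `W`. -/
lemma exists_countable_nearly_maximal (W : X → ℝ) :
    ∃ D : Set X, D.Countable ∧ ∀ x r, 0 < r → BddAbove (W '' ball x r) → ∀ δ > 0,
      ∃ y ∈ D, y ∈ ball x r ∧ ∀ x' ∈ ball x r, W x' ≤ W y + δ := by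
  obtain ⟨D, hD, hgraph⟩ := exists_countable_dense_graph W
  refine ⟨D, hD, fun x r hr hbdd δ hδ => ?_⟩
  obtain ⟨_, ⟨x₁, hx₁, rfl⟩, hmax⟩ := exists_lt_of_lt_csSup ((nonempty_ball.2 hr).image W)
    (sub_lt_self (sSup (W '' ball x r)) (half_pos hδ))
  obtain ⟨y, hy, hdist, hW⟩ := hgraph x₁ (min (r - dist x₁ x) (δ / 2))
    (lt_min (sub_pos.2 hx₁) (half_pos hδ))
  refine ⟨y, hy, ?_, fun x' hx' => ?_⟩
  · have := dist_triangle y x₁ x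
    have := hdist.trans_le (min_le_left _ _)
    rw [mem_ball]
    linarith
  · have := le_csSup hbdd (mem_image_of_mem W hx')
    have := (abs_lt.1 (hW.trans_le (min_le_right _ _))).1
    linarith

end Dense

section Freezing

variable {a b : Fin d → ℝ} {u : Rd d → Rn n}

lemma exists_subdivision_norm_fderiv_sub_lt (hab : ∀ i, a i < b i)
    (hu : ContinuousOn (fderiv ℝ u) (closedBox a b)) {r : ℝ} (hr : 0 < r) :
    ∃ M : ℕ, 0 < M ∧ ∀ k : Fin d → Fin M,
      ∀ x ∈ closedBox (subdivisionLower a b M k) (subdivisionUpper a b M k),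
      ∀ y ∈ closedBox (subdivisionLower a b M k) (subdivisionUpper a b M k),
        ‖fderiv ℝ u x - fderiv ℝ u y‖ < r := by
  obtain ⟨η, hη, hmod⟩ := Metric.uniformContinuousOn_iff.1
    ((isCompact_closedBox a b).uniformContinuousOn_of_continuous hu) r hr
  obtain ⟨M, hM⟩ := exists_nat_gt (max 0 (‖WithLp.toLp 2 (b - a)‖ / η))
  have hM0 : (0 : ℝ) < M := (le_max_left _ _).trans_lt hM
  have hdiam : ‖WithLp.toLp 2 (b - a)‖ / M < η :=
    (div_lt_comm₀ hM0 hη).2 ((le_max_right _ _).trans_lt hM)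
  have hsub := closedBox_subdivision_subset hab (Nat.cast_pos.1 hM0)
  refine ⟨M, Nat.cast_pos.1 hM0, fun k x hx y hy => ?_⟩
  rw [← dist_eq_norm]
  refine hmod x (hsub k hx) y (hsub k hy) ?_
  rw [dist_eq_norm]
  refine (norm_sub_le_of_mem_closedBox hx hy).trans_lt ?_
  rwa [norm_toLp_subdivisionUpper_sub_subdivisionLower]

lemma norm_sub_affine_le_of_norm_fderiv_sub_le {E G : Type*} [NormedAddCommGroup E]
    [NormedSpace ℝ E] [NormedAddCommGroup G] [NormedSpace ℝ G] {f : E → G} {s : Set E}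
    (hs : Convex ℝ s) (hf : ∀ x ∈ s, DifferentiableAt ℝ f x) {F : E →L[ℝ] G} {C : ℝ}
    (hF : ∀ x ∈ s, ‖fderiv ℝ f x - F‖ ≤ C) {x y : E} (hx : x ∈ s) (hy : y ∈ s) :
    ‖f y - (F y + (f x - F x))‖ ≤ C * ‖y - x‖ := by
  have : f y - (F y + (f x - F x)) = f y - f x - F (y - x) := by rw [map_sub]; abel
  rw [this]
  exact hs.norm_image_sub_le_of_norm_fderiv_le' (𝕜 := ℝ) hf hF hx hy

lemma exists_subdivision_nearly_affine (hab : ∀ i, a i < b i)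
    (hdiff : ∀ x ∈ closedBox a b, DifferentiableAt ℝ u x)
    (hu : ContinuousOn (fderiv ℝ u) (closedBox a b)) {K : ℝ}
    (hK : ∀ x ∈ closedBox a b, ‖fderiv ℝ u x‖ ≤ K) {W : (Rd d →L[ℝ] Rn n) → ℝ}
    {D : Set (Rd d →L[ℝ] Rn n)} {δ κ : ℝ}
    (hD : ∀ F₀, ∀ r > 0, ∃ F ∈ D, F ∈ ball F₀ r ∧ ∀ F' ∈ ball F₀ r, W F' ≤ W F + δ)
    (hκ : 0 < κ) :
    ∃ M : ℕ, 0 < M ∧ ∃ (F : (Fin d → Fin M) → Rd d →L[ℝ] Rn n) (c : (Fin d → Fin M) → Rn n),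
      ∀ k, F k ∈ D ∧ ‖F k‖ ≤ K + 1 ∧
        ∀ x ∈ openBox (subdivisionLower a b M k) (subdivisionUpper a b M k),
          ‖u x - (F k x + c k)‖ ≤ κ / M ∧ W (fderiv ℝ u x) ≤ W (F k) + δ := by
  set L := ‖WithLp.toLp 2 (b - a)‖
  have hL : 0 < L + 1 := by positivity
  set r := min 1 (κ / (2 * (L + 1)))
  have hr : 0 < r := by positivity
  obtain ⟨M, hM, hmod⟩ := exists_subdivision_norm_fderiv_sub_lt hab hu hr
  have hsub := closedBox_subdivision_subset hab hM
  obtain ⟨x₀, hx₀⟩ : ∃ x₀ : (Fin d → Fin M) → Rd d, ∀ k, x₀ k ∈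
      closedBox (subdivisionLower a b M k) (subdivisionUpper a b M k) :=
    ⟨fun k => WithLp.toLp 2 (subdivisionLower a b M k), fun k i =>
      ⟨le_rfl, (subdivisionLower_lt_subdivisionUpper hab hM k i).le⟩⟩
  choose F hFD hFball hFmax using fun k => hD (fderiv ℝ u (x₀ k)) r hr
  simp only [mem_ball, dist_eq_norm] at hFball hFmax
  refine ⟨M, hM, F, fun k => u (x₀ k) - F k (x₀ k), fun k => ⟨hFD k, ?_, fun x hx => ?_⟩⟩
  · have := norm_le_norm_add_norm_sub' (F k) (fderiv ℝ u (x₀ k))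
    have := hK _ (hsub k (hx₀ k))
    have : r ≤ 1 := min_le_left _ _
    linarith [hFball k]
  have hx' := openBox_subset_closedBox _ _ hx
  refine ⟨?_, hFmax k _ (hmod k _ hx' _ (hx₀ k))⟩
  have hFk : ∀ y ∈ closedBox (subdivisionLower a b M k) (subdivisionUpper a b M k),
      ‖fderiv ℝ u y - F k‖ ≤ 2 * r := fun y hy => by
    have := norm_sub_le_norm_sub_add_norm_sub (fderiv ℝ u y) (fderiv ℝ u (x₀ k)) (F k)
    rw [norm_sub_rev (fderiv ℝ u (x₀ k))] at this
    linarith [hmod k y hy _ (hx₀ k), hFball k]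
  calc _ ≤ 2 * r * ‖x - x₀ k‖ := norm_sub_affine_le_of_norm_fderiv_sub_le (convex_closedBox _ _)
        (fun y hy => hdiff y (hsub k hy)) hFk (hx₀ k) hx'
    _ ≤ 2 * (κ / (2 * (L + 1))) * ((L + 1) / M) := by
        gcongr
        · exact min_le_right _ _
        · refine (norm_sub_le_of_mem_closedBox hx' (hx₀ k)).trans ?_
          rw [norm_toLp_subdivisionUpper_sub_subdivisionLower]
          gcongr
          exact le_add_of_nonneg_right zero_le_one
    _ = κ / M := by field_simp

end Freezing

/-! ### The lower bound -/

lemma exists_error_parameters {I c v : ℝ} (hc : c < I) (hv : 0 < v) (C x : ℝ) (d : ℕ) :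
    ∃ δ > 0, ∃ θ > 0, θ < 1 / 2 ∧ ∃ J : ℕ, 0 < J ∧
      (J + C) * c < J * (I - δ * v) - C * (1 + J * (1 - (1 - 2 * θ) ^ d)) * x - 1 := by
  have hg : 0 < I - c := sub_pos.2 hc
  have hlayer : Tendsto (fun θ : ℝ => C * (1 - (1 - 2 * θ) ^ d) * x) (𝓝[>] 0) (𝓝 0) :=
    (Continuous.tendsto' (by fun_prop) _ _ (by simp)).mono_left nhdsWithin_le_nhds
  obtain ⟨θ, hθ, hθ0, hθ2⟩ := ((hlayer.eventually_lt_const (show 0 < (I - c) / 4 by positivity)).and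
    (Ioo_mem_nhdsGT (show (0 : ℝ) < 1 / 2 by norm_num))).exists
  obtain ⟨J, hJ⟩ := exists_nat_gt (max 0 ((C * c + C * x + 1) / ((I - c) / 2)))
  have hJ0 : (0 : ℝ) < J := (le_max_left _ _).trans_lt hJ
  have hJ1 := (div_lt_iff₀ (half_pos hg)).1 ((le_max_right _ _).trans_lt hJ)
  refine ⟨(I - c) / 4 / v, by positivity, θ, hθ0, hθ2, J, Nat.cast_pos.1 hJ0, ?_⟩
  rw [div_mul_cancel₀ _ hv.ne']
  linarith [mul_lt_mul_of_pos_left hθ hJ0]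

section LowerBound

variable {P : Measure Ω} {τ : Zd d → Ω → Ω} {E0 : Finset (Zd d)} {V : Zd d → Ω → Rn n → ℝ}
  {p c₁ : ℝ} {lam : Zd d → Ω → ℝ} {a b : Fin d → ℝ} {u : Rd d → Rn n}

lemma mul_sum_sub_le_of_forall_subdivision {Ω : Type*} {τ : Zd d → Ω → Ω}
    {V : Zd d → Ω → Rn n → ℝ} (hV : ∀ b ∈ E0, ∀ ω r, 0 ≤ V b ω r) {ε : ℝ} (hε : 0 < ε) {ω : Ω}
    {uε : Zd d → Rn n} (hab : ∀ i, a i < b i) {M : ℕ} (hM : 0 < M) {w : (Fin d → Fin M) → ℝ}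
    {J B A e δ : ℝ} (hB : 0 ≤ B)
    (h : ∀ k : Fin d → Fin M,
      J * ((∏ i, (subdivisionUpper a b M k i - subdivisionLower a b M k i)) * w k) - δ ≤
        B * energyE τ E0 V ε ω uε (openBox (subdivisionLower a b M k) (subdivisionUpper a b M k)) +
        A * ((∏ i, (subdivisionUpper a b M k i - subdivisionLower a b M k i)) * e)) :
    J * ∑ k, (∏ i, (subdivisionUpper a b M k i - subdivisionLower a b M k i)) * w k - M ^ d * δ ≤
      B * energyE τ E0 V ε ω uε (openBox a b) + A * ((∏ i, (b i - a i)) * e) := by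
  have hsum := Finset.sum_le_sum fun k (_ : k ∈ Finset.univ) => h k
  simp only [Finset.sum_sub_distrib, Finset.sum_add_distrib, ← Finset.mul_sum, ← Finset.sum_mul,
    sum_prod_subdivisionUpper_sub_subdivisionLower a b hM, Finset.sum_const, Finset.card_univ,
    Fintype.card_pi, Fintype.card_fin, Finset.prod_const, nsmul_eq_mul, Nat.cast_pow] at hsum
  have := mul_le_mul_of_nonneg_left (sum_energyE_subdivision_le (τ := τ) hV hε ω uε hab hM) hB
  linarith

lemma tendsto_pow_mul_sum_subdivision (hab : ∀ i, a i < b i) {uε : ℝ → Zd d → Rn n}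
    (hconv : Tendsto (fun ε => ε ^ d * ∑ z ∈ latticeBox ε a b, ‖uε ε z - u (ε • toRd z)‖)
      (𝓝[>] 0) (𝓝 0)) {M : ℕ} (hM : 0 < M) (k : Fin d → Fin M) :
    Tendsto (fun ε => ε ^ d * ∑ z ∈ latticeBox ε (subdivisionLower a b M k)
      (subdivisionUpper a b M k), ‖uε ε z - u (ε • toRd z)‖) (𝓝[>] 0) (𝓝 0) := by
  refine tendsto_of_tendsto_of_tendsto_of_le_of_le' tendsto_const_nhds hconv ?_ ?_
  all_goals filter_upwards [self_mem_nhdsWithin] with ε (hε : 0 < ε)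
  · positivity
  · gcongr
    exact latticeBox_subset_latticeBox hε (le_subdivisionLower hab k) (subdivisionUpper_le hab hM k)

theorem HasGrowth.eventually_lt_energyE [NeZero d] (hG : HasGrowth E0 p c₁ V lam)
    (hV : ∀ b ∈ E0, ∀ ω r, 0 ≤ V b ω r) (hE0 : 0 ∉ E0) {ω : Ω}
    (herg : HasErgodicLimit P τ (fun x => 1 + totalWeight E0 lam x) ω)
    (hsparse : HasNegligibleSparseSums τ (fun x => 1 + totalWeight E0 lam x) ω)
    {D : Set (Rd d →L[ℝ] Rn n)}
    (hD : ∀ F₀, ∀ r > 0, ∀ δ > 0, ∃ F ∈ D, F ∈ ball F₀ r ∧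
      ∀ F' ∈ ball F₀ r, W0 P τ E0 V F' ≤ W0 P τ E0 V F + δ)
    (hmF : ∀ F ∈ D, ∀ lo hi : Fin d → ℝ, (∀ i, lo i < hi i) → ∀ δ > 0, ∀ᶠ ε in 𝓝[>] 0,
      (∏ i, (hi i - lo i)) * W0 P τ E0 V F - δ ≤ ε ^ d * mF τ E0 V ω F (rescaledBox ε lo hi))
    (hab : ∀ i, a i < b i) (hdiff : ∀ x ∈ closedBox a b, DifferentiableAt ℝ u x)
    (hu : ContinuousOn (fderiv ℝ u) (closedBox a b))
    (hint : IntegrableOn (fun x => W0 P τ E0 V (fderiv ℝ u x)) (openBox a b))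
    {uε : ℝ → Zd d → Rn n}
    (hconv : Tendsto (fun ε => ε ^ d * ∑ z ∈ latticeBox ε a b, ‖uε ε z - u (ε • toRd z)‖)
      (𝓝[>] 0) (𝓝 0))
    {c : ℝ} (hc : c < ∫ x in openBox a b, W0 P τ E0 V (fderiv ℝ u x)) :
    ∀ᶠ ε in 𝓝[>] (0 : ℝ), c < energyE τ E0 V ε ω (uε ε) (openBox a b) := by
  obtain ⟨K, hK⟩ := (isCompact_closedBox a b).exists_bound_of_continuousOn hu
  obtain ⟨C, hC, hbox⟩ := hG.exists_eventually_mul_W0_le (P := P) (τ := τ) hV hE0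
    (add_nonneg (abs_nonneg K) zero_le_one)
  obtain ⟨δ, hδ, θ, hθ, hθ2, J, hJ, hparam⟩ := exists_error_parameters hc
    (Finset.prod_pos fun i _ => sub_pos.2 (hab i)) C
    ((∏ i, (b i - a i)) * ∫ x, (1 + totalWeight E0 lam x) ∂P) d
  obtain ⟨i₀, hi₀⟩ := Finite.exists_min fun i => b i - a i
  have hside : 0 < b i₀ - a i₀ := sub_pos.2 (hab i₀)
  set κ := θ * (b i₀ - a i₀) / (4 ^ (J + 1) * (J + 2)) with hκ
  obtain ⟨M, hM, F, c₀, hF⟩ := exists_subdivision_nearly_affine hab hdiff hu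
    (fun x hx => (hK x hx).trans (le_abs_self K)) (fun F₀ r hr => hD F₀ r hr δ hδ)
    (show 0 < κ / 2 by positivity)
  have hM' : (0 : ℝ) < M := Nat.cast_pos.2 hM
  have hev := eventually_all.2 fun k => hbox ω (F k) (c₀ k) u uε _ _ θ (κ / M) J herg hsparse
    (hmF _ (hF k).1 _ _ (subdivisionLower_lt_subdivisionUpper hab hM k)) (hF k).2.1 hθ2
    (by positivity) (fun i => by
      rw [subdivisionUpper_sub_subdivisionLower, hκ]
      field_simp
      exact hi₀ i) (subdivisionLower_lt_subdivisionUpper hab hM k)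
    (fun x hx => (((hF k).2.2 x hx).1).trans_eq (div_right_comm _ _ _))
    (tendsto_pow_mul_sum_subdivision hab hconv hM k) ((M : ℝ) ^ d)⁻¹ (by positivity)
  filter_upwards [hev, self_mem_nhdsWithin] with ε hε (hε0 : 0 < ε)
  have hsum := mul_sum_sub_le_of_forall_subdivision hV hε0 hab hM (by positivity) hε
  have hI := setIntegral_openBox_le_sum hab hM hint fun k x hx => ((hF k).2.2 x hx).2
  simp only [mul_add, Finset.sum_add_distrib, ← Finset.sum_mul,
    sum_prod_subdivisionUpper_sub_subdivisionLower a b hM] at hI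
  rw [mul_inv_cancel₀ (by positivity)] at hsum
  have := mul_le_mul_of_nonneg_left hI (Nat.cast_nonneg J)
  exact lt_of_mul_lt_mul_left (a := (J : ℝ) + C) (by linarith) (by positivity)

lemma HasGrowth.bddAbove_W0_image_ball [IsProbabilityMeasure P] (hG : HasGrowth E0 p c₁ V lam)
    (hτ : IsMeasurePreservingAction P τ) (hV : IsRandomPotential E0 V)
    (hlam : ∀ b ∈ E0, Integrable (lam b) P) (F : Rd d →L[ℝ] Rn n) (r : ℝ) :
    BddAbove (W0 P τ E0 V '' ball F r) := by
  obtain ⟨M, hM⟩ := hG.exists_W0_le_of_norm_le hτ hV hlam (‖F‖ + r)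
  refine ⟨M, forall_mem_image.2 fun F' hF' => hM F' ?_⟩
  linarith [norm_le_norm_add_norm_sub' F' F, mem_ball_iff_norm.1 hF']

lemma IsMeasurePreservingAction.integrableOn_W0_fderiv [IsProbabilityMeasure P]
    (hτ : IsMeasurePreservingAction P τ) (hG : HasGrowth E0 p c₁ V lam)
    (hV : IsRandomPotential E0 V) (hlam : ∀ b ∈ E0, Integrable (lam b) P)
    (hu : ContinuousOn (fderiv ℝ u) (closedBox a b)) :
    IntegrableOn (fun x => W0 P τ E0 V (fderiv ℝ u x)) (openBox a b) := by
  obtain ⟨K, hK⟩ := (isCompact_closedBox a b).exists_bound_of_continuousOn hu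
  obtain ⟨B, hB⟩ := hG.exists_W0_le_of_norm_le hτ hV hlam K
  have hmeas := (hτ.measurable_W0 hV).comp (measurable_fderiv ℝ u)
  refine IntegrableOn.of_bound (C := B) (volume_openBox_lt_top a b)
    hmeas.aestronglyMeasurable ?_
  filter_upwards [ae_restrict_mem (measurableSet_openBox a b)] with x hx
  rw [Real.norm_of_nonneg (W0_nonneg hV.nonneg _)]
  exact hB _ (hK x (openBox_subset_closedBox a b hx))

lemma integrable_of_lintegral_rpow_lt_top [IsFiniteMeasure P] {f : Ω → ℝ} (hf : Measurable f)
    (hf0 : ∀ ω, 0 ≤ f ω) {α : ℝ} (hα : 1 ≤ α)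
    (hmom : ∫⁻ ω, ENNReal.ofReal (f ω ^ α) ∂P < ⊤) : Integrable f P := by
  have hint : Integrable (fun ω => f ω ^ α) P := ⟨(hf.pow_const α).aestronglyMeasurable,
    (hasFiniteIntegral_iff_ofReal (.of_forall fun ω => Real.rpow_nonneg (hf0 ω) α)).2 hmom⟩
  refine ((integrable_const (1 : ℝ)).add hint).mono' hf.aestronglyMeasurable
    (.of_forall fun ω => ?_)
  rw [Real.norm_of_nonneg (hf0 ω), Pi.add_apply]
  rcases le_total (f ω) 1 with h | h
  · linarith [Real.rpow_nonneg (hf0 ω) α]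
  · linarith [Real.self_le_rpow_of_one_le h hα]

end LowerBound

theorem gamma_liminf_general
    {d n : ℕ} [NeZero d] {Ω : Type*} [MeasurableSpace Ω] (P : Measure Ω) [IsProbabilityMeasure P]
    (τ : Zd d → Ω → Ω) (hτ : IsErgodicAction P τ) (E0 : Finset (Zd d)) (hE0 : (0 : Zd d) ∉ E0)
    (p c₁ : ℝ) (V : Zd d → Ω → Rn n → ℝ) (hV : IsRandomPotential E0 V)
    (lam : Zd d → Ω → ℝ) (hG : HasGrowth E0 p c₁ V lam) (hlam : ∀ b ∈ E0, Integrable (lam b) P) :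
    ∃ Ω₁ : Set Ω, MeasurableSet Ω₁ ∧ P Ω₁ = 1 ∧
      ∀ ω ∈ Ω₁, ∀ a b : Fin d → ℝ, ∀ u : Rd d → Rn n, ∀ U : Set (Rd d),
        IsOpen U → closure (openBox a b) ⊆ U → ContDiffOn ℝ 1 u U →
        IntegrableOn (fun x => W0 P τ E0 V (fderiv ℝ u x)) (openBox a b) ∧
        ∀ uε : ℝ → Zd d → Rn n,
          Tendsto (fun ε : ℝ => ε ^ d * ∑' z : Zd d,
              if ε • toRd z ∈ openBox a b then ‖uε ε z - u (ε • toRd z)‖ else 0)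
            (𝓝[>] (0 : ℝ)) (𝓝 0) →
          ∀ c : ℝ, c < ∫ x in openBox a b, W0 P τ E0 V (fderiv ℝ u x) →
            ∀ᶠ ε in 𝓝[>] (0 : ℝ), c < energyE τ E0 V ε ω (uε ε) (openBox a b) := by
  obtain ⟨D, hDc, hD⟩ := exists_countable_nearly_maximal (W0 P τ E0 V)
  have hbdd := hG.bddAbove_W0_image_ball hτ.toIsMeasurePreservingAction hV hlam
  have hweight : Integrable (fun ω => 1 + totalWeight E0 lam ω) P :=
    (integrable_const 1).add (integrable_totalWeight hlam)
  obtain ⟨Ω₁, hΩ₁, hmeas, hgood⟩ := ((hτ.ae_hasErgodicLimit hweight).and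
    ((hτ.ae_hasNegligibleSparseSums hweight).and ((ae_ball_iff hDc).2 fun F _ =>
      hτ.ae_eventually_le_pow_mul_mF_rescaledBox hV
        (hG.integrable_affineEnergy hV hlam F)))).exists_measurable_mem
  refine ⟨Ω₁, hmeas, (mem_ae_iff_prob_eq_one hmeas).1 hΩ₁, fun ω hω a b u U hU hAU hu => ?_⟩
  obtain ⟨herg, hsparse, hmF⟩ := hgood ω hω
  by_cases hab : ∀ i, a i < b i
  · rw [closure_openBox hab] at hAU
    have hdiff : ∀ x ∈ closedBox a b, DifferentiableAt ℝ u x := fun x hx =>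
      (hu.contDiffAt (hU.mem_nhds (hAU hx))).differentiableAt one_ne_zero
    have hcont := (hu.continuousOn_fderiv_of_isOpen hU le_rfl).mono hAU
    have hint := hτ.integrableOn_W0_fderiv hG hV hlam hcont
    refine ⟨hint, fun uε hconv c hc => ?_⟩
    refine hG.eventually_lt_energyE hV.nonneg hE0 herg hsparse
      (fun F₀ r hr δ hδ => hD F₀ r hr (hbdd F₀ r) δ hδ) hmF hab hdiff hcont hint
      (hconv.congr' ?_) hc
    filter_upwards [self_mem_nhdsWithin] with ε hε using by rw [tsum_ite_openBox hε]
  · refine ⟨by simp [openBox_eq_empty hab], fun uε _ c hc => ?_⟩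
    filter_upwards [self_mem_nhdsWithin] with ε hε
    rw [openBox_eq_empty hab, setIntegral_empty] at hc
    exact hc.trans_le (energyE_openBox_nonneg hV.nonneg hε ω _ a b)

/-- Γ-liminf inequality, discrete form of Proposition 3.10, for `C¹` limits.
The conclusion `liminf_ε E_ε ≥ ∫_A W₀(Du)` is phrased in the robust form
"for every `c` below the integral, eventually `E_ε > c`". -/
theorem gamma_liminf
    {d n : ℕ} (hd : 2 ≤ d) (hn : 1 ≤ n)
    {Ω : Type*} [MeasurableSpace Ω] (P : Measure Ω) [IsProbabilityMeasure P]
    (τ : Zd d → Ω → Ω) (hτ0 : τ 0 = id)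
    (hτadd : ∀ x y : Zd d, τ (x + y) = τ x ∘ τ y)
    (hτmp : ∀ z : Zd d, MeasurePreserving (τ z) P P)
    (hτerg : ∀ B : Set Ω, MeasurableSet B → (∀ z : Zd d, τ z ⁻¹' B = B) → P B = 0 ∨ P B = 1)
    (E0 : Finset (Zd d)) (hE00 : (0 : Zd d) ∉ E0) (hE0b : ∀ i : Fin d, stdb i ∈ E0)
    (p c₁ : ℝ) (hp : 1 < p) (hc₁ : 0 < c₁)
    (V : Zd d → Ω → Rn n → ℝ)
    (hVmeas : ∀ b ∈ E0, Measurable fun q : Ω × Rn n => V b q.1 q.2)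
    (hVcont : ∀ b ∈ E0, ∀ ω : Ω, Continuous (V b ω))
    (hVnn : ∀ b ∈ E0, ∀ (ω : Ω) (r : Rn n), 0 ≤ V b ω r)
    (lam : Zd d → Ω → ℝ)
    (hlammeas : ∀ b ∈ E0, Measurable (lam b))
    (hlamnn : ∀ b ∈ E0, ∀ ω : Ω, 0 ≤ lam b ω)
    (hgrowth : ∀ b ∈ E0, ∀ (ω : Ω) (r : Rn n),
      lam b ω * (‖r‖ ^ p / c₁ - c₁) ≤ V b ω r ∧ V b ω r ≤ c₁ * (1 + lam b ω * (‖r‖ ^ p + 1)))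
    (α β : ℝ) (hα : 1 ≤ α) (hβ : 1 / (p - 1) ≤ β)
    (hmomα : ∀ b ∈ E0, ∫⁻ ω, ENNReal.ofReal (lam b ω ^ α) ∂P < ⊤)
    (hmomβ : ∀ i : Fin d, ∫⁻ ω, ENNReal.ofReal (lam (stdb i) ω) ^ (-β) ∂P < ⊤)
    (h2T : (1 < α ∧ 1 / α + 1 / β ≤ p / (d : ℝ)) ∨
      (n = 1 ∧ ∃ q c₂ : ℝ, 1 < q ∧ q < p ∧ ∃ f : Zd d → Ω → Rn n → ℝ,
        ∀ b ∈ E0, ∀ ω : Ω,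
          (∀ r : Rn n, 0 ≤ f b ω r) ∧
          ConvexOn ℝ Set.univ (fun r : Rn n => V b ω r + f b ω r) ∧
          (∀ r : Rn n, f b ω r ≤ c₂ * (1 + lam b ω * (‖r‖ ^ q + 1)))))
    : ∃ Ω₁ : Set Ω, MeasurableSet Ω₁ ∧ P Ω₁ = 1 ∧
      ∀ ω ∈ Ω₁, ∀ a b : Fin d → ℝ, ∀ u : Rd d → Rn n, ∀ U : Set (Rd d),
        IsOpen U → closure (openBox a b) ⊆ U → ContDiffOn ℝ 1 u U →
        ∀ uε : ℝ → Zd d → Rn n,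
          Tendsto (fun ε : ℝ => ε ^ d * ∑' z : Zd d,
              if ε • toRd z ∈ openBox a b then ‖uε ε z - u (ε • toRd z)‖ else 0)
            (𝓝[>] (0 : ℝ)) (𝓝 0) →
          ∀ c : ℝ, c < ∫ x in openBox a b, W0 P τ E0 V (fderiv ℝ u x) →
            ∀ᶠ ε in 𝓝[>] (0 : ℝ), c < energyE τ E0 V ε ω (uε ε) (openBox a b) := by
  have : NeZero d := ⟨by omega⟩
  have hτ : IsErgodicAction P τ := ⟨⟨hτ0, hτadd, hτmp⟩, hτerg⟩
  have hG : HasGrowth E0 p c₁ V lam := ⟨hp, hc₁, hlamnn,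
    fun b hb ω r => (hgrowth b hb ω r).1, fun b hb ω r => (hgrowth b hb ω r).2⟩
  have hlam : ∀ b ∈ E0, Integrable (lam b) P := fun b hb =>
    integrable_of_lintegral_rpow_lt_top (hlammeas b hb) (hlamnn b hb) hα (hmomα b hb)
  obtain ⟨Ω₁, hmeas, hprob, hΩ₁⟩ := gamma_liminf_general P τ hτ E0 hE00 p c₁ V
    ⟨hVnn, hVcont, hVmeas⟩ lam hG hlam
  exact ⟨Ω₁, hmeas, hprob, fun ω hω a b u U hU hAU hu => (hΩ₁ ω hω a b u U hU hAU hu).2⟩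

end StochHom
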